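/- arXiv:1008.3604 — 2 statements merged into one kernel-verified Lean document; each statement's English description precedes it below -/
import Mathlib

section
/- Let C be a coalgebra over k with coradical filtration {C_n}, and let I be a nonzero coideal of C. Then I ∩ C₁ ≠ {0}. -/
open scoped TensorProduct

/-! Basic definitions: subcoalgebras, the coradical, the coradical filtration, coideals. -/

section Defs

variable (k : Type*) [Field k] (C : Type*) [AddCommGroup C] [Module k C] [Coalgebra k C]

/-- The image of `D ⊗ E` in `C ⊗ C`, for submodules `D, E ⊆ C`. -/
noncomputable def subTensor (D E : Submodule k C) : Submodule k (C ⊗[k] C) :=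
  LinearMap.range (TensorProduct.mapIncl D E)

/-- A subcoalgebra is a subspace `D` with `Δ(D) ⊆ D ⊗ D`. -/
def IsSubcoalgebra (D : Submodule k C) : Prop :=
  ∀ x ∈ D, Coalgebra.comul (R := k) x ∈ subTensor k C D D

/-- A simple subcoalgebra is a nonzero subcoalgebra with no nonzero proper subcoalgebra. -/
def IsSimpleSubcoalgebra (D : Submodule k C) : Prop :=
  D ≠ ⊥ ∧ IsSubcoalgebra k C D ∧
    ∀ D' : Submodule k C, D' ≤ D → IsSubcoalgebra k C D' → D' = ⊥ ∨ D' = D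

/-- The coradical `C₀` of `C`: the sum of all simple subcoalgebras of `C`. -/
noncomputable def coradical : Submodule k C :=
  sSup {D : Submodule k C | IsSimpleSubcoalgebra k C D}

/-- The coradical filtration, defined inductively by `C_n = Δ⁻¹(C ⊗ C_{n-1} + C₀ ⊗ C)`. -/
noncomputable def coradicalFiltration : ℕ → Submodule k C
  | 0 => coradical k C
  | n + 1 =>
      Submodule.comap (Coalgebra.comul (R := k))
        (subTensor k C ⊤ (coradicalFiltration n) ⊔ subTensor k C (coradical k C) ⊤)

/-- A coideal is a subspace `I` with `ε(I) = 0` and `Δ(I) ⊆ I ⊗ C + C ⊗ I`. -/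
def IsCoideal (I : Submodule k C) : Prop :=
  (∀ x ∈ I, Coalgebra.counit (R := k) x = 0) ∧
    ∀ x ∈ I, Coalgebra.comul (R := k) x ∈ subTensor k C I ⊤ ⊔ subTensor k C ⊤ I

end Defs

namespace CoidealCoradical

section Contraction

variable {k : Type*} [Field k] {C : Type*} [AddCommGroup C] [Module k C]

/-- Contraction of the right tensor factor against a functional. -/
noncomputable def contractRight (f : C →ₗ[k] k) : C ⊗[k] C →ₗ[k] C :=
  (TensorProduct.rid k C).toLinearMap ∘ₗ f.lTensor C

/-- Contraction of the left tensor factor against a functional. -/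
noncomputable def contractLeft (f : C →ₗ[k] k) : C ⊗[k] C →ₗ[k] C :=
  (TensorProduct.lid k C).toLinearMap ∘ₗ f.rTensor C

@[simp]
theorem contractRight_tmul (f : C →ₗ[k] k) (x y : C) :
    contractRight f (x ⊗ₜ[k] y) = f y • x := by
  simp [contractRight]

@[simp]
theorem contractLeft_tmul (f : C →ₗ[k] k) (x y : C) :
    contractLeft f (x ⊗ₜ[k] y) = f x • y := by
  simp [contractLeft]

theorem contractRight_map (f : C →ₗ[k] k) (p q : C →ₗ[k] C) (t : C ⊗[k] C) :
    contractRight f (TensorProduct.map p q t) = p (contractRight (f ∘ₗ q) t) := by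
  induction t with
  | zero => simp
  | tmul x y => simp
  | add s t hs ht => simp [hs, ht]

theorem contractLeft_map (f : C →ₗ[k] k) (p q : C →ₗ[k] C) (t : C ⊗[k] C) :
    contractLeft f (TensorProduct.map p q t) = q (contractLeft (f ∘ₗ p) t) := by
  induction t with
  | zero => simp
  | tmul x y => simp
  | add s t hs ht => simp [hs, ht]

theorem apply_contractRight (f g : C →ₗ[k] k) (t : C ⊗[k] C) :
    f (contractRight g t) = LinearMap.mul' k k (TensorProduct.map f g t) := by
  induction t with
  | zero => simp
  | tmul x y => simp [mul_comm]
  | add s t hs ht => simp [hs, ht]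

theorem apply_contractLeft (f g : C →ₗ[k] k) (t : C ⊗[k] C) :
    g (contractLeft f t) = LinearMap.mul' k k (TensorProduct.map f g t) := by
  induction t with
  | zero => simp
  | tmul x y => simp
  | add s t hs ht => simp [hs, ht]

theorem eq_zero_of_contractRight_eq_zero {t : C ⊗[k] C} (h : ∀ f, contractRight f t = 0) :
    t = 0 := by
  classical
  let b := Module.Basis.ofVectorSpace k C
  apply (TensorProduct.equivFinsuppOfBasisRight (M := C) b).injective
  ext i
  have key : ∀ s : C ⊗[k] C, TensorProduct.equivFinsuppOfBasisRight b s i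
      = contractRight (b.coord i) s := by
    intro s
    induction s with
    | zero => simp
    | tmul x y => simp
    | add s t hs ht => simp [hs, ht]
  rw [key, h, map_zero, Finsupp.zero_apply]

theorem eq_zero_of_contractLeft_eq_zero {t : C ⊗[k] C} (h : ∀ f, contractLeft f t = 0) :
    t = 0 := by
  refine eq_zero_of_contractRight_eq_zero fun f => ?_
  refine (Module.forall_dual_apply_eq_zero_iff k _).mp fun g => ?_
  rw [apply_contractRight, ← apply_contractLeft, h, map_zero]

theorem eq_zero_of_map_eq_zero {t : C ⊗[k] C}
    (h : ∀ f g : C →ₗ[k] k, LinearMap.mul' k k (TensorProduct.map f g t) = 0) : t = 0 :=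
  eq_zero_of_contractRight_eq_zero fun g =>
    (Module.forall_dual_apply_eq_zero_iff k _).mp fun f => by rw [apply_contractRight, h]

theorem map_mem_subTensor {D E : Submodule k C} {p q : C →ₗ[k] C} (hp : ∀ x, p x ∈ D)
    (hq : ∀ x, q x ∈ E) (t : C ⊗[k] C) : TensorProduct.map p q t ∈ subTensor k C D E := by
  refine ⟨TensorProduct.map (p.codRestrict D hp) (q.codRestrict E hq) t, ?_⟩
  rw [TensorProduct.mapIncl, ← LinearMap.comp_apply, ← TensorProduct.map_comp]
  simp

theorem contractRight_mem {D E : Submodule k C} {t : C ⊗[k] C} (ht : t ∈ subTensor k C D E)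
    (f : C →ₗ[k] k) : contractRight f t ∈ D := by
  obtain ⟨s, rfl⟩ := ht
  induction s with
  | zero => simp
  | tmul x y => simpa [TensorProduct.mapIncl] using D.smul_mem _ x.2
  | add s t hs ht => simpa using D.add_mem hs ht

theorem contractLeft_mem {D E : Submodule k C} {t : C ⊗[k] C} (ht : t ∈ subTensor k C D E)
    (f : C →ₗ[k] k) : contractLeft f t ∈ E := by
  obtain ⟨s, rfl⟩ := ht
  induction s with
  | zero => simp
  | tmul x y => simpa [TensorProduct.mapIncl] using E.smul_mem _ y.2
  | add s t hs ht => simpa using E.add_mem hs ht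

theorem exists_projection (D : Submodule k C) :
    ∃ p : C →ₗ[k] C, (∀ x, p x ∈ D) ∧ ∀ x ∈ D, p x = x := by
  obtain ⟨p, hp⟩ := D.subtype.exists_leftInverse_of_injective D.ker_subtype
  exact ⟨D.subtype ∘ₗ p, fun x => (p x).2, fun x hx => congrArg Subtype.val
    (LinearMap.congr_fun hp ⟨x, hx⟩)⟩

theorem mem_subTensor_of_contract_mem {D E : Submodule k C} {t : C ⊗[k] C}
    (hD : ∀ f, contractRight f t ∈ D) (hE : ∀ f, contractLeft f t ∈ E) :
    t ∈ subTensor k C D E := by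
  obtain ⟨p, hpD, hp⟩ := exists_projection D
  obtain ⟨q, hqE, hq⟩ := exists_projection E
  have h₁ : TensorProduct.map p LinearMap.id t = t := by
    refine sub_eq_zero.mp (eq_zero_of_contractRight_eq_zero fun f => ?_)
    rw [map_sub, contractRight_map, LinearMap.comp_id, hp _ (hD f), sub_self]
  have h₂ : TensorProduct.map LinearMap.id q t = t := by
    refine sub_eq_zero.mp (eq_zero_of_contractLeft_eq_zero fun f => ?_)
    rw [map_sub, contractLeft_map, LinearMap.comp_id, hq _ (hE f), sub_self]
  have h₃ : TensorProduct.map p q t = t := by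
    conv_rhs => rw [← h₁, ← h₂, ← LinearMap.comp_apply, ← TensorProduct.map_comp]
    simp
  rw [← h₃]
  exact map_mem_subTensor hpD hqE t

/-- A tensor killed by all `f ⊗ g` with `f`, `g` vanishing on `D` lies in `C ⊗ D + D ⊗ C`. -/
theorem mem_subTensor_sup_of_map_eq_zero {D : Submodule k C} {t : C ⊗[k] C}
    (h : ∀ f g : C →ₗ[k] k, (∀ x ∈ D, f x = 0) → (∀ x ∈ D, g x = 0) →
      LinearMap.mul' k k (TensorProduct.map f g t) = 0) :
    t ∈ subTensor k C ⊤ D ⊔ subTensor k C D ⊤ := by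
  obtain ⟨p, hpD, hp⟩ := exists_projection D
  let q : C →ₗ[k] C := LinearMap.id - p
  have hq : ∀ x ∈ D, q x = 0 := fun x hx => by simp [q, hp x hx]
  have hz : TensorProduct.map q q t = 0 := by
    refine eq_zero_of_map_eq_zero fun f g => ?_
    rw [← LinearMap.comp_apply (TensorProduct.map f g), ← TensorProduct.map_comp]
    exact h _ _ (fun x hx => by simp [hq x hx]) fun x hx => by simp [hq x hx]
  have hs : t = TensorProduct.map q p t + TensorProduct.map p LinearMap.id t := by
    have hid : t = TensorProduct.map (q + p) (q + p) t := by simp [q]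
    conv_lhs => rw [hid]
    have hqp : q + p = LinearMap.id := by simp [q]
    rw [TensorProduct.map_add_left, LinearMap.add_apply, TensorProduct.map_add_right,
      LinearMap.add_apply, hz, zero_add, hqp]
  rw [hs]
  exact Submodule.add_mem_sup (map_mem_subTensor (fun _ => Submodule.mem_top) hpD t)
    (map_mem_subTensor hpD (fun _ => Submodule.mem_top) t)

/-- The contractions of a fixed tensor all lie in a finite-dimensional subspace. -/
theorem exists_finiteDimensional_contractRight_mem (t : C ⊗[k] C) :
    ∃ W : Submodule k C, FiniteDimensional k W ∧ ∀ f, contractRight f t ∈ W := by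
  induction t with
  | zero => exact ⟨⊥, inferInstance, by simp⟩
  | tmul x y =>
    exact ⟨k ∙ x, inferInstance, fun f => by
      simpa using Submodule.smul_mem _ _ (Submodule.mem_span_singleton_self x)⟩
  | add s t hs ht =>
    obtain ⟨V, _, hV⟩ := hs
    obtain ⟨W, _, hW⟩ := ht
    exact ⟨V ⊔ W, inferInstance, fun f => by
      simpa using Submodule.add_mem_sup (hV f) (hW f)⟩

theorem exists_finiteDimensional_contractLeft_mem (t : C ⊗[k] C) :
    ∃ W : Submodule k C, FiniteDimensional k W ∧ ∀ f, contractLeft f t ∈ W := by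
  induction t with
  | zero => exact ⟨⊥, inferInstance, by simp⟩
  | tmul x y =>
    exact ⟨k ∙ y, inferInstance, fun f => by
      simpa using Submodule.smul_mem _ _ (Submodule.mem_span_singleton_self y)⟩
  | add s t hs ht =>
    obtain ⟨V, _, hV⟩ := hs
    obtain ⟨W, _, hW⟩ := ht
    exact ⟨V ⊔ W, inferInstance, fun f => by
      simpa using Submodule.add_mem_sup (hV f) (hW f)⟩

end Contraction

/-- If a multiplicatively closed subspace `B`, an ideal `K` and a subspace `J` with `J² ⊆ J`
satisfy `Jⁿ ⊆ K` and `B + J² + K = A`, then already `B + K = A`. -/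
theorem sup_eq_top_of_sup_sq_eq_top {k A : Type*} [Field k] [Ring A] [Algebra k A]
    {B J K : Submodule k A} (hB : B * B ≤ B) (hJ : J * J ≤ J) (hK : K * ⊤ ≤ K)
    (hK' : ⊤ * K ≤ K) {n : ℕ} (hn : J ^ n ≤ K) (h : B ⊔ J * J ⊔ K = ⊤) : B ⊔ K = ⊤ := by
  set B' := B ⊔ K with hB'
  have hmul : B' * B' ≤ B' := by
    rw [hB', Submodule.sup_mul, Submodule.mul_sup]
    refine sup_le (sup_le (hB.trans le_sup_left) ?_) ?_
    · exact ((mul_le_mul' le_top le_rfl).trans hK').trans le_sup_right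
    · exact ((mul_le_mul' le_rfl le_top).trans hK).trans le_sup_right
  have htop : B' ⊔ J * J = ⊤ := by rw [← h, hB', sup_right_comm]
  set N := B' ⊓ J
  have hNN : N * N ≤ N := le_inf ((mul_le_mul' inf_le_left inf_le_left).trans hmul)
    ((mul_le_mul' inf_le_right inf_le_right).trans hJ)
  have hJN : J ≤ N ⊔ J * J := by
    calc J = (J * J ⊔ B') ⊓ J := by rw [sup_comm, htop, top_inf_eq]
      _ = J * J ⊔ B' ⊓ J := (sup_inf_assoc_of_le _ hJ)
      _ ≤ N ⊔ J * J := by rw [sup_comm]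
  have hpow : ∀ m : ℕ, J ≤ N ⊔ J ^ (m + 1) := by
    intro m
    induction m with
    | zero => simp
    | succ m ih =>
      refine hJN.trans (sup_le le_sup_left ?_)
      have hNJ : N ≤ J := inf_le_right
      calc J * J ≤ (N ⊔ J ^ (m + 1)) * J := mul_le_mul' ih le_rfl
        _ = N * J ⊔ J ^ (m + 1 + 1) := by rw [Submodule.sup_mul, ← pow_succ]
        _ ≤ N * (N ⊔ J ^ (m + 1)) ⊔ J ^ (m + 1 + 1) :=
          sup_le_sup_right (mul_le_mul' le_rfl ih) _
        _ ≤ N ⊔ J ^ (m + 1 + 1) := by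
          rw [Submodule.mul_sup]
          refine sup_le (sup_le (hNN.trans le_sup_left) ?_) le_sup_right
          refine le_trans (mul_le_mul' hNJ le_rfl) ?_
          rw [← pow_succ']
          exact le_sup_right
  have hJB : J ≤ B' := by
    refine (hpow n).trans (sup_le inf_le_left ?_)
    rw [pow_succ]
    exact ((mul_le_mul' hn le_top).trans hK).trans le_sup_right
  rw [eq_top_iff, ← htop]
  exact sup_le le_rfl (hJ.trans hJB)

section Separation

variable {k : Type*} [Field k] {C : Type*} [AddCommGroup C] [Module k C]

open WithConv

variable (k C) in
/-- The dual algebra of a coalgebra, with the convolution product. -/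
abbrev DualAlgebra : Type _ := WithConv (C →ₗ[k] k)

variable (k) in
theorem ext_dualAlgebra {x y : C} (h : ∀ f : DualAlgebra k C, f x = f y) : x = y := by
  refine sub_eq_zero.mp ((Module.forall_dual_apply_eq_zero_iff k _).mp fun f => ?_)
  rw [map_sub, sub_eq_zero]
  exact h (toConv f)

theorem mem_of_forall_dualAlgebra {W : Submodule k C} {x : C}
    (h : ∀ f : DualAlgebra k C, (∀ w ∈ W, f w = 0) → f x = 0) : x ∈ W :=
  (Subspace.forall_mem_dualAnnihilator_apply_eq_zero_iff W x).mp fun f hf =>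
    h (toConv f) ((Submodule.mem_dualAnnihilator f).mp hf)

variable (k C) in
/-- The annihilator of a subspace in the dual algebra. -/
def annihilator (W : Submodule k C) : Submodule k (DualAlgebra k C) where
  carrier := {f | ∀ w ∈ W, f w = 0}
  add_mem' {f g} hf hg w hw := by simp [hf w hw, hg w hw]
  zero_mem' _ _ := rfl
  smul_mem' c f hf w hw := by simp [hf w hw]

/-- In the dual algebra, a subspace containing the annihilator of a finite-dimensional
subspace `D` is everything if it separates the points of `D`. -/
theorem eq_top_of_separates {D : Submodule k C} [FiniteDimensional k D]
    {P : Submodule k (DualAlgebra k C)} (hP : annihilator k C D ≤ P)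
    (h : ∀ d ∈ D, (∀ f ∈ P, f d = 0) → d = 0) : P = ⊤ := by
  let r : DualAlgebra k C →ₗ[k] Module.Dual k D :=
    D.dualRestrict ∘ₗ (WithConv.linearEquiv k (C →ₗ[k] k)).toLinearMap
  refine eq_top_iff.mpr fun f _ => ?_
  have hf : r f ∈ P.map r := by
    rw [← Subspace.dualCoannihilator_dualAnnihilator_eq (W := P.map r),
      Submodule.mem_dualAnnihilator]
    intro d hd
    rw [Submodule.mem_dualCoannihilator] at hd
    have hd0 : d = 0 := Subtype.ext (h d d.2 fun g hg => hd (r g) ⟨g, hg, rfl⟩)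
    rw [hd0, map_zero]
  obtain ⟨g, hg, hgf⟩ := hf
  have hfg : f - g ∈ annihilator k C D := fun d hd => by
    have := LinearMap.congr_fun hgf ⟨d, hd⟩
    exact sub_eq_zero.mpr this.symm
  simpa using P.add_mem (hP hfg) hg

end Separation

section DualAlgebra

variable {k : Type*} [Field k] {C : Type*} [AddCommGroup C] [Module k C] [Coalgebra k C]

open WithConv

/-- The left action `x ↦ x₁ f(x₂)` of the dual algebra. -/
noncomputable def leftHit (f : DualAlgebra k C) : C →ₗ[k] C :=
  contractRight f.ofConv ∘ₗ Coalgebra.comul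

/-- The right action `x ↦ f(x₁) x₂` of the dual algebra. -/
noncomputable def rightHit (f : DualAlgebra k C) : C →ₗ[k] C :=
  contractLeft f.ofConv ∘ₗ Coalgebra.comul

theorem apply_leftHit (f g : DualAlgebra k C) (x : C) : f (leftHit g x) = (f * g) x :=
  apply_contractRight _ _ _

theorem apply_rightHit (f g : DualAlgebra k C) (x : C) : g (rightHit f x) = (f * g) x :=
  apply_contractLeft _ _ _

/-- A coalgebra is a left module over its dual algebra. -/
noncomputable instance dualAlgebraModule : Module (DualAlgebra k C) C where
  smul f x := leftHit f x
  one_smul x := ext_dualAlgebra k fun h => by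
    change h (leftHit 1 x) = _
    rw [apply_leftHit, mul_one]
  mul_smul f g x := ext_dualAlgebra k fun h => by
    change h (leftHit (f * g) x) = h (leftHit f (leftHit g x))
    simp only [apply_leftHit, mul_assoc]
  smul_zero f := map_zero (leftHit f)
  smul_add f := map_add (leftHit f)
  add_smul f g x := ext_dualAlgebra k fun h => by
    change h (leftHit (f + g) x) = h (leftHit f x + leftHit g x)
    rw [map_add]
    simp only [apply_leftHit, mul_add]
    rfl
  zero_smul x := ext_dualAlgebra k fun h => by
    change h (leftHit 0 x) = _
    rw [apply_leftHit, mul_zero, map_zero]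
    rfl

theorem apply_smul (f g : DualAlgebra k C) (x : C) : f (g • x) = (f * g) x :=
  apply_leftHit f g x

instance : IsScalarTower k (DualAlgebra k C) C where
  smul_assoc c f x := ext_dualAlgebra k fun h => by
    rw [apply_smul, mul_smul_comm, LinearMap.map_smul, apply_smul]
    rfl

variable (k C) in
/-- `rightHit` as an endomorphism of the left module `C`. -/
noncomputable def rightHitEnd (g : DualAlgebra k C) : C →ₗ[DualAlgebra k C] C where
  toFun := rightHit g
  map_add' := map_add _
  map_smul' f x := ext_dualAlgebra k fun h => by
    simp only [RingHom.id_apply, apply_rightHit, apply_smul, mul_assoc]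

@[simp]
theorem rightHitEnd_apply (g : DualAlgebra k C) (x : C) : rightHitEnd k C g x = rightHit g x :=
  rfl

theorem isSubcoalgebra_iff {D : Submodule k C} :
    IsSubcoalgebra k C D ↔ ∀ f : DualAlgebra k C, ∀ x ∈ D, f • x ∈ D ∧ rightHit f x ∈ D :=
  ⟨fun h _ x hx => ⟨contractRight_mem (h x hx) _, contractLeft_mem (h x hx) _⟩,
    fun h x hx => mem_subTensor_of_contract_mem (fun f => (h (toConv f) x hx).1)
      fun f => (h (toConv f) x hx).2⟩

/-- Every module map from a submodule of `C` to `C` is a right action. -/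
theorem exists_eq_rightHit {T : Submodule (DualAlgebra k C) C}
    (φ : T →ₗ[DualAlgebra k C] C) : ∃ h : DualAlgebra k C, ∀ t : T, φ t = rightHit h t := by
  obtain ⟨h, hh⟩ := LinearMap.exists_extend (p := T.restrictScalars k)
    ((Coalgebra.counit (R := k) (A := C)) ∘ₗ φ.restrictScalars k)
  refine ⟨toConv h, fun t => ext_dualAlgebra k fun f => ?_⟩
  have ht : h (f • t : T) = Coalgebra.counit (R := k) (φ (f • t)) := LinearMap.congr_fun hh (f • t)
  rw [apply_rightHit, ← apply_smul]
  change _ = h (f • t : T)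
  rw [ht, map_smul]
  change _ = (1 : DualAlgebra k C) (f • φ t)
  rw [apply_smul, one_mul]

/-- Simple submodules of `C` lie in the coradical. -/
theorem le_coradical_of_isSimpleModule (S : Submodule (DualAlgebra k C) C)
    [IsSimpleModule (DualAlgebra k C) S] : S.restrictScalars k ≤ coradical k C := by
  let E := isotypicComponent (DualAlgebra k C) C S
  have hfull : ∀ f, E ≤ E.comap (rightHitEnd k C f) :=
    fun f => Submodule.IsFullyInvariant.isotypicComponent (DualAlgebra k C) C S (rightHitEnd k C f)
  have : IsSemisimpleModule (DualAlgebra k C) E :=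
    inferInstanceAs (IsSemisimpleModule _ (isotypicComponent (DualAlgebra k C) C S))
  have hSE : S ≤ E := S.le_isotypicComponent
  refine le_trans (b := E.restrictScalars k) hSE (le_sSup ⟨?_, ?_, ?_⟩)
  · intro h
    exact (bot_lt_isotypicComponent S).ne' ((Submodule.restrictScalars_eq_bot_iff k _ _).mp h)
  · exact isSubcoalgebra_iff.mpr fun f x hx =>
      ⟨E.smul_mem f hx, hfull f hx⟩
  · intro D hDE hD
    rw [isSubcoalgebra_iff] at hD
    refine or_iff_not_imp_left.mpr fun hD0 => le_antisymm hDE ?_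
    let D' : Submodule (DualAlgebra k C) C :=
      { D.toAddSubmonoid with smul_mem' := fun f x hx => (hD f x hx).1 }
    have hle : D' ≤ E := hDE
    have hne : D' ≠ ⊥ := fun h => hD0 (by
      rw [Submodule.eq_bot_iff] at h ⊢
      exact h)
    have : IsSemisimpleModule (DualAlgebra k C) D' :=
      IsSemisimpleModule.of_injective (M := E) (Submodule.inclusion hle)
        (Submodule.inclusion_injective hle)
    have : Nontrivial D' := Submodule.nontrivial_iff_ne_bot.mpr hne
    obtain ⟨T, hT⟩ := IsSemisimpleModule.exists_simple_submodule (DualAlgebra k C) D'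
    have hiso : IsIsotypicOfType (DualAlgebra k C) D' S :=
      (IsIsotypicOfType.isotypicComponent (DualAlgebra k C) C S).of_injective _
        (Submodule.inclusion_injective hle)
    obtain ⟨e⟩ := hiso T
    let T' : Submodule (DualAlgebra k C) C := T.map D'.subtype
    let e' : T' ≃ₗ[DualAlgebra k C] S :=
      (Submodule.equivMapOfInjective _ D'.injective_subtype T).symm.trans e
    have hT' : T' ≤ D' := Submodule.map_subtype_le D' T
    have hED : E ≤ D' := by
      refine sSup_le ?_
      rintro U ⟨u⟩ x hx
      obtain ⟨h, hh⟩ := exists_eq_rightHit (U.subtype ∘ₗ (e'.trans u.symm).toLinearMap)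
      have := hh ((e'.trans u.symm).symm ⟨x, hx⟩)
      simp only [LinearMap.comp_apply, LinearEquiv.coe_coe, LinearEquiv.apply_symm_apply,
        Submodule.subtype_apply] at this
      rw [this]
      exact (hD h _ (hT' (Subtype.property _))).2
    exact hED

theorem smul_mem_coradical (f : DualAlgebra k C) {x : C} (hx : x ∈ coradical k C) :
    f • x ∈ coradical k C := by
  have : coradical k C ≤ (coradical k C).comap (leftHit f) :=
    sSup_le fun D hD x hx =>
      le_sSup (α := Submodule k C) hD (isSubcoalgebra_iff.mp hD.2.1 f x hx).1
  exact this hx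

/-- Functionals vanishing on the coradical act nilpotently on modules of finite length. -/
theorem exists_pow_smul_eq_zero {M : Type*} [AddCommGroup M] [Module (DualAlgebra k C) M]
    (hM : IsFiniteLength (DualAlgebra k C) M) (i : M →ₗ[DualAlgebra k C] C)
    (hi : Function.Injective i) :
    ∃ n : ℕ, ∀ f ∈ annihilator k C (coradical k C) ^ n, ∀ m, f • i m = 0 := by
  induction hM with
  | of_subsingleton =>
    exact ⟨0, fun f _ m => by rw [Subsingleton.elim m 0, map_zero, smul_zero]⟩
  | @of_simple_quotient M _ _ N _ _ ih =>
    obtain ⟨n, hn⟩ := ih (i ∘ₗ N.subtype) (hi.comp N.injective_subtype)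
    have key : ∀ j ∈ annihilator k C (coradical k C), ∀ m : M, j • m ∈ N := by
      intro j hj m
      suffices h : j • i m ∈ (N.map i).restrictScalars k by
        obtain ⟨y, hy, hyx⟩ := h
        rw [← map_smul] at hyx
        rwa [← hi hyx]
      refine mem_of_forall_dualAlgebra fun g hg => ?_
      have hker : N ≤ LinearMap.ker (rightHitEnd k C g ∘ₗ i) := fun y hy => by
        rw [LinearMap.mem_ker]
        refine ext_dualAlgebra k fun f => ?_
        rw [map_zero, LinearMap.comp_apply, rightHitEnd_apply, apply_rightHit, ← apply_smul,
          ← map_smul]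
        exact hg _ ⟨_, N.smul_mem f hy, rfl⟩
      let ψ := N.liftQ _ hker
      have hψ : ψ (N.mkQ m) ∈ coradical k C := by
        rcases LinearMap.injective_or_eq_zero ψ with hinj | hzero
        · have : IsSimpleModule (DualAlgebra k C) (LinearMap.range ψ) :=
            IsSimpleModule.congr (LinearEquiv.ofInjective ψ hinj).symm
          exact le_coradical_of_isSimpleModule (LinearMap.range ψ) ⟨_, rfl⟩
        · rw [hzero]
          exact zero_mem _
      rw [apply_smul, ← apply_rightHit]
      exact hj _ hψ
    refine ⟨n + 1, fun f hf m => ?_⟩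
    replace hf := (pow_succ (annihilator k C (coradical k C)) n).le hf
    induction hf using Submodule.mul_induction_on' with
    | mem_mul_mem a ha j hj =>
      rw [mul_smul, ← map_smul]
      exact hn a ha ⟨_, key j hj m⟩
    | add a _ b _ ha hb => rw [add_smul, ha, hb, add_zero]

/-- Every element of a coalgebra lies in a finite-dimensional subspace stable under both
actions of the dual algebra. -/
theorem exists_finiteDimensional_stable (c : C) :
    ∃ D : Submodule (DualAlgebra k C) C, FiniteDimensional k (D.restrictScalars k) ∧ c ∈ D ∧
      ∀ f : DualAlgebra k C, ∀ x ∈ D, rightHit f x ∈ D := by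
  let M : Submodule (DualAlgebra k C) C := Submodule.span _ {c}
  obtain ⟨V, _, hV⟩ := exists_finiteDimensional_contractRight_mem (Coalgebra.comul (R := k) c)
  have hMV : M.restrictScalars k ≤ V := by
    intro x hx
    obtain ⟨f, rfl⟩ := Submodule.mem_span_singleton.mp hx
    exact hV f.ofConv
  have : FiniteDimensional k (M.restrictScalars k) := Submodule.finiteDimensional_of_le hMV
  let D : Submodule (DualAlgebra k C) C := ⨆ g : DualAlgebra k C, M.map (rightHitEnd k C g)
  have hD : ∀ g : DualAlgebra k C, ∀ x ∈ M, rightHit g x ∈ D := fun g x hx =>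
    Submodule.mem_iSup_of_mem g ⟨x, hx, rfl⟩
  obtain ⟨t, ht⟩ := (Module.Finite.iff_fg.mp this : (M.restrictScalars k).FG)
  choose W hW hWm using fun x : C =>
    exists_finiteDimensional_contractLeft_mem (Coalgebra.comul (R := k) x)
  have hU : ∀ g : DualAlgebra k C, ∀ x ∈ M, rightHit g x ∈ t.sup W := by
    intro g
    have hle : M.restrictScalars k ≤ (t.sup W).comap (rightHit g) := by
      rw [← ht, Submodule.span_le]
      exact fun x hx => Finset.le_sup (f := W) hx (hWm x g.ofConv)
    exact hle
  have hDU : D.restrictScalars k ≤ t.sup W := fun x hx =>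
    Submodule.iSup_induction _ (motive := fun x => x ∈ t.sup W) hx
      (fun g _ ⟨y, hy, hyx⟩ => hyx ▸ hU g y hy) (zero_mem _) fun _ _ => add_mem
  refine ⟨D, Submodule.finiteDimensional_of_le hDU, ?_, fun f => ?_⟩
  · have h1 : rightHit (1 : DualAlgebra k C) c = c :=
      ext_dualAlgebra k fun f => by rw [apply_rightHit, one_mul]
    exact h1 ▸ hD 1 c (Submodule.mem_span_singleton_self c)
  · have hle : D ≤ D.comap (rightHitEnd k C f) := by
      refine iSup_le fun g => ?_
      rintro _ ⟨x, hx, rfl⟩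
      have hgf : rightHit f (rightHit g x) = rightHit (g * f) x :=
        ext_dualAlgebra k fun h => by simp only [apply_rightHit, mul_assoc]
      change rightHit f (rightHit g x) ∈ D
      exact hgf ▸ hD (g * f) x hx
    exact hle

theorem annihilator_mul_le {I : Submodule k C} (hI : IsCoideal k C I) :
    annihilator k C I * annihilator k C I ≤ annihilator k C I := by
  refine Submodule.mul_le.mpr fun f hf g hg x hx => ?_
  have hle : subTensor k C I ⊤ ⊔ subTensor k C ⊤ I ≤
      LinearMap.ker (LinearMap.mul' k k ∘ₗ TensorProduct.map f.ofConv g.ofConv) := by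
    refine sup_le (fun t ht => ?_) fun t ht => ?_ <;>
      rw [LinearMap.mem_ker, LinearMap.comp_apply]
    · rw [← apply_contractRight]
      exact hf _ (contractRight_mem ht _)
    · rw [← apply_contractLeft]
      exact hg _ (contractLeft_mem ht _)
  exact hle (hI.2 x hx)

/-- An element killed by all products of two functionals vanishing on the coradical lies in the
first term of the coradical filtration. -/
theorem mem_coradicalFiltration_one {x : C}
    (h : ∀ f ∈ annihilator k C (coradical k C), ∀ g ∈ annihilator k C (coradical k C),
      (f * g) x = 0) : x ∈ coradicalFiltration k C 1 :=
  mem_subTensor_sup_of_map_eq_zero fun f g hf hg => h (toConv f) hf (toConv g) hg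

end DualAlgebra

end CoidealCoradical

/-- **Statement 4**: if `I` is a nonzero coideal of a coalgebra `C`, then `I ∩ C₁ ≠ 0`. -/
theorem coideal_inf_coradicalFiltration_one_ne_bot
    (k : Type*) [Field k] [IsAlgClosed k] [CharZero k]
    (C : Type*) [AddCommGroup C] [Module k C] [Coalgebra k C]
    (I : Submodule k C) (hI : IsCoideal k C I) (hI0 : I ≠ ⊥) :
    I ⊓ coradicalFiltration k C 1 ≠ ⊥ := by
  intro hbot
  obtain ⟨c, hc, hc0⟩ := Submodule.exists_mem_ne_zero_of_ne_bot hI0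
  obtain ⟨D, hfin, hcD, hD⟩ := CoidealCoradical.exists_finiteDimensional_stable (k := k) c
  let J := CoidealCoradical.annihilator k C (coradical k C)
  let K := CoidealCoradical.annihilator k C (D.restrictScalars k)
  let B := CoidealCoradical.annihilator k C I
  have hfin' : FiniteDimensional k D := hfin
  have hlen : IsFiniteLength (CoidealCoradical.DualAlgebra k C) D :=
    isFiniteLength_iff_isNoetherian_isArtinian.mpr
      ⟨isNoetherian_of_tower k inferInstance, isArtinian_of_tower k inferInstance⟩
  obtain ⟨n, hn⟩ := CoidealCoradical.exists_pow_smul_eq_zero hlen D.subtype D.injective_subtype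
  have hJn : J ^ n ≤ K := fun f hf d hd => by
    have h1 : (1 : CoidealCoradical.DualAlgebra k C) (f • d) = f d := by
      rw [CoidealCoradical.apply_smul, one_mul]
    have h0 : f • d = 0 := hn f hf ⟨d, hd⟩
    rw [← h1, h0, map_zero]
  have hJJ : J * J ≤ J := Submodule.mul_le.mpr fun f hf g _ x hx => by
    rw [← CoidealCoradical.apply_smul]
    exact hf _ (CoidealCoradical.smul_mem_coradical g hx)
  have hK : K * ⊤ ≤ K := Submodule.mul_le.mpr fun f hf g _ x hx => by
    rw [← CoidealCoradical.apply_smul]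
    exact hf _ (D.smul_mem g hx)
  have hK' : ⊤ * K ≤ K := Submodule.mul_le.mpr fun f _ g hg x hx => by
    rw [← CoidealCoradical.apply_rightHit]
    exact hg _ (hD f x hx)
  have htop : B ⊔ J * J ⊔ K = ⊤ := by
    refine CoidealCoradical.eq_top_of_separates (D := D.restrictScalars k) le_sup_right ?_
    intro d _ hd
    have hdI : d ∈ I := CoidealCoradical.mem_of_forall_dualAlgebra fun f hf =>
      hd f (Submodule.mem_sup_left (Submodule.mem_sup_left hf))
    have hd1 : d ∈ coradicalFiltration k C 1 :=
      CoidealCoradical.mem_coradicalFiltration_one fun f hf g hg =>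
        hd _ (Submodule.mem_sup_left (Submodule.mem_sup_right (Submodule.mul_mem_mul hf hg)))
    exact (Submodule.mem_bot k).mp (hbot ▸ Submodule.mem_inf.mpr ⟨hdI, hd1⟩)
  have hBK : B ⊔ K = ⊤ := CoidealCoradical.sup_eq_top_of_sup_sq_eq_top
    (CoidealCoradical.annihilator_mul_le hI) hJJ hK hK' hJn htop
  refine hc0 (CoidealCoradical.ext_dualAlgebra k fun f => ?_)
  obtain ⟨b, hb, κ, hκ, rfl⟩ := Submodule.mem_sup.mp (hBK ▸ Submodule.mem_top : f ∈ B ⊔ K)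
  rw [map_zero, WithConv.ofConv_add, LinearMap.add_apply, hb c hc, hκ c hcD, add_zero]
end

section
/- Let G be a group such that 2 ≤ GKdim k[G] < ∞. Then G has a subgroup isomorphic to ℤ². -/
open scoped TensorProduct ENNReal

/-- The Gelfand–Kirillov dimension of a `k`-algebra `A`:
`sup_V limsup_n log_n (dim_k V^n)` over finite-dimensional subspaces `V ⊆ A`,
as an extended nonnegative real. -/
noncomputable def gkDim (k A : Type*) [Field k] [Ring A] [Algebra k A] : ℝ≥0∞ :=
  ⨆ V : {V : Submodule k A // FiniteDimensional k V},
    Filter.limsup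
      (fun n : ℕ =>
        ENNReal.ofReal (Real.logb n (Module.finrank k ((V : Submodule k A) ^ n : Submodule k A))))
      Filter.atTop

namespace PolynomialGrowth

section RandomWalk

open scoped Classical Pointwise
open Finset Filter

variable {G : Type*} [Group G]

/-- Expectation of `F` at time `n` of the random walk on `G` with uniform steps in `S`. -/
noncomputable def walkMean (S : Finset G) : ℕ → (G → ℝ) → ℝ
  | 0, F => F 1
  | n + 1, F => (∑ s ∈ S, walkMean S n fun x => F (s * x)) / #S

/-- Distribution at time `n` of the random walk on `G` with uniform steps in `S`. -/
noncomputable def walkProb (S : Finset G) : ℕ → G → ℝ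
  | 0 => Pi.single 1 1
  | n + 1 => fun x => (∑ s ∈ S, walkProb S n (s⁻¹ * x)) / #S

/-- Shannon entropy of the random walk at time `n`. -/
noncomputable def walkEntropy (S : Finset G) (n : ℕ) : ℝ :=
  ∑ x ∈ S ^ n, Real.negMulLog (walkProb S n x)

/-- Right-harmonic functions for the uniform walk on `S`. -/
def RightHarmonic (S : Finset G) (f : G → ℝ) : Prop :=
  ∀ x, ∑ s ∈ S, f (x * s) = #S * f x

variable {S : Finset G}

lemma walkMean_add (n : ℕ) (F F' : G → ℝ) :
    walkMean S n (fun x => F x + F' x) = walkMean S n F + walkMean S n F' := by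
  induction n generalizing F F' with
  | zero => rfl
  | succ n ih => simp only [walkMean, ih, sum_add_distrib, add_div]

lemma walkMean_const_mul (n : ℕ) (c : ℝ) (F : G → ℝ) :
    walkMean S n (fun x => c * F x) = c * walkMean S n F := by
  induction n generalizing F with
  | zero => rfl
  | succ n ih => simp only [walkMean, ih, ← mul_sum, mul_div_assoc]

lemma walkMean_sum {ι : Type*} (n : ℕ) (I : Finset ι) (F : ι → G → ℝ) :
    walkMean S n (fun x => ∑ i ∈ I, F i x) = ∑ i ∈ I, walkMean S n (F i) := by
  induction I using Finset.induction_on with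
  | empty => simpa using walkMean_const_mul (S := S) n 0 0
  | insert i I hi ih => simp only [sum_insert hi, walkMean_add, ih]

lemma walkMean_mono (n : ℕ) {F F' : G → ℝ} (h : ∀ x, F x ≤ F' x) :
    walkMean S n F ≤ walkMean S n F' := by
  induction n generalizing F F' with
  | zero => exact h 1
  | succ n ih =>
    simp only [walkMean]
    gcongr with s hs
    exact ih fun x => h _

lemma walkMean_const (hS : S.Nonempty) (n : ℕ) (c : ℝ) : walkMean S n (fun _ => c) = c := by
  have : (#S : ℝ) ≠ 0 := by exact_mod_cast hS.card_pos.ne'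
  induction n with
  | zero => rfl
  | succ n ih => simp [walkMean, ih]; field_simp

lemma walkMean_nonneg (n : ℕ) {F : G → ℝ} (h : ∀ x, 0 ≤ F x) : 0 ≤ walkMean S n F := by
  have := walkMean_mono (S := S) n h
  rwa [show walkMean S n (fun _ => (0 : ℝ)) = 0 by
    simpa using walkMean_const_mul (S := S) n 0 0] at this

lemma walkMean_succ_right (n : ℕ) (F : G → ℝ) :
    walkMean S (n + 1) F = (∑ s ∈ S, walkMean S n fun x => F (x * s)) / #S := by
  induction n generalizing F with
  | zero => simp [walkMean]
  | succ n ih =>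
    have h : ∀ t, walkMean S (n + 1) (fun x => F (x * t)) =
        (∑ s ∈ S, walkMean S n fun x => F (s * x * t)) / #S := fun t => rfl
    rw [walkMean]
    simp_rw [h, ih, ← sum_div, ← mul_assoc]
    rw [sum_comm]

lemma RightHarmonic.walkMean_mul_left (hS : S.Nonempty) {f : G → ℝ} (hf : RightHarmonic S f)
    (n : ℕ) (g : G) : walkMean S n (fun x => f (g * x)) = f g := by
  have hc : (#S : ℝ) ≠ 0 := by exact_mod_cast hS.card_pos.ne'
  induction n with
  | zero => simp [walkMean]
  | succ n ih =>
    rw [walkMean_succ_right, ← walkMean_sum]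
    simp_rw [← mul_assoc, hf _, walkMean_const_mul, ih]
    field_simp

lemma walkProb_nonneg (n : ℕ) (x : G) : 0 ≤ walkProb S n x := by
  induction n generalizing x with
  | zero => simp only [walkProb, Pi.single_apply]; split_ifs <;> norm_num
  | succ n ih => exact div_nonneg (sum_nonneg fun s _ => ih _) (by positivity)

lemma walkProb_eq_zero {n : ℕ} {x : G} (hx : x ∉ S ^ n) : walkProb S n x = 0 := by
  induction n generalizing x with
  | zero => simp only [pow_zero, Finset.mem_one] at hx; simp [walkProb, hx]
  | succ n ih =>
    simp only [walkProb]
    rw [sum_eq_zero, zero_div]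
    intro s hs
    refine ih fun h => hx ?_
    rw [pow_succ']
    simpa using mul_mem_mul hs h

lemma sum_pow_succ_shift {n : ℕ} {F : G → ℝ} (hF : ∀ x ∉ S ^ n, F x = 0) {s : G} (hs : s ∈ S) :
    ∑ x ∈ S ^ (n + 1), F (s⁻¹ * x) = ∑ x ∈ S ^ n, F x := by
  have : ∑ x ∈ S ^ n, F x = ∑ x ∈ (S ^ n).map (Equiv.mulLeft s).toEmbedding, F (s⁻¹ * x) := by
    simp
  rw [this]
  symm
  apply sum_subset
  · intro x hx
    simp only [Finset.mem_map, Equiv.coe_toEmbedding, Equiv.coe_mulLeft] at hx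
    obtain ⟨y, hy, rfl⟩ := hx
    rw [pow_succ']
    exact mul_mem_mul hs hy
  · intro x _ hx
    refine hF _ fun h => hx ?_
    simp only [Finset.mem_map, Equiv.coe_toEmbedding, Equiv.coe_mulLeft]
    exact ⟨_, h, by simp⟩

lemma walkMean_eq_sum (n : ℕ) (F : G → ℝ) :
    walkMean S n F = ∑ x ∈ S ^ n, walkProb S n x * F x := by
  induction n generalizing F with
  | zero => simp [walkMean, walkProb, ← Finset.singleton_one]
  | succ n ih =>
    simp only [walkMean, walkProb, ih, div_mul_eq_mul_div, sum_mul, ← sum_div]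
    rw [sum_comm (s := S ^ (n + 1))]
    congr 1
    refine sum_congr rfl fun s hs => ?_
    have := sum_pow_succ_shift (n := n) (F := fun x => walkProb S n x * F (s * x))
      (fun x hx => by simp [walkProb_eq_zero hx]) hs
    simpa using this.symm

lemma sum_walkProb (hS : S.Nonempty) (n : ℕ) : ∑ x ∈ S ^ n, walkProb S n x = 1 := by
  simpa [walkMean_const hS] using (walkMean_eq_sum (S := S) n fun _ => 1).symm

lemma sq_sqrt_sub_sqrt_le {a c : ℝ} (ha : 0 ≤ a) (hc : 0 ≤ c) (h : c = 0 → a = 0) :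
    (√a - √c) ^ 2 + (Real.log c + 1) * (a - c) ≤ Real.negMulLog c - Real.negMulLog a := by
  rcases hc.eq_or_lt with rfl | hc'
  · simp [h rfl]
  rcases ha.eq_or_lt with rfl | ha'
  · simp [Real.negMulLog, Real.sq_sqrt hc]; linarith
  have h1 := Real.log_le_sub_one_of_pos (div_pos (Real.sqrt_pos.2 hc') (Real.sqrt_pos.2 ha'))
  rw [Real.log_div (by positivity) (by positivity), Real.log_sqrt hc, Real.log_sqrt ha] at h1
  have h2 : a * (√c / √a) = √a * √c := by
    have : √a ≠ 0 := by positivity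
    field_simp
    rw [Real.sq_sqrt ha]
  have h3 := mul_le_mul_of_nonneg_left h1 ha
  have h4 := Real.sq_sqrt ha
  have h5 := Real.sq_sqrt hc
  simp only [Real.negMulLog]
  nlinarith

lemma sum_sq_sqrt_sub_le_entropy (hS : S.Nonempty) (n : ℕ) :
    ∑ s ∈ S, ∑ x ∈ S ^ (n + 1), (√(walkProb S n (s⁻¹ * x)) - √(walkProb S (n + 1) x)) ^ 2 ≤
      #S * (walkEntropy S (n + 1) - walkEntropy S n) := by
  have hc : (#S : ℝ) ≠ 0 := by exact_mod_cast hS.card_pos.ne'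
  have h1 : #S * (walkEntropy S (n + 1) - walkEntropy S n) =
      ∑ s ∈ S, ∑ x ∈ S ^ (n + 1), (Real.negMulLog (walkProb S (n + 1) x) -
        Real.negMulLog (walkProb S n (s⁻¹ * x))) := by
    simp_rw [sum_sub_distrib]
    rw [mul_sub]
    congr 1
    · simp [walkEntropy]
    · rw [sum_congr rfl fun s hs => sum_pow_succ_shift (n := n)
        (F := fun x => Real.negMulLog (walkProb S n x))
        (fun x hx => by simp [walkProb_eq_zero hx]) hs]
      simp [walkEntropy]
  rw [h1, sum_comm, sum_comm (s := S)]
  refine sum_le_sum fun x _ => ?_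
  have h2 : ∑ s ∈ S, walkProb S n (s⁻¹ * x) = #S * walkProb S (n + 1) x := by
    simp only [walkProb]; field_simp
  have h3 : ∑ s ∈ S, (Real.log (walkProb S (n + 1) x) + 1) *
      (walkProb S n (s⁻¹ * x) - walkProb S (n + 1) x) = 0 := by
    rw [← mul_sum, sum_sub_distrib, h2]; simp
  rw [← add_zero (∑ s ∈ S, _), ← h3, ← sum_add_distrib]
  refine sum_le_sum fun s hs => sq_sqrt_sub_sqrt_le (walkProb_nonneg _ _) (walkProb_nonneg _ _) ?_
  intro h0
  rw [h0, mul_zero, sum_eq_zero_iff_of_nonneg fun _ _ => walkProb_nonneg _ _] at h2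
  exact h2 s hs

lemma RightHarmonic.sq_le_entropy (hS : S.Nonempty) {f : G → ℝ} (hf : RightHarmonic S f)
    (hf1 : f 1 = 0) (n : ℕ) {s : G} (hs : s ∈ S) :
    f s ^ 2 ≤ (#S * (walkEntropy S (n + 1) - walkEntropy S n)) *
      (2 * (#S + 1) * walkMean S (n + 1) (fun x => f x ^ 2)) := by
  have hc : (0 : ℝ) < #S := by exact_mod_cast hS.card_pos
  set a : G → ℝ := fun x => walkProb S n (s⁻¹ * x) with ha
  set c : G → ℝ := walkProb S (n + 1) with hcdef
  have ha0 : ∀ x, 0 ≤ a x := fun x => walkProb_nonneg _ _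
  have hc0 : ∀ x, 0 ≤ c x := fun x => walkProb_nonneg _ _
  have hshift : ∀ F : G → ℝ, ∑ x ∈ S ^ (n + 1), a x * F x = walkMean S n fun x => F (s * x) := by
    intro F
    rw [walkMean_eq_sum]
    simpa using sum_pow_succ_shift (n := n) (F := fun x => walkProb S n x * F (s * x))
      (fun x hx => by simp [walkProb_eq_zero hx]) hs
  have e1 : f s = ∑ x ∈ S ^ (n + 1), (√(a x) - √(c x)) * ((√(a x) + √(c x)) * f x) := by
    have h1 := hshift f
    rw [hf.walkMean_mul_left hS] at h1
    have h2 := hf.walkMean_mul_left hS (n + 1) 1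
    simp only [one_mul, hf1, walkMean_eq_sum] at h2
    rw [← h1, ← sub_zero (∑ x ∈ _, a x * f x), ← h2, ← sum_sub_distrib]
    refine sum_congr rfl fun x _ => ?_
    have h4 := Real.sq_sqrt (ha0 x)
    have h5 := Real.sq_sqrt (hc0 x)
    rw [← hcdef]
    linear_combination (-f x) * h4 + f x * h5
  have e2 : ∑ x ∈ S ^ (n + 1), (√(a x) - √(c x)) ^ 2 ≤
      #S * (walkEntropy S (n + 1) - walkEntropy S n) :=
    (single_le_sum (f := fun s => ∑ x ∈ S ^ (n + 1),
      (√(walkProb S n (s⁻¹ * x)) - √(walkProb S (n + 1) x)) ^ 2)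
      (fun s _ => sum_nonneg fun x _ => sq_nonneg _) hs).trans (sum_sq_sqrt_sub_le_entropy hS n)
  have e3 : ∑ x ∈ S ^ (n + 1), ((√(a x) + √(c x)) * f x) ^ 2 ≤
      2 * (#S + 1) * walkMean S (n + 1) (fun x => f x ^ 2) := by
    have h1 : walkMean S n (fun x => f (s * x) ^ 2) ≤
        #S * walkMean S (n + 1) (fun x => f x ^ 2) := by
      rw [walkMean, mul_div_cancel₀ _ hc.ne']
      exact single_le_sum (f := fun s => walkMean S n fun x => f (s * x) ^ 2)
        (fun s _ => walkMean_nonneg _ fun x => sq_nonneg _) hs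
    calc _ ≤ ∑ x ∈ S ^ (n + 1), (2 * (a x * f x ^ 2) + 2 * (c x * f x ^ 2)) := by
          refine sum_le_sum fun x _ => ?_
          have h4 := Real.sq_sqrt (ha0 x)
          have h5 := Real.sq_sqrt (hc0 x)
          have : (√(a x) + √(c x)) ^ 2 ≤ 2 * a x + 2 * c x := by
            nlinarith [sq_nonneg (√(a x) - √(c x))]
          nlinarith [mul_le_mul_of_nonneg_right this (sq_nonneg (f x))]
      _ = 2 * walkMean S n (fun x => f (s * x) ^ 2) +
          2 * walkMean S (n + 1) (fun x => f x ^ 2) := by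
          rw [sum_add_distrib, ← mul_sum, ← mul_sum, hshift fun x => f x ^ 2,
            walkMean_eq_sum (n + 1)]
      _ ≤ _ := by linarith
  calc f s ^ 2 ≤ _ := by rw [e1]; exact sum_mul_sq_le_sq_mul_sq _ _ _
    _ ≤ _ := mul_le_mul e2 e3 (sum_nonneg fun _ _ => sq_nonneg _)
      ((sum_nonneg fun _ _ => sq_nonneg _).trans e2)

lemma walkEntropy_le_log_card (hS : S.Nonempty) (n : ℕ) :
    walkEntropy S n ≤ Real.log #(S ^ n) := by
  have hN : (0 : ℝ) < #(S ^ n) := by exact_mod_cast hS.pow.card_pos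
  have key : ∀ x ∈ S ^ n, Real.negMulLog (walkProb S n x) ≤
      walkProb S n x * Real.log #(S ^ n) + ((#(S ^ n) : ℝ)⁻¹ - walkProb S n x) := by
    intro x _
    rcases (walkProb_nonneg (S := S) n x).eq_or_lt with h | h
    · rw [← h]; simp
    · have h1 := Real.log_le_sub_one_of_pos (inv_pos.2 (mul_pos h hN))
      rw [Real.log_inv, Real.log_mul h.ne' hN.ne'] at h1
      have h2 := mul_le_mul_of_nonneg_left h1 h.le
      have h3 : walkProb S n x * (walkProb S n x * #(S ^ n))⁻¹ = (#(S ^ n) : ℝ)⁻¹ := by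
        field_simp
      simp only [Real.negMulLog]
      linarith
  refine (sum_le_sum key).trans ?_
  rw [sum_add_distrib, ← sum_mul, sum_sub_distrib, sum_walkProb hS]
  simp [hN.ne']

lemma frequently_entropy_increment_le (hS : S.Nonempty) {C d : ℕ}
    (hC : ∀ n, #(S ^ n) ≤ C * (n + 1) ^ d) :
    ∃ᶠ n : ℕ in atTop, walkEntropy S (n + 1) - walkEntropy S n ≤ (d + 1) / (n + 1) := by
  intro hev
  obtain ⟨N, hN⟩ := eventually_atTop.1 hev
  simp only [not_le] at hN
  have hCpos : (0 : ℝ) < C := by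
    have h0 := (hS.pow (n := 0)).card_pos.trans_le (hC 0)
    simp only [zero_add, one_pow, mul_one] at h0
    exact_mod_cast h0
  set u : ℕ → ℝ := fun n => walkEntropy S n - (d + 1) * Real.log (n + 1) with hu
  have hmono : ∀ n ≥ N, u N ≤ u n := by
    intro n hn
    induction n, hn using Nat.le_induction with
    | base => exact le_rfl
    | succ n hn ih =>
      have h1 := hN n hn
      have h2 : Real.log ((n + 1 : ℕ) + 1) - Real.log (n + 1) ≤ 1 / (n + 1) := by
        rw [← Real.log_div (by positivity) (by positivity)]
        refine (Real.log_le_sub_one_of_pos (by positivity)).trans_eq ?_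
        push_cast; field_simp; ring
      have h3 := mul_le_mul_of_nonneg_left h2 (by positivity : (0 : ℝ) ≤ d + 1)
      rw [mul_one_div] at h3
      simp only [hu] at ih ⊢
      linarith
  have hup : ∀ n, u n ≤ Real.log C - Real.log (n + 1) := by
    intro n
    have h1 := walkEntropy_le_log_card hS n
    have h2 : Real.log #(S ^ n) ≤ Real.log C + d * Real.log (n + 1) := by
      rw [← Real.log_pow, ← Real.log_mul hCpos.ne' (by positivity)]
      refine Real.log_le_log (by exact_mod_cast hS.pow.card_pos) (by exact_mod_cast hC n)
    simp only [hu]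
    linarith
  have hlim : Tendsto (fun n : ℕ => Real.log ((n : ℝ) + 1)) atTop atTop :=
    Real.tendsto_log_atTop.comp (tendsto_atTop_add_const_right _ _ tendsto_natCast_atTop_atTop)
  obtain ⟨n, hn1, hn2⟩ :=
    ((hlim.eventually_gt_atTop (Real.log C - u N)).and (eventually_ge_atTop N)).exists
  linarith [hmono n hn2, hup n]

/-- On a group of polynomial growth, harmonic functions have second moment growing linearly along
infinitely many times of the random walk, uniformly. -/
theorem frequently_le_walkMean_sq (hS : S.Nonempty) {C d : ℕ}
    (hC : ∀ n, #(S ^ n) ≤ C * (n + 1) ^ d) :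
    ∃ c > (0 : ℝ), ∃ᶠ n : ℕ in atTop, ∀ f : G → ℝ, RightHarmonic S f → f 1 = 0 → ∀ s ∈ S,
      c * f s ^ 2 * n ≤ walkMean S n (fun x => f x ^ 2) := by
  have hc : (0 : ℝ) < #S := by exact_mod_cast hS.card_pos
  refine ⟨(#S * (d + 1) * (2 * (#S + 1)))⁻¹, by positivity, ?_⟩
  have := frequently_entropy_increment_le hS hC
  refine (tendsto_add_atTop_nat 1).frequently (this.mono fun n hn f hf hf1 s hs => ?_)
  have h1 := hf.sq_le_entropy hS hf1 n hs
  have hA : 0 ≤ walkMean S (n + 1) fun x => f x ^ 2 := walkMean_nonneg _ fun _ => sq_nonneg _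
  have h2 : f s ^ 2 ≤ (#S * ((d + 1) / (n + 1))) *
      (2 * (#S + 1) * walkMean S (n + 1) (fun x => f x ^ 2)) := by
    refine h1.trans ?_
    gcongr
  push_cast
  rw [mul_assoc, inv_mul_le_iff₀ (by positivity)]
  calc f s ^ 2 * (n + 1) ≤ (#S * ((d + 1) / (n + 1))) *
      (2 * (#S + 1) * walkMean S (n + 1) (fun x => f x ^ 2)) * (n + 1) := by gcongr
    _ = _ := by field_simp

end RandomWalk

section TopEigenspace

open Filter Topology Submodule

variable {H : Type*} [NormedAddCommGroup H] [InnerProductSpace ℝ H]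

lemma exists_orthonormal_of_forall_finiteDimensional {P : H → Prop}
    (h : ∀ F : Submodule ℝ H, FiniteDimensional ℝ F → ∃ v ∈ Fᗮ, ‖v‖ = 1 ∧ P v) (n : ℕ) :
    ∃ v : Fin n → H, Orthonormal ℝ v ∧ ∀ i, P (v i) := by
  induction n with
  | zero => exact ⟨Fin.elim0, ⟨fun i => i.elim0, fun i => i.elim0⟩, fun i => i.elim0⟩
  | succ n ih =>
    obtain ⟨v, hv, hP⟩ := ih
    obtain ⟨u, hu, hu1, hPu⟩ := h (span ℝ (Set.range v))
      (FiniteDimensional.span_of_finite ℝ (Set.finite_range v))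
    have hin : ∀ i, inner ℝ (v i) u = 0 := fun i =>
      (mem_orthogonal _ _).1 hu _ (subset_span ⟨i, rfl⟩)
    refine ⟨Fin.cons u v, ⟨?_, ?_⟩, ?_⟩
    · intro i
      refine Fin.cases ?_ (fun i => ?_) i
      · simpa using hu1
      · simpa using hv.1 i
    · intro i j
      refine Fin.cases ?_ (fun i => ?_) i <;> refine Fin.cases ?_ (fun j => ?_) j
      · simp
      · intro _; simpa [real_inner_comm] using hin j
      · intro _; simpa using hin i
      · intro hij
        simpa using hv.2 fun h => hij (congrArg Fin.succ h)
    · intro i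
      refine Fin.cases ?_ (fun i => ?_) i
      · simpa using hPu
      · simpa using hP i

lemma BilinForm.apply_add_self_le {q : LinearMap.BilinForm ℝ H} (hpos : ∀ v, 0 ≤ q v v) (u v : H) :
    q (u + v) (u + v) ≤ 2 * q u u + 2 * q v v := by
  have := hpos (u - v)
  simp only [map_sub, map_add, LinearMap.sub_apply, LinearMap.add_apply] at this ⊢
  linarith

/-- A nonzero positive form of finite trace on a Hilbert space attains its maximum on the unit
sphere, and the vectors at which it does form a finite-dimensional subspace. -/
theorem exists_top_eigenspace [CompleteSpace H] (q : LinearMap.BilinForm ℝ H)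
    (hsymm : ∀ u v, q u v = q v u) (hpos : ∀ v, 0 ≤ q v v) {c : ℝ}
    (htrace : ∀ (n : ℕ) (v : Fin n → H), Orthonormal ℝ v → ∑ i, q (v i) (v i) ≤ c)
    (hne : ∃ v, q v v ≠ 0) :
    ∃ (l : ℝ) (W : Submodule ℝ H), 0 < l ∧ FiniteDimensional ℝ W ∧ W ≠ ⊥ ∧
      (∀ v, q v v ≤ l * ‖v‖ ^ 2) ∧ ∀ v, v ∈ W ↔ q v v = l * ‖v‖ ^ 2 := by
  obtain ⟨v₀, hv₀⟩ := hne
  have hv₀0 : v₀ ≠ 0 := by rintro rfl; simp at hv₀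
  have hscale : ∀ v : H, v ≠ 0 → q v v = q (‖v‖⁻¹ • v) (‖v‖⁻¹ • v) * ‖v‖ ^ 2 := by
    intro v hv
    have : ‖v‖ ≠ 0 := norm_ne_zero_iff.2 hv
    simp only [map_smul, LinearMap.smul_apply, smul_eq_mul]
    field_simp
  have hunit : ∀ v : H, v ≠ 0 → ‖‖v‖⁻¹ • v‖ = 1 := fun v hv => norm_smul_inv_norm (𝕜 := ℝ) hv
  set A : Set ℝ := {x | ∃ v : H, ‖v‖ = 1 ∧ q v v = x} with hA
  have hAbdd : BddAbove A := by
    refine ⟨c, ?_⟩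
    rintro x ⟨v, hv, rfl⟩
    have := htrace 1 (fun _ => v) ⟨fun _ => hv, fun i j h => (h (Subsingleton.elim i j)).elim⟩
    simpa using this
  have hAne : A.Nonempty := ⟨_, _, hunit v₀ hv₀0, rfl⟩
  set l := sSup A with hl
  have hle : ∀ v, q v v ≤ l * ‖v‖ ^ 2 := by
    intro v
    rcases eq_or_ne v 0 with rfl | hv
    · simp
    · rw [hscale v hv]
      gcongr
      exact le_csSup hAbdd ⟨_, hunit v hv, rfl⟩
  have hlpos : 0 < l := by
    by_contra hneg
    have h1 := hle v₀
    have h2 := lt_of_le_of_ne (hpos v₀) (Ne.symm hv₀)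
    nlinarith [sq_nonneg ‖v₀‖]
  set r : LinearMap.BilinForm ℝ H := l • innerₗ H - q with hr
  have hrv : ∀ v, r v v = l * ‖v‖ ^ 2 - q v v := by
    intro v; simp [hr]
  have hrpos : ∀ v, 0 ≤ r v v := fun v => by rw [hrv]; linarith [hle v]
  have hrle : ∀ v, r v v ≤ l * ‖v‖ ^ 2 := fun v => by rw [hrv]; linarith [hpos v]
  have hrsymm : LinearMap.IsSymm r := ⟨fun x y => by simp [hr, hsymm x y, real_inner_comm]⟩
  obtain ⟨F, hF, hFr⟩ : ∃ F : Submodule ℝ H, FiniteDimensional ℝ F ∧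
      ∀ v ∈ Fᗮ, l / 2 * ‖v‖ ^ 2 ≤ r v v := by
    by_contra! hcon
    have key : ∀ F : Submodule ℝ H, FiniteDimensional ℝ F →
        ∃ v ∈ Fᗮ, ‖v‖ = 1 ∧ l / 2 ≤ q v v := by
      intro F hF
      obtain ⟨v, hvF, hv⟩ := hcon F hF
      have hv0 : v ≠ 0 := by rintro rfl; simp at hv
      refine ⟨‖v‖⁻¹ • v, Fᗮ.smul_mem _ hvF, hunit v hv0, ?_⟩
      rw [hrv, hscale v hv0] at hv
      have : 0 < ‖v‖ ^ 2 := by positivity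
      nlinarith
    obtain ⟨n, hn⟩ := exists_nat_gt (c / (l / 2))
    obtain ⟨v, hv, hP⟩ := exists_orthonormal_of_forall_finiteDimensional key n
    have h1 := htrace n v hv
    have h2 : ∑ _i : Fin n, l / 2 ≤ ∑ i, q (v i) (v i) := Finset.sum_le_sum fun i _ => hP i
    rw [div_lt_iff₀ (by positivity)] at hn
    simp at h2
    linarith
  have hWmem : ∀ v, v ∈ LinearMap.ker r ↔ q v v = l * ‖v‖ ^ 2 := by
    intro v
    constructor
    · intro hv
      have : r v v = 0 := by rw [LinearMap.mem_ker.1 hv]; rfl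
      rw [hrv] at this
      linarith
    · intro hv
      have h0 : r v v = 0 := by rw [hrv]; linarith
      rw [LinearMap.mem_ker]
      ext u
      have := LinearMap.BilinForm.apply_sq_le_of_symm r hrpos hrsymm v u
      rw [h0, zero_mul] at this
      simpa using pow_eq_zero_iff (two_ne_zero) |>.1 (le_antisymm this (sq_nonneg _))
  refine ⟨l, LinearMap.ker r, hlpos, ?_, ?_, hle, hWmem⟩
  · refine FiniteDimensional.of_injective
      ((F.orthogonalProjectionOnto : H →ₗ[ℝ] F).comp (LinearMap.ker r).subtype) ?_
    rw [← LinearMap.ker_eq_bot, LinearMap.ker_eq_bot']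
    rintro ⟨w, hw⟩ h0
    have hwF : w ∈ Fᗮ := by
      rw [← orthogonalProjectionOnto_eq_zero_iff]
      simpa using h0
    have h1 := hFr w hwF
    rw [show r w w = 0 by rw [LinearMap.mem_ker.1 hw]; rfl] at h1
    have h2 : ‖w‖ ^ 2 ≤ 0 := by nlinarith
    ext
    simpa using pow_eq_zero_iff (two_ne_zero) |>.1 (le_antisymm h2 (sq_nonneg _))
  · have hseq : ∀ n : ℕ, ∃ v : H, ‖v‖ = 1 ∧ r v v < 1 / (n + 1) := by
      intro n
      have : l - 1 / ((n : ℝ) + 1) < l := by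
        have : (0 : ℝ) < 1 / ((n : ℝ) + 1) := by positivity
        linarith
      obtain ⟨x, ⟨v, hv, rfl⟩, hx⟩ := exists_lt_of_lt_csSup hAne this
      refine ⟨v, hv, ?_⟩
      rw [hrv, hv]
      linarith
    choose v hv1 hvr using hseq
    have hr0 : Tendsto (fun n => r (v n) (v n)) atTop (𝓝 0) :=
      squeeze_zero (fun n => hrpos _) (fun n => (hvr n).le) tendsto_one_div_add_atTop_nhds_zero_nat
    set a : ℕ → F := fun n => F.orthogonalProjectionOnto (v n) with ha
    have hab : ∀ n, a n ∈ Metric.closedBall (0 : F) 1 := by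
      intro n
      rw [mem_closedBall_zero_iff, ← hv1 n]
      exact F.norm_orthogonalProjectionOnto_apply_le (v n)
    obtain ⟨a₀, -, φ, hφ, hlim⟩ :=
      (isCompact_closedBall (0 : F) 1).tendsto_subseq hab
    have hcauchy : CauchySeq (v ∘ φ) := by
      rw [Metric.cauchySeq_iff]
      intro ε hε
      have hca := hlim.cauchySeq
      rw [Metric.cauchySeq_iff] at hca
      obtain ⟨N₁, hN₁⟩ := hca (ε / 8) (by positivity)
      obtain ⟨N₂, hN₂⟩ := eventually_atTop.1
        ((hr0.comp hφ.tendsto_atTop).eventually_lt_const (show 0 < l * ε ^ 2 / 64 by positivity))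
      refine ⟨max N₁ N₂, fun m hm n hn => ?_⟩
      have hA1 := hN₁ m (le_of_max_le_left hm) n (le_of_max_le_left hn)
      have hR1 := hN₂ m (le_of_max_le_right hm)
      have hR2 := hN₂ n (le_of_max_le_right hn)
      simp only [Function.comp_apply] at hA1 hR1 hR2 ⊢
      set x := v (φ m)
      set y := v (φ n)
      set e : H := ((a (φ m) - a (φ n) : F) : H) with he
      have he' : ‖e‖ < ε / 8 := by rw [dist_eq_norm] at hA1; simpa [he] using hA1
      have hperp : (x - y) - e ∈ Fᗮ := by
        have := sub_starProjection_mem_orthogonal (K := F) (x - y)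
        rwa [starProjection_apply, map_sub] at this
      have h1 := hFr _ hperp
      have h2 := BilinForm.apply_add_self_le hrpos (x - y) (-e)
      have h3 := BilinForm.apply_add_self_le hrpos x (-y)
      have h4 := hrle e
      simp only [map_neg, LinearMap.neg_apply, neg_neg, ← sub_eq_add_neg] at h2 h3
      have he2 : ‖e‖ ^ 2 ≤ (ε / 8) ^ 2 := by gcongr
      have h6 : l * ‖(x - y) - e‖ ^ 2 ≤ l * (3 * ε / 4) ^ 2 := by
        have := mul_le_mul_of_nonneg_left he2 hlpos.le
        nlinarith
      have h7 : ‖(x - y) - e‖ ≤ 3 * ε / 4 :=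
        le_of_sq_le_sq (le_of_mul_le_mul_left h6 hlpos) (by positivity)
      rw [dist_eq_norm]
      calc ‖x - y‖ = ‖((x - y) - e) + e‖ := by rw [sub_add_cancel]
        _ ≤ ‖(x - y) - e‖ + ‖e‖ := norm_add_le _ _
        _ < ε := by linarith
    obtain ⟨w, hw⟩ := cauchySeq_tendsto_of_complete hcauchy
    have hw1 : ‖w‖ = 1 :=
      tendsto_nhds_unique hw.norm (by simp [hv1])
    have hrw : r w w = 0 := by
      refine le_antisymm ?_ (hrpos w)
      have hd : Tendsto (fun n => 2 * r (v (φ n)) (v (φ n)) + 2 * (l * ‖w - v (φ n)‖ ^ 2)) atTop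
          (𝓝 (2 * 0 + 2 * (l * ‖w - w‖ ^ 2))) :=
        ((hr0.comp hφ.tendsto_atTop).const_mul 2).add
          ((((tendsto_const_nhds.sub hw).norm.pow 2).const_mul l).const_mul 2)
      refine ge_of_tendsto (by simpa using hd) (Eventually.of_forall fun n => ?_)
      have h1 := BilinForm.apply_add_self_le hrpos (v (φ n)) (w - v (φ n))
      rw [add_sub_cancel] at h1
      have := hrle (w - v (φ n))
      linarith
    refine (Submodule.ne_bot_iff _).2 ⟨w, ?_, norm_ne_zero_iff.1 (by rw [hw1]; norm_num)⟩
    rw [hWmem]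
    rw [hrv] at hrw
    linarith

end TopEigenspace

section HarmonicCocycle

open scoped Classical Pointwise
open Finset Filter Topology

lemma exists_tendsto_of_bounded {ι : Type*} (ω : Ultrafilter ι) {a : ι → ℝ} {C : ℝ}
    (h : ∀ i, |a i| ≤ C) : ∃ L, Tendsto a ω (𝓝 L) := by
  have hK : IsCompact (Set.Icc (-C) C) := isCompact_Icc
  obtain ⟨L, -, hL⟩ := hK.ultrafilter_le_nhds (ω.map a) (by
    rw [le_principal_iff]
    exact Filter.mem_map.2 (univ_mem' fun i => abs_le.1 (h i)))
  exact ⟨L, hL⟩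

lemma tendsto_limUnder_of_bounded {ι : Type*} (ω : Ultrafilter ι) {a : ι → ℝ} {C : ℝ}
    (h : ∀ i, |a i| ≤ C) : Tendsto a ω (𝓝 (limUnder (ω : Filter ι) a)) :=
  tendsto_nhds_limUnder (exists_tendsto_of_bounded ω h)

variable {G : Type*} [Group G] {S : Finset G}
  {H : Type*} [NormedAddCommGroup H] [InnerProductSpace ℝ H]

variable {π : G →* (H ≃ₗᵢ[ℝ] H)} {b : G → H}

lemma cocycle_one (hb : ∀ g h, b (g * h) = b g + π g (b h)) : b 1 = 0 := by
  have := hb 1 1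
  simpa using this

lemma cocycle_inv (hb : ∀ g h, b (g * h) = b g + π g (b h))
    (g : G) : b g⁻¹ = - π g⁻¹ (b g) := by
  have := hb g⁻¹ g
  rw [inv_mul_cancel, cocycle_one hb] at this
  exact eq_neg_of_add_eq_zero_left this.symm

lemma rightHarmonic_inner (hb : ∀ g h, b (g * h) = b g + π g (b h))
    (hharm : ∑ s ∈ S, b s = 0) (v : H) :
    RightHarmonic S fun x => inner ℝ (b x) v := by
  intro x
  simp_rw [hb, inner_add_left, sum_add_distrib, ← sum_inner, ← map_sum, hharm]
  simp [← Nat.cast_smul_eq_nsmul ℝ, inner_smul_left]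

lemma walkMean_norm_sq (hb : ∀ g h, b (g * h) = b g + π g (b h))
    (hS : S.Nonempty) (hharm : ∑ s ∈ S, b s = 0) (n : ℕ) :
    walkMean S n (fun x => ‖b x‖ ^ 2) = n * ((∑ s ∈ S, ‖b s‖ ^ 2) / #S) := by
  have hc : (#S : ℝ) ≠ 0 := by exact_mod_cast hS.card_pos.ne'
  induction n with
  | zero => simp [walkMean, cocycle_one hb]
  | succ n ih =>
    rw [walkMean_succ_right, ← walkMean_sum]
    have : ∀ x, ∑ s ∈ S, ‖b (x * s)‖ ^ 2 = #S * ‖b x‖ ^ 2 + ∑ s ∈ S, ‖b s‖ ^ 2 := by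
      intro x
      simp_rw [hb, @norm_add_sq_real, LinearIsometryEquiv.norm_map, sum_add_distrib, ← mul_sum,
        ← inner_sum, ← map_sum, hharm]
      simp
    simp_rw [this, walkMean_add, walkMean_const_mul, walkMean_const hS, ih]
    push_cast
    field_simp

lemma walkMean_inner_sq_succ_left (hb : ∀ g h, b (g * h) = b g + π g (b h))
    (hS : S.Nonempty) (hharm : ∑ s ∈ S, b s = 0) (n : ℕ) (v : H) :
    walkMean S (n + 1) (fun x => inner ℝ (b x) v ^ 2) =
      (∑ s ∈ S, (inner ℝ (b s) v ^ 2 +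
        walkMean S n fun x => inner ℝ (b x) (π s⁻¹ v) ^ 2)) / #S := by
  rw [walkMean]
  congr 1
  refine sum_congr rfl fun s _ => ?_
  have h1 : ∀ x, inner ℝ (b (s * x)) v ^ 2 = inner ℝ (b s) v ^ 2 +
      (2 * inner ℝ (b s) v * inner ℝ (b x) (π s⁻¹ v) + inner ℝ (b x) (π s⁻¹ v) ^ 2) := by
    intro x
    have : inner ℝ (π s (b x)) v = inner ℝ (b x) (π s⁻¹ v) := by
      rw [← LinearIsometryEquiv.inner_map_map (π s) (b x)]
      simp
    rw [hb, inner_add_left, this]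
    ring
  have h2 := (rightHarmonic_inner hb hharm (π s⁻¹ v)).walkMean_mul_left hS n 1
  simp only [one_mul, cocycle_one hb, inner_zero_left] at h2
  simp_rw [h1, walkMean_add, walkMean_const_mul, walkMean_const hS, h2]
  simp

lemma walkMean_inner_sq_succ_bounds (hb : ∀ g h, b (g * h) = b g + π g (b h))
    (hS : S.Nonempty) (hharm : ∑ s ∈ S, b s = 0) (n : ℕ) (v : H) :
    walkMean S n (fun x => inner ℝ (b x) v ^ 2) ≤
        walkMean S (n + 1) (fun x => inner ℝ (b x) v ^ 2) ∧
    walkMean S (n + 1) (fun x => inner ℝ (b x) v ^ 2) ≤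
      walkMean S n (fun x => inner ℝ (b x) v ^ 2) + (∑ s ∈ S, ‖b s‖ ^ 2) / #S * ‖v‖ ^ 2 := by
  have hc : (0 : ℝ) < #S := by exact_mod_cast hS.card_pos
  have key : ∀ x, ∑ s ∈ S, inner ℝ (b (x * s)) v ^ 2 =
      #S * inner ℝ (b x) v ^ 2 + ∑ s ∈ S, inner ℝ (π x (b s)) v ^ 2 := by
    intro x
    simp_rw [hb, inner_add_left, add_sq, sum_add_distrib, ← mul_sum, ← sum_inner, ← map_sum, hharm]
    simp
  rw [walkMean_succ_right, ← walkMean_sum]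
  simp_rw [key, walkMean_add, walkMean_const_mul, add_div, mul_div_cancel_left₀ _ hc.ne']
  constructor
  · have := walkMean_nonneg (S := S) n (F := fun x => ∑ s ∈ S, inner ℝ (π x (b s)) v ^ 2)
      fun x => sum_nonneg fun s _ => sq_nonneg _
    have := div_nonneg this hc.le
    linarith
  · have : walkMean S n (fun x => ∑ s ∈ S, inner ℝ (π x (b s)) v ^ 2) ≤
        walkMean S n fun _ => (∑ s ∈ S, ‖b s‖ ^ 2) * ‖v‖ ^ 2 := by
      refine walkMean_mono n fun x => ?_
      rw [sum_mul]
      refine sum_le_sum fun s _ => ?_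
      rw [← mul_pow, ← (π x).norm_map (b s), ← sq_abs]
      gcongr
      exact abs_real_inner_le_norm _ _
    rw [walkMean_const hS] at this
    have := div_le_div_of_nonneg_right this hc.le
    rw [mul_div_right_comm] at this
    linarith

/-- A nonzero harmonic cocycle over a group of polynomial growth has a nonzero component in a
finite-dimensional invariant subspace. -/
theorem exists_finiteDimensional_invariant [CompleteSpace H]
    (hb : ∀ g h, b (g * h) = b g + π g (b h)) (hS : S.Nonempty)
    (hinv : ∀ s ∈ S, s⁻¹ ∈ S) (hgen : Subgroup.closure (S : Set G) = ⊤) {C d : ℕ}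
    (hC : ∀ n, #(S ^ n) ≤ C * (n + 1) ^ d) (hharm : ∑ s ∈ S, b s = 0) (hne : ∃ s ∈ S, b s ≠ 0) :
    ∃ W : Submodule ℝ H, FiniteDimensional ℝ W ∧ (∀ g, ∀ w ∈ W, π g w ∈ W) ∧
      ∃ g, ∃ w ∈ W, inner ℝ (b g) w ≠ 0 := by
  have hc : (0 : ℝ) < #S := by exact_mod_cast hS.card_pos
  obtain ⟨ε, hε, hfreq⟩ := frequently_le_walkMean_sq hS hC
  set good : Set ℕ := {n | ∀ f : G → ℝ, RightHarmonic S f → f 1 = 0 → ∀ s ∈ S,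
      ε * f s ^ 2 * n ≤ walkMean S n (fun x => f x ^ 2)} with hgood
  have hNB : (atTop ⊓ 𝓟 good).NeBot := frequently_mem_iff_neBot.1 hfreq
  set ω : Ultrafilter ℕ := Ultrafilter.of (atTop ⊓ 𝓟 good)
  have hωle : (ω : Filter ℕ) ≤ atTop ⊓ 𝓟 good := Ultrafilter.of_le _
  have hωtop : (ω : Filter ℕ) ≤ atTop := hωle.trans inf_le_left
  have hωgood : good ∈ (ω : Filter ℕ) := le_principal_iff.1 (hωle.trans inf_le_right)
  set κ : ℝ := (∑ s ∈ S, ‖b s‖ ^ 2) / #S with hκ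
  have hκ0 : 0 ≤ κ := by positivity
  set A : H → H → ℕ → ℝ := fun v w n =>
    walkMean S n (fun x => inner ℝ (b x) v * inner ℝ (b x) w) / n with hA
  have hAsq : ∀ v n, A v v n = walkMean S n (fun x => inner ℝ (b x) v ^ 2) / n := by
    intro v n; simp only [hA, sq]
  have hmean : ∀ n : ℕ, (walkMean S n fun x => ‖b x‖ ^ 2) / n ≤ κ := by
    intro n
    rw [walkMean_norm_sq hb hS hharm]
    rcases n.eq_zero_or_pos with rfl | hn
    · simpa using hκ0
    · rw [mul_div_cancel_left₀ _ (by positivity)]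
  have hbound : ∀ v w n, |A v w n| ≤ κ * (‖v‖ * ‖w‖) := by
    intro v w n
    have hp : ∀ x, |inner ℝ (b x) v * inner ℝ (b x) w| ≤ (‖v‖ * ‖w‖) * ‖b x‖ ^ 2 := by
      intro x
      rw [abs_mul]
      calc _ ≤ (‖b x‖ * ‖v‖) * (‖b x‖ * ‖w‖) := by
            gcongr <;> exact abs_real_inner_le_norm _ _
        _ = _ := by ring
    have h1 : walkMean S n (fun x => inner ℝ (b x) v * inner ℝ (b x) w) ≤
        (‖v‖ * ‖w‖) * walkMean S n fun x => ‖b x‖ ^ 2 := by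
      rw [← walkMean_const_mul]
      exact walkMean_mono n fun x => (abs_le.1 (hp x)).2
    have h2 : -((‖v‖ * ‖w‖) * walkMean S n fun x => ‖b x‖ ^ 2) ≤
        walkMean S n (fun x => inner ℝ (b x) v * inner ℝ (b x) w) := by
      rw [← neg_mul, ← walkMean_const_mul]
      exact walkMean_mono n fun x => by rw [neg_mul]; exact (abs_le.1 (hp x)).1
    calc |A v w n| = |walkMean S n (fun x => inner ℝ (b x) v * inner ℝ (b x) w)| / n := by
          simp only [hA, abs_div, Nat.abs_cast]
      _ ≤ ((‖v‖ * ‖w‖) * walkMean S n fun x => ‖b x‖ ^ 2) / n := by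
          gcongr; exact abs_le.2 ⟨h2, h1⟩
      _ = (‖v‖ * ‖w‖) * ((walkMean S n fun x => ‖b x‖ ^ 2) / n) := by ring
      _ ≤ _ := by rw [mul_comm]; gcongr; exact hmean n
  have hlim : ∀ v w, Tendsto (A v w) ω (𝓝 (limUnder (ω : Filter ℕ) (A v w))) :=
    fun v w => tendsto_limUnder_of_bounded ω (hbound v w)
  set Q : H → H → ℝ := fun v w => limUnder (ω : Filter ℕ) (A v w) with hQ
  have hQadd : ∀ v v' w, Q (v + v') w = Q v w + Q v' w := by
    intro v v' w
    refine tendsto_nhds_unique (hlim _ _) (((hlim v w).add (hlim v' w)).congr fun n => ?_)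
    simp only [hA, inner_add_right, add_mul, walkMean_add, add_div]
  have hQsmul : ∀ (a : ℝ) v w, Q (a • v) w = a • Q v w := by
    intro a v w
    refine tendsto_nhds_unique (hlim _ _) (((hlim v w).const_mul a).congr fun n => ?_)
    simp only [hA, inner_smul_right, mul_assoc, walkMean_const_mul, mul_div_assoc]
  have hQsymm : ∀ v w, Q v w = Q w v := by
    intro v w
    simp only [hQ, hA, mul_comm]
  set q : LinearMap.BilinForm ℝ H := LinearMap.mk₂ ℝ Q hQadd hQsmul
    (fun v w w' => by rw [hQsymm, hQadd, hQsymm w, hQsymm w'])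
    (fun a v w => by rw [hQsymm, hQsmul, hQsymm w]) with hq
  have hqlim : ∀ v, Tendsto (A v v) ω (𝓝 (q v v)) := fun v => hlim v v
  have hqpos : ∀ v, 0 ≤ q v v := by
    intro v
    refine ge_of_tendsto (hqlim v) (Eventually.of_forall fun n => ?_)
    rw [hAsq]
    exact div_nonneg (walkMean_nonneg _ fun x => sq_nonneg _) (Nat.cast_nonneg n)
  have htrace : ∀ (m : ℕ) (v : Fin m → H), Orthonormal ℝ v → ∑ i, q (v i) (v i) ≤ κ := by
    intro m v hv
    refine le_of_tendsto (tendsto_finsetSum _ fun i _ => hqlim (v i))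
      (Eventually.of_forall fun n => ?_)
    simp_rw [hAsq]
    rw [← sum_div, ← walkMean_sum]
    refine le_trans ?_ (hmean n)
    gcongr
    refine walkMean_mono n fun x => ?_
    have := hv.sum_inner_products_le (s := Finset.univ) (b x)
    simpa [real_inner_comm, sq_abs] using this
  have hqne : ∃ v, q v v ≠ 0 := by
    obtain ⟨s, hs, hbs⟩ := hne
    refine ⟨b s, ne_of_gt ?_⟩
    have hp : 0 < ‖b s‖ := norm_pos_iff.2 hbs
    refine lt_of_lt_of_le (show 0 < ε * (‖b s‖ ^ 2) ^ 2 by positivity)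
      (ge_of_tendsto (hqlim (b s)) ?_)
    filter_upwards [hωgood, hωtop (eventually_gt_atTop 0)] with n hn hn0
    have := hn _ (rightHarmonic_inner hb hharm (b s)) (by simp [cocycle_one hb]) s hs
    rw [hAsq, le_div_iff₀ (by exact_mod_cast hn0)]
    simpa only [real_inner_self_eq_norm_sq] using this
  obtain ⟨l, W, hl, hfd, hbot, hle, hmem⟩ := exists_top_eigenspace q hQsymm hqpos htrace hqne
  have hdiv0 : ∀ a : ℝ, Tendsto (fun n : ℕ => a / n) ω (𝓝 0) := fun a =>
    (tendsto_const_div_atTop_nhds_zero_nat a).mono_left hωtop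
  have hshift : ∀ v, Tendsto
      (fun n : ℕ => walkMean S (n + 1) (fun x => inner ℝ (b x) v ^ 2) / n) ω (𝓝 (q v v)) := by
    intro v
    have h1 := (hqlim v).add (hdiv0 (κ * ‖v‖ ^ 2))
    rw [add_zero] at h1
    refine tendsto_of_tendsto_of_tendsto_of_le_of_le (hqlim v) h1 (fun n => ?_) (fun n => ?_)
    · dsimp only
      rw [hAsq]
      gcongr
      exact (walkMean_inner_sq_succ_bounds hb hS hharm n v).1
    · dsimp only
      rw [hAsq, ← add_div]
      gcongr
      exact (walkMean_inner_sq_succ_bounds hb hS hharm n v).2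
  have hqinv : ∀ v, ∑ s ∈ S, q (π s⁻¹ v) (π s⁻¹ v) = #S * q v v := by
    intro v
    have h1 : Tendsto (fun n : ℕ => ∑ s ∈ S, (inner ℝ (b s) v ^ 2 / n +
        A (π s⁻¹ v) (π s⁻¹ v) n)) ω (𝓝 (∑ s ∈ S, (0 + q (π s⁻¹ v) (π s⁻¹ v)))) :=
      tendsto_finsetSum _ fun s _ => (hdiv0 _).add (hqlim _)
    simp only [zero_add] at h1
    refine tendsto_nhds_unique h1 (((hshift v).const_mul (#S : ℝ)).congr fun n => ?_)
    rw [walkMean_inner_sq_succ_left hb hS hharm]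
    simp_rw [hAsq, ← add_div, ← sum_div]
    field_simp
  have hWs : ∀ s ∈ S, ∀ w ∈ W, π s⁻¹ w ∈ W := by
    intro s hs w hw
    have h1 : ∀ t ∈ S, q (π t⁻¹ w) (π t⁻¹ w) ≤ q w w := by
      intro t _
      rw [(hmem w).1 hw, ← (π t⁻¹).norm_map w]
      exact hle _
    have h2 : ∑ t ∈ S, q (π t⁻¹ w) (π t⁻¹ w) = ∑ _t ∈ S, q w w := by rw [hqinv]; simp
    rw [hmem, (Finset.sum_eq_sum_iff_of_le h1).1 h2 s hs, (hmem w).1 hw,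
      LinearIsometryEquiv.norm_map]
  have hWg : ∀ g, (∀ w ∈ W, π g w ∈ W) ∧ ∀ w ∈ W, π g⁻¹ w ∈ W := by
    intro g
    have hg : g ∈ Subgroup.closure (S : Set G) := by rw [hgen]; trivial
    induction hg using Subgroup.closure_induction with
    | mem s hs => exact ⟨by simpa using hWs s⁻¹ (hinv s hs), hWs s hs⟩
    | one => simp
    | mul x y _ _ hx hy =>
      refine ⟨fun w hw => ?_, fun w hw => ?_⟩
      · rw [map_mul]; exact hx.1 _ (hy.1 _ hw)
      · rw [mul_inv_rev, map_mul]; exact hy.2 _ (hx.2 _ hw)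
    | inv x _ hx => exact ⟨hx.2, by simpa using hx.1⟩
  refine ⟨W, hfd, fun g => (hWg g).1, ?_⟩
  obtain ⟨w, hw, hw0⟩ := (Submodule.ne_bot_iff _).1 hbot
  by_contra! hcon
  have hz : q w w = 0 := by
    refine tendsto_nhds_unique (hqlim w) (tendsto_const_nhds.congr fun n => ?_)
    rw [hAsq]
    simp_rw [fun x => hcon x w hw]
    simp [walkMean_const hS]
  rw [(hmem w).1 hw] at hz
  have : 0 < l * ‖w‖ ^ 2 := by have := norm_pos_iff.2 hw0; positivity
  linarith

end HarmonicCocycle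

section GNS

open UniformSpace

universe u

variable {G : Type*} [Group G]

/-- A positive form invariant under a group action comes from an orthogonal representation. -/
theorem exists_orthogonal_rep_of_form {X : Type u} [AddCommGroup X] [Module ℝ X]
    (ρ : G →* (X →ₗ[ℝ] X)) (Q : X → X → ℝ)
    (hadd : ∀ x x' y, Q (x + x') y = Q x y + Q x' y)
    (hsmul : ∀ (a : ℝ) x y, Q (a • x) y = a * Q x y)
    (hsymm : ∀ x y, Q x y = Q y x) (hpos : ∀ x, 0 ≤ Q x x)
    (hinv : ∀ g x y, Q (ρ g x) (ρ g y) = Q x y) :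
    ∃ (H : Type u) (_ : NormedAddCommGroup H) (_ : InnerProductSpace ℝ H) (_ : CompleteSpace H)
      (π : G →* (H ≃ₗᵢ[ℝ] H)) (φ : X →ₗ[ℝ] H),
      (∀ x y, inner ℝ (φ x) (φ y) = Q x y) ∧ ∀ g x, φ (ρ g x) = π g (φ x) := by
  let core : PreInnerProductSpace.Core ℝ X :=
    { inner := Q
      conj_inner_symm := fun x y => hsymm y x
      re_inner_nonneg := fun x => hpos x
      add_left := hadd
      smul_left := fun x y a => hsmul a x y }
  let : SeminormedAddCommGroup X := @InnerProductSpace.Core.toSeminormedAddCommGroup ℝ X _ _ _ core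
  let : InnerProductSpace ℝ X := InnerProductSpace.ofCore core
  have hnorm : ∀ g x, ‖ρ g x‖ = ‖x‖ := by
    intro g x
    have h : inner ℝ (ρ g x) (ρ g x) = inner ℝ x x := hinv g x x
    rw [real_inner_self_eq_norm_sq, real_inner_self_eq_norm_sq] at h
    exact (sq_eq_sq₀ (norm_nonneg _) (norm_nonneg _)).1 h
  let L : G → X →L[ℝ] X := fun g => (ρ g).mkContinuous 1 fun x => by rw [hnorm, one_mul]
  have hL : ∀ g x, L g x = ρ g x := fun g x => rfl
  let M : G → Completion X →L[ℝ] Completion X := fun g => (L g).completion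
  have hMcoe : ∀ g (x : X), M g (x : Completion X) = ((ρ g x : X) : Completion X) := fun g x =>
    (L g).completion_apply_coe x
  have hMone : ∀ x, M 1 x = x := by
    intro x
    refine Completion.induction_on x (isClosed_eq (M 1).continuous continuous_id) fun a => ?_
    rw [hMcoe]; simp
  have hMmul : ∀ g h x, M (g * h) x = M g (M h x) := by
    intro g h x
    refine Completion.induction_on x
      (isClosed_eq (M _).continuous ((M g).continuous.comp (M h).continuous)) fun a => ?_
    rw [hMcoe, hMcoe, hMcoe, map_mul]; rfl
  have hMnorm : ∀ g x, ‖M g x‖ = ‖x‖ := by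
    intro g x
    refine Completion.induction_on x
      (isClosed_eq (M g).continuous.norm continuous_norm) fun a => ?_
    rw [hMcoe, Completion.norm_coe, Completion.norm_coe, hnorm]
  let π : G →* (Completion X ≃ₗᵢ[ℝ] Completion X) :=
    { toFun := fun g =>
        { toLinearEquiv := LinearEquiv.ofLinearMap (M g : Completion X →ₗ[ℝ] Completion X) (M g⁻¹)
            (by ext x; simp [← hMmul, hMone]) (by ext x; simp [← hMmul, hMone])
          norm_map' := hMnorm g }
      map_one' := by ext x; exact hMone x
      map_mul' := fun g h => by ext x; exact hMmul g h x }
  refine ⟨Completion X, inferInstance, inferInstance, inferInstance, π,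
    (Completion.toComplL : X →L[ℝ] Completion X), fun x y => ?_, fun g x => (hMcoe g x).symm⟩
  exact Completion.inner_coe x y

end GNS

section Averaging

open scoped Classical Pointwise
open Finset Filter Topology

variable {G : Type*} [Group G] {H : Type*} [NormedAddCommGroup H] [InnerProductSpace ℝ H]

/-- The averaging operator of an orthogonal representation over a finite set. -/
noncomputable def averaging (π : G →* (H ≃ₗᵢ[ℝ] H)) (S : Finset G) (u : H) : H :=
  (#S : ℝ)⁻¹ • ∑ s ∈ S, π s u

variable {π : G →* (H ≃ₗᵢ[ℝ] H)} {S : Finset G}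

lemma averaging_sub (u v : H) : averaging π S (u - v) = averaging π S u - averaging π S v := by
  simp [averaging, smul_sub]

lemma inner_apply_left_eq (g : G) (u v : H) : inner ℝ (π g u) v = inner ℝ u (π g⁻¹ v) := by
  rw [← (π g).inner_map_map u, ← Function.comp_apply (f := π g), ← LinearIsometryEquiv.coe_mul,
    ← map_mul, mul_inv_cancel, map_one]
  rfl

lemma card_mul_inner_averaging (hS : S.Nonempty) (u v : H) :
    #S * inner ℝ (averaging π S u) v = ∑ s ∈ S, inner ℝ (π s u) v := by
  have hc : (#S : ℝ) ≠ 0 := by exact_mod_cast hS.card_pos.ne'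
  rw [averaging, real_inner_smul_left, sum_inner, mul_inv_cancel_left₀ hc]

lemma inner_averaging_left (hS : S.Nonempty) (hinv : ∀ s ∈ S, s⁻¹ ∈ S) (u v : H) :
    inner ℝ (averaging π S u) v = inner ℝ u (averaging π S v) := by
  have hc : (#S : ℝ) ≠ 0 := by exact_mod_cast hS.card_pos.ne'
  apply mul_left_cancel₀ hc
  rw [real_inner_comm (averaging π S v) u, card_mul_inner_averaging hS,
    card_mul_inner_averaging hS]
  refine sum_bij (fun s _ => s⁻¹) hinv (fun _ _ _ _ h => inv_injective h)
    (fun s hs => ⟨s⁻¹, hinv s hs, inv_inv s⟩) fun s _ => ?_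
  rw [inner_apply_left_eq, real_inner_comm]

lemma sum_norm_sub_sq (hS : S.Nonempty) (u : H) :
    ∑ s ∈ S, ‖π s u - u‖ ^ 2 = 2 * #S * inner ℝ (u - averaging π S u) u := by
  have h : ∀ s, ‖π s u - u‖ ^ 2 = 2 * ‖u‖ ^ 2 - 2 * inner ℝ (π s u) u := by
    intro s
    rw [norm_sub_sq_real, LinearIsometryEquiv.norm_map]; ring
  simp only [h, sum_sub_distrib, ← mul_sum, ← card_mul_inner_averaging hS, inner_sub_left,
    real_inner_self_eq_norm_sq, sum_const, nsmul_eq_mul]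
  ring

lemma norm_sq_add_inner_averaging_ge (h1 : (1 : G) ∈ S) (u : H) :
    2 / #S * ‖u‖ ^ 2 ≤ ‖u‖ ^ 2 + inner ℝ (averaging π S u) u := by
  have hS : S.Nonempty := ⟨1, h1⟩
  have hc : (0 : ℝ) < #S := by exact_mod_cast hS.card_pos
  have h := card_mul_inner_averaging (π := π) hS u u
  rw [← add_sum_erase _ _ h1] at h
  have h2 : ∑ s ∈ S.erase 1, (-‖u‖ ^ 2) ≤ ∑ s ∈ S.erase 1, inner ℝ (π s u) u := by
    refine sum_le_sum fun s _ => ?_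
    have := neg_le_of_abs_le (abs_real_inner_le_norm (π s u) u)
    rw [LinearIsometryEquiv.norm_map] at this
    linarith [sq ‖u‖]
  rw [sum_const, card_erase_of_mem h1, nsmul_eq_mul, Nat.cast_sub hS.card_pos] at h2
  have h3 : inner ℝ (π 1 u) u = ‖u‖ ^ 2 := by
    rw [map_one, ← real_inner_self_eq_norm_sq]; rfl
  rw [h3] at h
  rw [div_mul_eq_mul_div, div_le_iff₀ hc]
  push_cast at h2
  nlinarith

lemma energy_averaging (hS : S.Nonempty) (hinv : ∀ s ∈ S, s⁻¹ ∈ S) (f : H) :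
    inner ℝ (f - averaging π S f) f -
      inner ℝ (averaging π S f - averaging π S (averaging π S f)) (averaging π S f) =
    ‖f - averaging π S f‖ ^ 2 +
      inner ℝ (averaging π S (f - averaging π S f)) (f - averaging π S f) := by
  have h1 : inner ℝ (averaging π S f) (averaging π S f) =
      inner ℝ (averaging π S (averaging π S f)) f := by
    rw [inner_averaging_left hS hinv (averaging π S f)]
  rw [← real_inner_self_eq_norm_sq, averaging_sub]
  simp only [inner_sub_left, inner_sub_right]
  linarith [real_inner_comm f (averaging π S f)]

lemma norm_apply_sub_le_of_mem_pow {u : H} {κ : ℝ} (h : ∀ s ∈ S, ‖π s u - u‖ ≤ κ) (r : ℕ) {x : G}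
    (hx : x ∈ S ^ r) : ‖π x u - u‖ ≤ r * κ := by
  induction r generalizing x with
  | zero =>
    rw [pow_zero, Finset.mem_one] at hx
    simp [hx]
  | succ r ih =>
    rw [pow_succ, Finset.mem_mul] at hx
    obtain ⟨y, hy, s, hs, rfl⟩ := hx
    have h1 : π (y * s) u - u = π y (π s u - u) + (π y u - u) := by
      rw [map_mul, map_sub]; simp
    rw [h1]
    refine (norm_add_le _ _).trans ?_
    rw [LinearIsometryEquiv.norm_map]
    push_cast
    linarith [h s hs, ih hy]

variable {δ : H}

lemma inner_iterate_averaging_eq_walkProb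
    (hδ : ∀ g h, inner ℝ (π g δ) (π h δ) = if g = h then 1 else 0) (n : ℕ) (x : G) :
    inner ℝ ((averaging π S)^[n] δ) (π x δ) = walkProb S n x := by
  induction n generalizing x with
  | zero =>
    have := hδ 1 x
    rw [map_one] at this
    simp only [Function.iterate_zero, id_eq, walkProb, Pi.single_apply, eq_comm (a := x)]
    exact this
  | succ n ih =>
    rw [Function.iterate_succ_apply', averaging, real_inner_smul_left, sum_inner]
    simp only [walkProb, div_eq_inv_mul]
    congr 1
    refine sum_congr rfl fun s _ => ?_
    rw [inner_apply_left_eq, ← ih, map_mul]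
    rfl

/-- In the regular representation of an infinite group of polynomial growth there are vectors whose
Laplacian is small compared with their energy. -/
theorem exists_almost_harmonic [Infinite G] (h1 : (1 : G) ∈ S) (hinv : ∀ s ∈ S, s⁻¹ ∈ S)
    (hgen : Subgroup.closure (S : Set G) = ⊤) {C d : ℕ} (hC : ∀ n, #(S ^ n) ≤ C * (n + 1) ^ d)
    (hδ : ∀ g h, inner ℝ (π g δ) (π h δ) = if g = h then 1 else 0) {ε : ℝ} (hε : 0 < ε) :
    ∃ u : H, 0 < inner ℝ (u - averaging π S u) u ∧
      ‖u - averaging π S u‖ ^ 2 ≤ ε * inner ℝ (u - averaging π S u) u := by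
  have hS : S.Nonempty := ⟨1, h1⟩
  have hm : (0 : ℝ) < #S := by exact_mod_cast hS.card_pos
  by_contra! hcon
  set E : H → ℝ := fun u => inner ℝ (u - averaging π S u) u with hE
  have hEnn : ∀ u, 0 ≤ E u := by
    intro u
    have h := sum_norm_sub_sq (π := π) hS u
    have h' : 0 ≤ ∑ s ∈ S, ‖π s u - u‖ ^ 2 := by positivity
    rw [h] at h'
    exact nonneg_of_mul_nonneg_right h' (by positivity)
  set ρ : ℝ := max (1 - 2 * ε / #S) (1 / 2) with hρ
  have hρpos : 0 < ρ := lt_max_of_lt_right (by norm_num)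
  have hρlt : ρ < 1 := max_lt (by have : 0 < 2 * ε / #S := by positivity
                                  linarith) (by norm_num)
  have hstep : ∀ u, E (averaging π S u) ≤ ρ * E u := by
    intro u
    have h2 := energy_averaging (π := π) hS hinv u
    have h3 := norm_sq_add_inner_averaging_ge (π := π) h1 (u - averaging π S u)
    have h4 : ε * E u ≤ ‖u - averaging π S u‖ ^ 2 := by
      rcases (hEnn u).eq_or_lt with h | h
      · rw [← h, mul_zero]; positivity
      · exact (hcon u h).le
    have h5 : 2 / #S * (ε * E u) ≤ 2 / #S * ‖u - averaging π S u‖ ^ 2 := by gcongr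
    have h6 : (1 - 2 * ε / #S) * E u ≤ ρ * E u := mul_le_mul_of_nonneg_right (le_max_left _ _)
      (hEnn u)
    have h7 : (1 - 2 * ε / #S) * E u = E u - 2 / #S * (ε * E u) := by ring
    simp only [hE] at *
    linarith
  set f : ℕ → H := fun n => (averaging π S)^[n] δ with hf
  have hEn : ∀ n, E (f n) ≤ ρ ^ n * E δ := by
    intro n
    induction n with
    | zero => simp [hf]
    | succ n ih =>
      have : f (n + 1) = averaging π S (f n) := Function.iterate_succ_apply' _ _ _
      rw [this, pow_succ']
      calc _ ≤ ρ * E (f n) := hstep _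
        _ ≤ ρ * (ρ ^ n * E δ) := by gcongr
        _ = _ := by ring
  set K : ℝ := √(2 * #S * E δ) with hK
  have hκ : ∀ n, ∀ s ∈ S, ‖π s (f n) - f n‖ ≤ K * √ρ ^ n := by
    intro n s hs
    have h2 : ‖π s (f n) - f n‖ ^ 2 ≤ 2 * #S * E (f n) := by
      rw [hE, ← sum_norm_sub_sq hS]
      exact single_le_sum (f := fun s => ‖π s (f n) - f n‖ ^ 2) (fun _ _ => by positivity) hs
    have h3 : 2 * #S * E (f n) ≤ (K * √ρ ^ n) ^ 2 := by
      rw [mul_pow, ← pow_mul, mul_comm n 2, pow_mul, Real.sq_sqrt hρpos.le, hK,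
        Real.sq_sqrt (by have := hEnn δ; positivity)]
      calc 2 * #S * E (f n) ≤ 2 * #S * (ρ ^ n * E δ) := by gcongr; exact hEn n
        _ = _ := by ring
    exact (sq_le_sq₀ (norm_nonneg _) (by positivity)).1 (h2.trans h3)
  have hp : ∀ n r : ℕ, ∀ x ∈ S ^ r,
      |walkProb S n x - walkProb S n 1| ≤ r * (K * √ρ ^ n) := by
    intro n r x hx
    rw [← inner_iterate_averaging_eq_walkProb hδ, ← inner_iterate_averaging_eq_walkProb hδ]
    have h2 : inner ℝ (f n) (π 1 δ) = inner ℝ (π x (f n)) (π x δ) := by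
      rw [LinearIsometryEquiv.inner_map_map, map_one]; rfl
    have hδn : ‖π x δ‖ = 1 := by
      have := hδ x x
      rw [if_pos rfl, real_inner_self_eq_norm_sq] at this
      exact (pow_eq_one_iff_of_nonneg (norm_nonneg _) two_ne_zero).1 this
    rw [show (averaging π S)^[n] δ = f n from rfl, h2, ← inner_sub_left]
    refine (abs_real_inner_le_norm _ _).trans ?_
    rw [hδn, mul_one, norm_sub_rev]
    exact norm_apply_sub_le_of_mem_pow (hκ n) r hx
  have hC1 : (1 : ℝ) ≤ C := by
    have := hC 0
    simp only [pow_zero, card_one, zero_add, one_pow, mul_one] at this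
    exact_mod_cast this
  have hbound : ∀ n : ℕ, 1 ≤ 6 * C ^ 2 * ((n : ℝ) + 1) ^ (2 * d + 2) * (K * √ρ ^ n) := by
    intro n
    set P : ℕ := C * (n + 1) ^ d with hP
    set κ : ℝ := K * √ρ ^ n with hκd
    have hκ0 : 0 ≤ κ := by positivity
    have hPpos : (0 : ℝ) < P := by
      rw [hP]; push_cast; positivity
    have a1 : (1 : ℝ) ≤ P * (walkProb S n 1 + n * κ) := by
      rw [← sum_walkProb hS n]
      calc _ ≤ ∑ x ∈ S ^ n, (walkProb S n 1 + n * κ) :=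
            sum_le_sum fun x hx => by linarith [(abs_le.1 (hp n n x hx)).2]
        _ = #(S ^ n) * (walkProb S n 1 + n * κ) := by rw [sum_const, nsmul_eq_mul]
        _ ≤ _ := by
          have := walkProb_nonneg (S := S) n 1
          gcongr
          exact hC n
    have a2 : #(S ^ (2 * P)) * (walkProb S n 1 - (2 * P : ℕ) * κ) ≤ 1 := by
      calc _ = ∑ x ∈ S ^ (2 * P), (walkProb S n 1 - (2 * P : ℕ) * κ) := by
            rw [sum_const, nsmul_eq_mul]
        _ ≤ ∑ x ∈ S ^ (2 * P), walkProb S n x :=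
            sum_le_sum fun x hx => by linarith [(abs_le.1 (hp n _ x hx)).1]
        _ ≤ ∑ x ∈ S ^ (2 * P) ∪ S ^ n, walkProb S n x :=
            sum_le_sum_of_subset_of_nonneg subset_union_left fun _ _ _ => walkProb_nonneg _ _
        _ = ∑ x ∈ S ^ n, walkProb S n x :=
            (sum_subset subset_union_right fun x _ hx => walkProb_eq_zero hx).symm
        _ = 1 := sum_walkProb hS n
    have a3 : ((2 * P : ℕ) : ℝ) + 1 ≤ #(S ^ (2 * P)) := by
      exact_mod_cast add_one_le_card_pow h1 (by rw [hgen]; exact Set.infinite_univ) (2 * P)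
    have a4 : 2 * P * (walkProb S n 1 - 2 * P * κ) ≤ 1 := by
      push_cast at a2 a3
      by_cases hneg : walkProb S n 1 - 2 * P * κ ≤ 0
      · nlinarith
      · push Not at hneg
        nlinarith
    have a5 : 1 ≤ 2 * P * (2 * P + n) * κ := by nlinarith
    refine a5.trans ?_
    have a6 : (P : ℝ) ≤ C * ((n : ℝ) + 1) ^ (d + 1) := by
      rw [hP]; push_cast
      gcongr
      · linarith [(Nat.cast_nonneg n : (0 : ℝ) ≤ n)]
      · lia
    have a7 : (n : ℝ) ≤ C * ((n : ℝ) + 1) ^ (d + 1) := by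
      have b1 : (n : ℝ) + 1 ≤ ((n : ℝ) + 1) ^ (d + 1) :=
        le_self_pow₀ (by linarith [(Nat.cast_nonneg n : (0 : ℝ) ≤ n)]) (by lia)
      nlinarith [(Nat.cast_nonneg n : (0 : ℝ) ≤ n)]
    refine mul_le_mul_of_nonneg_right ?_ hκ0
    calc 2 * (P : ℝ) * (2 * P + n) ≤ 2 * (C * ((n : ℝ) + 1) ^ (d + 1)) *
          (2 * (C * ((n : ℝ) + 1) ^ (d + 1)) + C * ((n : ℝ) + 1) ^ (d + 1)) := by gcongr
      _ = _ := by ring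
  have hσ : 0 < √ρ := Real.sqrt_pos.2 hρpos
  have hlim := ((tendsto_add_atTop_iff_nat 1).2 (tendsto_pow_const_mul_const_pow_of_abs_lt_one
    (2 * d + 2) (r := √ρ)
    (by rw [abs_of_pos hσ, Real.sqrt_lt' one_pos]; simpa using hρlt))).const_mul (6 * C ^ 2 * K / √ρ)
  rw [mul_zero] at hlim
  obtain ⟨n, hn⟩ := (hlim.eventually (gt_mem_nhds one_pos)).exists
  refine absurd (hbound n) (not_le.2 (lt_of_eq_of_lt ?_ hn))
  rw [pow_succ (√ρ)]
  push_cast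
  field_simp

end Averaging

section Existence

open scoped Classical Pointwise
open Finset Filter Topology

universe u

/-- The regular representation. -/
theorem exists_regular_rep (G : Type u) [Group G] :
    ∃ (H : Type u) (_ : NormedAddCommGroup H) (_ : InnerProductSpace ℝ H)
      (π : G →* (H ≃ₗᵢ[ℝ] H)) (δ : H),
      ∀ g h, inner ℝ (π g δ) (π h δ) = if g = h then (1 : ℝ) else 0 := by
  let ρ : G →* ((G →₀ ℝ) →ₗ[ℝ] (G →₀ ℝ)) :=
    { toFun := fun g => (Finsupp.domLCongr (Equiv.mulLeft g) : (G →₀ ℝ) ≃ₗ[ℝ] (G →₀ ℝ))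
      map_one' := by ext x : 1; ext; simp
      map_mul' := fun g h => by ext x : 1; ext; simp }
  have hρ : ∀ g (x : G →₀ ℝ) h, ρ g x h = x (g⁻¹ * h) := fun g x h => by simp [ρ]
  have hfin : ∀ x y : G →₀ ℝ, (Function.support fun g => x g * y g).Finite := fun x y =>
    x.hasFiniteSupport.subset fun g hg => left_ne_zero_of_mul hg
  obtain ⟨H, i1, i2, -, π, φ, hφ, hπ⟩ := exists_orthogonal_rep_of_form ρ
    (fun x y => ∑ᶠ g, x g * y g)
    (fun x x' y => by
      simp only [Finsupp.add_apply, add_mul]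
      exact finsum_add_distrib (hfin _ _) (hfin _ _))
    (fun a x y => by
      simp only [Finsupp.smul_apply, smul_eq_mul, mul_assoc]
      exact (mul_finsum (fun g => x g * y g) a).symm)
    (fun x y => by simp only [mul_comm])
    (fun x => finsum_nonneg fun g => mul_self_nonneg _)
    (fun g x y => by
      simp only [hρ]
      exact finsum_comp_equiv (Equiv.mulLeft g⁻¹) (f := fun h => x h * y h))
  refine ⟨H, i1, i2, π, φ (Finsupp.single 1 1), fun g h => ?_⟩
  rw [← hπ, ← hπ, hφ]
  have : ∀ g, ρ g (Finsupp.single 1 1) = Finsupp.single g 1 := fun g => by simp [ρ]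
  rw [this, this, finsum_eq_single _ g fun x hx => by simp [Finsupp.single_apply, hx.symm]]
  simp [Finsupp.single_apply, eq_comm]

variable {G : Type*} [Group G]

/-- A sequence of coboundaries, bounded on each group element, has a cocycle as ultralimit. -/
theorem exists_ultralimit_cocycle {H : Type u} [NormedAddCommGroup H] [InnerProductSpace ℝ H]
    (π : G →* (H ≃ₗᵢ[ℝ] H)) (v : ℕ → H) (hv : ∀ g, ∃ C, ∀ n, ‖π g (v n) - v n‖ ≤ C) :
    ∃ (H' : Type u) (_ : NormedAddCommGroup H') (_ : InnerProductSpace ℝ H')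
      (_ : CompleteSpace H') (π' : G →* (H' ≃ₗᵢ[ℝ] H')) (b : G → H'),
      (∀ g h, b (g * h) = b g + π' g (b h)) ∧
      ∀ S : Finset G, Tendsto (fun n => ‖∑ s ∈ S, (π s (v n) - v n)‖ ^ 2) (hyperfilter ℕ)
        (𝓝 (‖∑ s ∈ S, b s‖ ^ 2)) := by
  let X : Submodule ℝ (ℕ → H) :=
    { carrier := {x | ∃ C, ∀ n, ‖x n‖ ≤ C}
      add_mem' := fun {x y} ⟨C, hC⟩ ⟨D, hD⟩ =>
        ⟨C + D, fun n => (norm_add_le _ _).trans (add_le_add (hC n) (hD n))⟩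
      zero_mem' := ⟨0, fun n => by simp⟩
      smul_mem' := fun a x ⟨C, hC⟩ => ⟨|a| * C, fun n => by
        rw [Pi.smul_apply, norm_smul, Real.norm_eq_abs]
        exact mul_le_mul_of_nonneg_left (hC n) (abs_nonneg a)⟩ }
  let ω : Ultrafilter ℕ := hyperfilter ℕ
  let Q : X → X → ℝ := fun x y => limUnder (ω : Filter ℕ) fun n => inner ℝ (x.1 n) (y.1 n)
  have hQ : ∀ x y : X, Tendsto (fun n => inner ℝ (x.1 n) (y.1 n)) ω (𝓝 (Q x y)) := by
    rintro ⟨x, C, hC⟩ ⟨y, D, hD⟩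
    refine tendsto_limUnder_of_bounded ω (C := C * D) fun n => ?_
    exact (abs_real_inner_le_norm _ _).trans
      (mul_le_mul (hC n) (hD n) (norm_nonneg _) ((norm_nonneg _).trans (hC n)))
  let ρ : G →* (X →ₗ[ℝ] X) :=
    { toFun := fun g =>
        { toFun := fun x => ⟨fun n => π g (x.1 n), by
            obtain ⟨C, hC⟩ := x.2
            exact ⟨C, fun n => by simpa using hC n⟩⟩
          map_add' := fun x y => by ext n; simp
          map_smul' := fun a x => by ext n; simp }
      map_one' := by ext x n; simp
      map_mul' := fun g h => by ext x n; simp }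
  obtain ⟨H', i1, i2, i3, π', φ, hφ, hπ⟩ := exists_orthogonal_rep_of_form ρ Q
    (fun x x' y => tendsto_nhds_unique (hQ _ _)
      (((hQ x y).add (hQ x' y)).congr fun n => (inner_add_left _ _ _).symm))
    (fun a x y => tendsto_nhds_unique (hQ _ _)
      (((hQ x y).const_mul a).congr fun n => (real_inner_smul_left _ _ _).symm))
    (fun x y => tendsto_nhds_unique (hQ _ _) ((hQ y x).congr fun n => real_inner_comm _ _))
    (fun x => ge_of_tendsto' (hQ x x) fun n => real_inner_self_nonneg)
    (fun g x y => tendsto_nhds_unique (hQ _ _)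
      ((hQ x y).congr fun n => ((π g).inner_map_map _ _).symm))
  let c : G → X := fun g => ⟨fun n => π g (v n) - v n, hv g⟩
  refine ⟨H', i1, i2, i3, π', fun g => φ (c g), fun g h => ?_, fun S => ?_⟩
  · have hc : c (g * h) = c g + ρ g (c h) := by
      ext n
      simp [c, ρ]
    rw [← hπ, ← map_add, ← hc]
  · have := hQ (∑ s ∈ S, c s) (∑ s ∈ S, c s)
    rw [← hφ, real_inner_self_eq_norm_sq, map_sum] at this
    refine this.congr fun n => ?_
    rw [real_inner_self_eq_norm_sq]
    simp [c]

/-- An infinite group of polynomial growth has a nonzero harmonic cocycle. -/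
theorem exists_harmonic_cocycle {G : Type u} [Group G] [Infinite G] {S : Finset G}
    (h1 : (1 : G) ∈ S) (hinv : ∀ s ∈ S, s⁻¹ ∈ S)
    (hgen : Subgroup.closure (S : Set G) = ⊤) {C d : ℕ} (hC : ∀ n, #(S ^ n) ≤ C * (n + 1) ^ d) :
    ∃ (H : Type u) (_ : NormedAddCommGroup H) (_ : InnerProductSpace ℝ H)
      (_ : CompleteSpace H) (π : G →* (H ≃ₗᵢ[ℝ] H)) (b : G → H),
      (∀ g h, b (g * h) = b g + π g (b h)) ∧ ∑ s ∈ S, b s = 0 ∧ ∃ s ∈ S, b s ≠ 0 := by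
  have hS : S.Nonempty := ⟨1, h1⟩
  have hm : (0 : ℝ) < #S := by exact_mod_cast hS.card_pos
  obtain ⟨H, _, _, π, δ, hδ⟩ := exists_regular_rep G
  have hex : ∀ n : ℕ, ∃ v : H, ∑ s ∈ S, ‖π s v - v‖ ^ 2 = 2 * #S ∧
      ‖∑ s ∈ S, (π s v - v)‖ ^ 2 ≤ (#S : ℝ) ^ 2 * (1 / ((n : ℝ) + 1)) := by
    intro n
    obtain ⟨w, hw0, hw⟩ := exists_almost_harmonic h1 hinv hgen hC hδ
      (ε := 1 / ((n : ℝ) + 1)) (by positivity)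
    set e := inner ℝ (w - averaging π S w) w with he
    have hsum : ∑ s ∈ S, ‖π s w - w‖ ^ 2 = 2 * #S * e := sum_norm_sub_sq hS w
    have hlap : ∑ s ∈ S, (π s w - w) = (-#S : ℝ) • (w - averaging π S w) := by
      rw [averaging, smul_sub, smul_smul, neg_mul, mul_inv_cancel₀ hm.ne', sum_sub_distrib]
      simp
      module
    have hscale : ∀ s, π s ((√e)⁻¹ • w) - (√e)⁻¹ • w = (√e)⁻¹ • (π s w - w) := fun s => by
      rw [map_smul, smul_sub]
    have hsq : ((√e)⁻¹) ^ 2 = e⁻¹ := by rw [inv_pow, Real.sq_sqrt hw0.le]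
    refine ⟨(√e)⁻¹ • w, ?_, ?_⟩
    · simp only [hscale, norm_smul, mul_pow, ← mul_sum, hsum, Real.norm_eq_abs, sq_abs, hsq]
      field_simp
    · simp only [hscale, ← smul_sum, hlap, norm_smul, mul_pow, Real.norm_eq_abs, sq_abs, hsq,
        neg_sq]
      rw [inv_mul_le_iff₀ hw0]
      calc (#S : ℝ) ^ 2 * ‖w - averaging π S w‖ ^ 2
          ≤ (#S : ℝ) ^ 2 * (1 / ((n : ℝ) + 1) * e) := by gcongr
        _ = _ := by ring
  choose v hv1 hv2 using hex
  have hbdS : ∀ s ∈ S, ∀ n, ‖π s (v n) - v n‖ ≤ √(2 * #S) := by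
    intro s hs n
    apply Real.le_sqrt_of_sq_le
    rw [← hv1 n]
    exact single_le_sum (f := fun s => ‖π s (v n) - v n‖ ^ 2) (fun _ _ => by positivity) hs
  have hbd : ∀ g, ∃ C, ∀ n, ‖π g (v n) - v n‖ ≤ C := by
    intro g
    have hg : g ∈ Subgroup.closure (S : Set G) := hgen ▸ Subgroup.mem_top g
    induction hg using Subgroup.closure_induction with
    | mem x hx => exact ⟨_, hbdS x hx⟩
    | one => exact ⟨0, fun n => by simp⟩
    | mul x y _ _ hx hy =>
      obtain ⟨A, hA⟩ := hx
      obtain ⟨B, hB⟩ := hy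
      refine ⟨B + A, fun n => ?_⟩
      have : π (x * y) (v n) - v n = π x (π y (v n) - v n) + (π x (v n) - v n) := by simp
      rw [this]
      refine (norm_add_le _ _).trans (add_le_add ?_ (hA n))
      rw [LinearIsometryEquiv.norm_map]; exact hB n
    | inv x _ hx =>
      obtain ⟨A, hA⟩ := hx
      refine ⟨A, fun n => ?_⟩
      rw [← LinearIsometryEquiv.norm_map (π x), map_sub, norm_sub_rev]
      simpa using hA n
  obtain ⟨H', i1, i2, i3, π', b, hb, hlim⟩ := exists_ultralimit_cocycle π v hbd
  refine ⟨H', i1, i2, i3, π', b, hb, ?_, ?_⟩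
  · have h0 : Tendsto (fun n => ‖∑ s ∈ S, (π s (v n) - v n)‖ ^ 2) (hyperfilter ℕ) (𝓝 0) := by
      refine squeeze_zero (fun n => by positivity) hv2 ?_
      have := (tendsto_one_div_add_atTop_nhds_zero_nat (𝕜 := ℝ)).const_mul ((#S : ℝ) ^ 2)
      rw [mul_zero] at this
      exact this.mono_left (Nat.hyperfilter_le_atTop)
    have := tendsto_nhds_unique (hlim S) h0
    simpa using this
  · by_contra! hcon
    have h0 : Tendsto (fun n => ∑ s ∈ S, ‖π s (v n) - v n‖ ^ 2) (hyperfilter ℕ)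
        (𝓝 (∑ s ∈ S, ‖b s‖ ^ 2)) :=
      tendsto_finsetSum _ fun s _ => by simpa using hlim {s}
    simp only [hv1] at h0
    have := tendsto_nhds_unique h0 tendsto_const_nhds
    rw [sum_eq_zero fun s hs => by simp [hcon s hs]] at this
    linarith

end Existence

section Growth

open scoped Classical Pointwise
open Finset

/-- Every finite subset of `G` has growth at most polynomial of degree `d`. -/
def PolyGrowth (d : ℕ) (G : Type*) [Group G] : Prop :=
  ∀ S : Finset G, ∃ C : ℕ, ∀ n : ℕ, #(S ^ n) ≤ C * (n + 1) ^ d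

variable {G Γ : Type*} [Group G] [Group Γ] {d : ℕ}

lemma PolyGrowth.of_injective (h : PolyGrowth d G) (f : Γ →* G) (hf : Function.Injective f) :
    PolyGrowth d Γ := by
  intro S
  obtain ⟨C, hC⟩ := h (S.image f)
  refine ⟨C, fun n => ?_⟩
  rw [← card_image_of_injective _ hf, image_pow]
  exact hC n

lemma PolyGrowth.subgroup (h : PolyGrowth d G) (K : Subgroup G) : PolyGrowth d K :=
  h.of_injective K.subtype K.subtype_injective

lemma PolyGrowth.of_surjective (h : PolyGrowth d G) (f : G →* Γ) (hf : Function.Surjective f) :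
    PolyGrowth d Γ := by
  intro S
  obtain ⟨C, hC⟩ := h (S.image (Function.surjInv hf))
  refine ⟨C, fun n => ?_⟩
  have : S = (S.image (Function.surjInv hf)).image f := by
    rw [image_image]
    ext x
    simp
  rw [this, ← image_pow]
  exact card_image_le.trans (hC n)

lemma exists_finset_closure_eq {U : Set G} (hU : (Subgroup.closure U).FG) :
    ∃ F : Finset G, (F : Set G) ⊆ U ∧ Subgroup.closure (F : Set G) = Subgroup.closure U := by
  have hx : ∀ x ∈ Subgroup.closure U, ∃ F : Finset G, (F : Set G) ⊆ U ∧
      x ∈ Subgroup.closure (F : Set G) := by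
    intro x hx
    induction hx using Subgroup.closure_induction with
    | mem x hx => exact ⟨{x}, by simpa using hx, Subgroup.subset_closure (by simp)⟩
    | one => exact ⟨∅, by simp, Subgroup.one_mem _⟩
    | mul x y _ _ hx hy =>
      obtain ⟨A, hA, hA'⟩ := hx
      obtain ⟨B, hB, hB'⟩ := hy
      refine ⟨A ∪ B, by simp [hA, hB], Subgroup.mul_mem _ ?_ ?_⟩
      · exact Subgroup.closure_mono (by simp) hA'
      · exact Subgroup.closure_mono (by simp) hB'
    | inv x _ hx =>
      obtain ⟨A, hA, hA'⟩ := hx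
      exact ⟨A, hA, Subgroup.inv_mem _ hA'⟩
  obtain ⟨T, hT⟩ := hU
  have hTU : ∀ t : T, (t : G) ∈ Subgroup.closure U := fun t => hT ▸ Subgroup.subset_closure t.2
  choose F hF hF' using fun t : T => hx t (hTU t)
  refine ⟨univ.biUnion F, by simpa using hF, le_antisymm ?_ ?_⟩
  · exact Subgroup.closure_mono (by simpa using hF)
  · rw [← hT, Subgroup.closure_le]
    intro t ht
    exact Subgroup.closure_mono (by
      simpa using Set.subset_iUnion (fun t => (F t : Set G)) ⟨t, ht⟩) (hF' ⟨t, ht⟩)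

end Growth

section SmallElements

open scoped Classical Pointwise commutatorElement
open Finset

variable {Γ A : Type*} [Group Γ] [NormedRing A] {T : Γ →* A}

lemma norm_map_mul_sub_one_le (hT : ∀ g, ‖T g‖ ≤ 1) (g h : Γ) :
    ‖T (g * h) - 1‖ ≤ ‖T g - 1‖ + ‖T h - 1‖ := by
  have : T (g * h) - 1 = T g * (T h - 1) + (T g - 1) := by rw [map_mul]; noncomm_ring
  rw [this]
  refine (norm_add_le _ _).trans ?_
  have := (norm_mul_le (T g) (T h - 1)).trans
    (mul_le_mul_of_nonneg_right (hT g) (norm_nonneg _))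
  linarith

lemma norm_map_inv_sub_one_le (hT : ∀ g, ‖T g‖ ≤ 1) (g : Γ) : ‖T g⁻¹ - 1‖ ≤ ‖T g - 1‖ := by
  have : T g⁻¹ - 1 = - (T g⁻¹ * (T g - 1)) := by
    rw [mul_sub, ← map_mul, inv_mul_cancel, map_one]; noncomm_ring
  rw [this, norm_neg]
  simpa using (norm_mul_le _ _).trans (mul_le_mul_of_nonneg_right (hT g⁻¹) (norm_nonneg (T g - 1)))

lemma norm_map_pow_sub_one_le (hT : ∀ g, ‖T g‖ ≤ 1) (g : Γ) (n : ℕ) :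
    ‖T (g ^ n) - 1‖ ≤ n * ‖T g - 1‖ := by
  induction n with
  | zero => simp
  | succ n ih =>
    rw [pow_succ]
    push_cast
    linarith [norm_map_mul_sub_one_le hT (g ^ n) g]

lemma norm_map_commutator_sub_one_le (hT : ∀ g, ‖T g‖ ≤ 1) (g h : Γ) :
    ‖T ⁅g, h⁆ - 1‖ ≤ 2 * ‖T g - 1‖ * ‖T h - 1‖ := by
  have h1 : T ⁅g, h⁆ - 1 =
      ((T g - 1) * (T h - 1) - (T h - 1) * (T g - 1)) * T (g⁻¹ * h⁻¹) := by
    have h2 : (T g - 1) * (T h - 1) - (T h - 1) * (T g - 1) = T (g * h) - T (h * g) := by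
      simp only [map_mul]; noncomm_ring
    rw [h2, sub_mul, ← map_mul, ← map_mul, commutatorElement_def]
    simp [mul_assoc]
  rw [h1]
  have h3 := norm_mul_le (T g - 1) (T h - 1)
  have h4 := norm_mul_le (T h - 1) (T g - 1)
  have h5 := norm_sub_le ((T g - 1) * (T h - 1)) ((T h - 1) * (T g - 1))
  have h6 := (norm_mul_le ((T g - 1) * (T h - 1) - (T h - 1) * (T g - 1)) (T (g⁻¹ * h⁻¹))).trans
    (mul_le_mul_of_nonneg_left (hT _) (norm_nonneg _))
  linarith

/-- Ordered products `h n ^ e₀ * h (n + 1) ^ e₁ * ⋯` of `l` factors with exponents below `M`. -/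
noncomputable def orderedProducts (h : ℕ → Γ) (M : ℕ) : ℕ → ℕ → Finset Γ
  | _, 0 => 1
  | n, l + 1 => image₂ (fun k p => h n ^ k * p) (range M) (orderedProducts h M (n + 1) l)

variable {h : ℕ → Γ} {M : ℕ}

lemma norm_sub_one_le_of_mem_orderedProducts (hT : ∀ g, ‖T g‖ ≤ 1)
    (hdec : ∀ n, ‖T (h (n + 1)) - 1‖ ≤ 1 / 2 * ‖T (h n) - 1‖) (l n : ℕ) {p : Γ}
    (hp : p ∈ orderedProducts h M n l) : ‖T p - 1‖ ≤ 2 * M * ‖T (h n) - 1‖ := by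
  induction l generalizing n p with
  | zero =>
    rw [orderedProducts, Finset.mem_one] at hp
    rw [hp, map_one, sub_self, norm_zero]
    positivity
  | succ l ih =>
    rw [orderedProducts, mem_image₂] at hp
    obtain ⟨k, hk, q, hq, rfl⟩ := hp
    have hkM : (k : ℝ) ≤ M := by exact_mod_cast (mem_range.1 hk).le
    have h1 := norm_map_mul_sub_one_le hT (h n ^ k) q
    have h2 := norm_map_pow_sub_one_le hT (h n) k
    have h3 := ih (n + 1) hq
    have h4 : (k : ℝ) * ‖T (h n) - 1‖ ≤ M * ‖T (h n) - 1‖ := by gcongr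
    have h5 : (2 * M : ℝ) * ‖T (h (n + 1)) - 1‖ ≤ 2 * M * (1 / 2 * ‖T (h n) - 1‖) := by
      gcongr; exact hdec n
    linarith

variable [NormedAlgebra ℝ A]

lemma map_eq_one_of_forall_pow_near (T : Γ →* A) {h : Γ} (hh : ∀ m : ℕ, ‖T (h ^ m) - 1‖ ≤ 1 / 2) :
    T h = 1 := by
  have hstep : ∀ g : Γ, ‖T g - 1‖ ≤ 1 / 2 → 3 / 2 * ‖T g - 1‖ ≤ ‖T (g ^ 2) - 1‖ := by
    intro g hg
    have h1 : (2 : ℝ) • (T g - 1) = (T (g ^ 2) - 1) - (T g - 1) * (T g - 1) := by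
      rw [map_pow, two_smul]; noncomm_ring
    have h2 : ‖(2 : ℝ) • (T g - 1)‖ = 2 * ‖T g - 1‖ := by rw [norm_smul]; norm_num
    have h3 := norm_sub_le (T (g ^ 2) - 1) ((T g - 1) * (T g - 1))
    rw [← h1, h2] at h3
    nlinarith [norm_mul_le (T g - 1) (T g - 1), norm_nonneg (T g - 1)]
  have hk : ∀ k : ℕ, (3 / 2 : ℝ) ^ k * ‖T h - 1‖ ≤ ‖T (h ^ 2 ^ k) - 1‖ := by
    intro k
    induction k with
    | zero => simp
    | succ k ih =>
      have := hstep _ (hh (2 ^ k))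
      rw [← pow_mul] at this
      rw [pow_succ, pow_succ]
      linarith
  by_contra hne
  have hpos : 0 < ‖T h - 1‖ := norm_pos_iff.2 (sub_ne_zero.2 hne)
  obtain ⟨k, hk'⟩ := pow_unbounded_of_one_lt (1 / ‖T h - 1‖) (by norm_num : (1 : ℝ) < 3 / 2)
  rw [div_lt_iff₀ hpos] at hk'
  linarith [hk k, hh (2 ^ k)]

lemma norm_map_pow_sub_one_ge (hT : ∀ g, ‖T g‖ ≤ 1) (g : Γ) (n : ℕ) :
    n * ‖T g - 1‖ - (n * ‖T g - 1‖) ^ 2 ≤ ‖T (g ^ n) - 1‖ := by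
  have key : ‖T (g ^ n) - 1 - (n : ℝ) • (T g - 1)‖ ≤ (n * ‖T g - 1‖) ^ 2 := by
    induction n with
    | zero => simp
    | succ n ih =>
      have h1 : T (g ^ (n + 1)) - 1 - ((n + 1 : ℕ) : ℝ) • (T g - 1) =
          T g * (T (g ^ n) - 1 - (n : ℝ) • (T g - 1)) + (n : ℝ) • ((T g - 1) * (T g - 1)) := by
        rw [pow_succ', map_mul]
        push_cast
        simp only [mul_sub, sub_mul, add_smul, smul_sub, mul_smul_comm, one_smul, mul_one, one_mul]
        abel
      rw [h1]
      have h2 := norm_add_le (T g * (T (g ^ n) - 1 - (n : ℝ) • (T g - 1)))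
        ((n : ℝ) • ((T g - 1) * (T g - 1)))
      have h3 := (norm_mul_le (T g) (T (g ^ n) - 1 - (n : ℝ) • (T g - 1))).trans
        (mul_le_mul_of_nonneg_right (hT g) (norm_nonneg _))
      have h4 : ‖(n : ℝ) • ((T g - 1) * (T g - 1))‖ ≤ n * (‖T g - 1‖ * ‖T g - 1‖) := by
        rw [norm_smul, Real.norm_natCast]
        gcongr
        exact norm_mul_le _ _
      push_cast
      nlinarith [norm_nonneg (T g - 1), mul_self_nonneg ‖T g - 1‖,
        mul_nonneg (Nat.cast_nonneg (α := ℝ) n) (mul_self_nonneg ‖T g - 1‖)]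
  have h1 := norm_sub_norm_le ((n : ℝ) • (T g - 1)) (T (g ^ n) - 1)
  rw [norm_sub_rev ((n : ℝ) • (T g - 1)), norm_smul, Real.norm_natCast] at h1
  linarith

lemma card_orderedProducts (hT : ∀ g, ‖T g‖ ≤ 1) (hpos : ∀ n, 0 < ‖T (h n) - 1‖)
    (hdec2 : ∀ n, ‖T (h (n + 1)) - 1‖ ≤ 1 / 2 * ‖T (h n) - 1‖)
    (hdec : ∀ n, 8 * M * ‖T (h (n + 1)) - 1‖ < ‖T (h n) - 1‖)
    (hsmall : ∀ n, M * ‖T (h n) - 1‖ ≤ 1 / 2) (l n : ℕ) :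
    #(orderedProducts h M n l) = M ^ l := by
  induction l generalizing n with
  | zero => simp [orderedProducts]
  | succ l ih =>
    rw [orderedProducts, card_image₂_iff.2, card_range, ih, pow_succ']
    have key : ∀ e < M, ∀ f < e, ∀ p ∈ orderedProducts h M (n + 1) l,
        ∀ q ∈ orderedProducts h M (n + 1) l, h n ^ e * p ≠ h n ^ f * q := by
      intro e he f hf p hp q hq heq
      obtain ⟨k, rfl⟩ := Nat.exists_eq_add_of_lt hf
      have h1 : h n ^ (k + 1) = q * p⁻¹ := by
        rw [eq_mul_inv_iff_mul_eq]
        rw [add_assoc, pow_add, mul_assoc] at heq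
        exact mul_left_cancel heq
      have h2 := norm_map_pow_sub_one_ge hT (h n) (k + 1)
      rw [h1] at h2
      have h3 := norm_map_mul_sub_one_le hT q p⁻¹
      have h4 := norm_map_inv_sub_one_le hT p
      have h5 := norm_sub_one_le_of_mem_orderedProducts hT hdec2 l (n + 1) hp
      have h6 := norm_sub_one_le_of_mem_orderedProducts hT hdec2 l (n + 1) hq
      have h7 : ((k + 1 : ℕ) : ℝ) * ‖T (h n) - 1‖ ≤ 1 / 2 := by
        refine le_trans ?_ (hsmall n)
        gcongr
        lia
      have h8 : (1 : ℝ) * ‖T (h n) - 1‖ ≤ ((k + 1 : ℕ) : ℝ) * ‖T (h n) - 1‖ := by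
        gcongr
        push_cast; linarith [(Nat.cast_nonneg k : (0 : ℝ) ≤ k)]
      have h9 := mul_le_mul_of_nonneg_left h7 (h8.trans' (by linarith [hpos n]))
      rw [← sq] at h9
      linarith [hdec n]
    rintro ⟨e, p⟩ ⟨he, hp⟩ ⟨f, q⟩ ⟨hf, hq⟩ heq
    simp only [coe_range, Set.mem_Iio, mem_coe] at he hf hp hq heq
    rcases lt_trichotomy e f with hlt | rfl | hlt
    · exact absurd heq.symm (key f hf e hlt q hq p hp)
    · rw [mul_left_cancel heq]
    · exact absurd heq (key e he f hlt p hp q hq)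

lemma orderedProducts_subset {S : Finset Γ} (h1 : (1 : Γ) ∈ S)
    (hS : ∀ n, h n ∈ S ^ (3 * 2 ^ n)) (l n : ℕ) :
    orderedProducts h M n l ⊆ S ^ (3 * M * (2 ^ n * (2 ^ l - 1))) := by
  induction l generalizing n with
  | zero => simp [orderedProducts]
  | succ l ih =>
    intro p hp
    rw [orderedProducts, mem_image₂] at hp
    obtain ⟨k, hk, q, hq, rfl⟩ := hp
    have h3 : h n ^ k ∈ S ^ (3 * 2 ^ n * k) := by
      rw [pow_mul]; exact pow_mem_pow (hS n)
    refine pow_subset_pow_right h1 ?_ (pow_add S _ _ ▸ mul_mem_mul h3 (ih _ hq))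
    have h4 : k ≤ M := (mem_range.1 hk).le
    obtain ⟨c, hc⟩ := Nat.exists_eq_add_of_le (Nat.one_le_two_pow (n := l))
    rw [pow_succ 2 l, pow_succ 2 n, hc, show (1 + c) * 2 - 1 = 1 + 2 * c by lia,
      Nat.add_sub_cancel_left]
    calc 3 * 2 ^ n * k + 3 * M * (2 ^ n * 2 * c) ≤ 3 * 2 ^ n * M + 3 * M * (2 ^ n * 2 * c) := by
          gcongr
      _ = _ := by ring

lemma commutator_pow_eq {g s : Γ} (hc : Commute ⁅g, s⁆ g) (m : ℕ) : ⁅g ^ m, s⁆ = ⁅g, s⁆ ^ m := by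
  have h1 : s * g * s⁻¹ = ⁅g, s⁆⁻¹ * g := by rw [commutatorElement_def]; group
  have h2 : s * g ^ m * s⁻¹ = (⁅g, s⁆ ^ m)⁻¹ * g ^ m := by
    rw [← conj_pow, h1, (hc.inv_left).mul_pow, inv_pow]
  rw [commutatorElement_def, mul_assoc, mul_assoc, show s * ((g ^ m)⁻¹ * s⁻¹) =
    (s * g ^ m * s⁻¹)⁻¹ by group, h2, mul_inv_rev, inv_inv, mul_inv_cancel_left]

/-- In a group of polynomial growth with a faithful contractive representation, elements
sufficiently close to the identity commute. -/
theorem commute_of_small {d : ℕ} (hG : PolyGrowth d Γ) (hT : ∀ g, ‖T g‖ ≤ 1)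
    (hinj : Function.Injective T) {F : Finset Γ}
    (hF : ∀ s ∈ F, ‖T s - 1‖ ≤ 1 / (32 * 2 ^ (d + 1))) :
    ∀ s ∈ F, ∀ t ∈ F, Commute s t := by
  by_contra! hcon
  obtain ⟨s₀, hs₀, t₀, ht₀, hst⟩ := hcon
  set M : ℕ := 2 ^ (d + 1) with hM
  have hM1 : (1 : ℝ) ≤ M := by exact_mod_cast Nat.one_le_two_pow
  set ε : ℝ := 1 / (32 * 2 ^ (d + 1)) with hε
  have hεM : 32 * M * ε = 1 := by rw [hε, hM]; push_cast; field_simp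
  have hε0 : 0 < ε := by positivity
  have hε1 : ε ≤ 1 / 32 := by nlinarith
  let Good : Γ → Prop := fun g => g ∈ Subgroup.closure (F : Set Γ) ∧ ∃ s ∈ F, ⁅g, s⁆ ≠ 1
  have hnext : ∀ g, Good g → ∀ s ∈ F, ⁅g, s⁆ ≠ 1 → Good ⁅g, s⁆ := by
    rintro g ⟨hg, -⟩ s hs hne
    have hs' : s ∈ Subgroup.closure (F : Set Γ) := Subgroup.subset_closure hs
    have hmem : ⁅g, s⁆ ∈ Subgroup.closure (F : Set Γ) := by
      rw [commutatorElement_def]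
      exact mul_mem (mul_mem (mul_mem hg hs') (inv_mem hg)) (inv_mem hs')
    refine ⟨hmem, ?_⟩
    by_contra! hall
    have hcent : ∀ x ∈ Subgroup.closure (F : Set Γ), Commute ⁅g, s⁆ x := by
      intro x hx
      induction hx using Subgroup.closure_induction with
      | mem x hx => exact commutatorElement_eq_one_iff_commute.1 (hall x hx)
      | one => exact Commute.one_right _
      | mul x y _ _ hx hy => exact hx.mul_right hy
      | inv x _ hx => exact hx.inv_right
    apply hne
    apply hinj
    rw [map_one]
    refine map_eq_one_of_forall_pow_near T fun m => ?_
    rw [← commutator_pow_eq (hcent g hg) m]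
    have h1 := norm_map_commutator_sub_one_le hT (g ^ m) s
    have h2 : ‖T (g ^ m) - 1‖ ≤ 2 := by
      have h3 := norm_sub_le (T (g ^ m)) (T 1)
      rw [map_one] at h3
      have h4 := hT 1
      rw [map_one] at h4
      linarith [hT (g ^ m)]
    nlinarith [hF s hs, norm_nonneg (T s - 1), norm_nonneg (T (g ^ m) - 1)]
  choose! σ hσF hσ using fun g (hg : Good g) => hg.2
  let h : ℕ → Γ := fun n => (fun g => ⁅g, σ g⁆)^[n] s₀
  have hsucc : ∀ n, h (n + 1) = ⁅h n, σ (h n)⁆ := fun n => Function.iterate_succ_apply' _ _ _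
  have hgood : ∀ n, Good (h n) := by
    intro n
    induction n with
    | zero => exact ⟨Subgroup.subset_closure hs₀, t₀, ht₀, fun hc =>
        hst (commutatorElement_eq_one_iff_commute.1 hc)⟩
    | succ n ih => rw [hsucc]; exact hnext _ ih _ (hσF _ ih) (hσ _ ih)
  have hpos : ∀ n, 0 < ‖T (h n) - 1‖ := by
    intro n
    rw [norm_pos_iff, sub_ne_zero]
    intro hc
    have : h n = 1 := hinj (by rw [hc, map_one])
    obtain ⟨s, -, hs⟩ := (hgood n).2
    exact hs (by rw [this]; simp)
  have hdecε : ∀ n, ‖T (h (n + 1)) - 1‖ ≤ 2 * ε * ‖T (h n) - 1‖ := by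
    intro n
    have h1 := norm_map_commutator_sub_one_le hT (h n) (σ (h n))
    rw [← hsucc] at h1
    nlinarith [hF _ (hσF _ (hgood n)), hpos n]
  have hdec2 : ∀ n, ‖T (h (n + 1)) - 1‖ ≤ 1 / 2 * ‖T (h n) - 1‖ := fun n => by
    nlinarith [hdecε n, hpos n]
  have hdec : ∀ n, 8 * M * ‖T (h (n + 1)) - 1‖ < ‖T (h n) - 1‖ := fun n => by
    have h1 : 8 * M * ‖T (h (n + 1)) - 1‖ ≤ 8 * M * (2 * ε * ‖T (h n) - 1‖) := by
      gcongr; exact hdecε n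
    have h2 : 8 * M * (2 * ε * ‖T (h n) - 1‖) = (32 * M * ε) / 2 * ‖T (h n) - 1‖ := by ring
    rw [hεM] at h2
    linarith [hpos n]
  have hle : ∀ n, ‖T (h n) - 1‖ ≤ ε := by
    intro n
    induction n with
    | zero => exact hF _ hs₀
    | succ n ih => linarith [hdec2 n, hpos n]
  have hsmall : ∀ n, M * ‖T (h n) - 1‖ ≤ 1 / 2 := fun n => by
    have : M * ‖T (h n) - 1‖ ≤ M * ε := by gcongr; exact hle n
    linarith
  let S : Finset Γ := insert 1 (F ∪ F⁻¹)
  have h1S : (1 : Γ) ∈ S := mem_insert_self _ _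
  have hFS : ∀ s ∈ F, s ∈ S := fun s hs => by simp [S, hs]
  have hFS' : ∀ s ∈ F, s⁻¹ ∈ S := fun s hs => by simp [S, hs]
  have hSinv : S⁻¹ = S := by
    ext x
    simp only [S, Finset.mem_inv', mem_insert, mem_union, inv_inv, inv_eq_one]
    tauto
  have hlen : ∀ n, h n ∈ S ^ (3 * 2 ^ n - 2) := by
    intro n
    induction n with
    | zero => simpa [h] using hFS _ hs₀
    | succ n ih =>
      have hi : (h n)⁻¹ ∈ S ^ (3 * 2 ^ n - 2) := by
        rw [← hSinv, inv_pow]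
        exact Finset.inv_mem_inv ih
      have hs := hσF _ (hgood n)
      rw [hsucc, commutatorElement_def, show 3 * 2 ^ (n + 1) - 2 =
        (3 * 2 ^ n - 2) + 1 + (3 * 2 ^ n - 2) + 1 by
          have := Nat.one_le_two_pow (n := n)
          rw [pow_succ]; lia]
      rw [pow_succ, pow_add, pow_succ]
      exact mul_mem_mul (mul_mem_mul (mul_mem_mul ih (hFS _ hs)) hi) (hFS' _ hs)
  obtain ⟨C, hC⟩ := hG S
  have hbound : ∀ l : ℕ, 2 ^ l ≤ C * (4 * M) ^ d := by
    intro l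
    have h1 := card_orderedProducts hT hpos hdec2 hdec hsmall l 0
    have h2 := card_le_card (orderedProducts_subset (M := M) h1S
      (fun n => pow_subset_pow_right h1S (Nat.sub_le _ _) (hlen n)) l 0)
    rw [h1] at h2
    have h3 : 3 * M * (2 ^ 0 * (2 ^ l - 1)) + 1 ≤ 4 * M * 2 ^ l := by
      have : 1 ≤ M * 2 ^ l := Nat.one_le_iff_ne_zero.2 (by positivity)
      have h5 : 3 * M * (2 ^ 0 * (2 ^ l - 1)) ≤ 3 * M * 2 ^ l := by
        gcongr; simp
      nlinarith
    have h4 : M ^ l ≤ C * (4 * M * 2 ^ l) ^ d :=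
      h2.trans ((hC _).trans (Nat.mul_le_mul_left _ (Nat.pow_le_pow_left h3 d)))
    have h6 : 2 ^ l * 2 ^ (l * d) ≤ C * (4 * M) ^ d * 2 ^ (l * d) := by
      calc 2 ^ l * 2 ^ (l * d) = M ^ l := by rw [hM, ← pow_mul, ← pow_add]; ring_nf
        _ ≤ _ := h4
        _ = _ := by rw [mul_pow, ← pow_mul, mul_assoc]
    exact Nat.le_of_mul_le_mul_right h6 (by positivity)
  exact absurd (hbound (C * (4 * M) ^ d)) (not_le.2 Nat.lt_two_pow_self)

end SmallElements

section Virtual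

open scoped Classical Pointwise
open Finset

universe u

theorem exists_finiteIndex_commutative {Γ A : Type*} [Group Γ] [Group.FG Γ] [NormedRing A]
    [NormedAlgebra ℝ A] [FiniteDimensional ℝ A] {T : Γ →* A} {d : ℕ} (hG : PolyGrowth d Γ)
    (hT : ∀ g, ‖T g‖ ≤ 1) (hinj : Function.Injective T) :
    ∃ K : Subgroup Γ, K.FiniteIndex ∧ ∀ x ∈ K, ∀ y ∈ K, Commute x y := by
  set ε : ℝ := 1 / (32 * 2 ^ (d + 1)) with hε
  have hε0 : 0 < ε := by positivity
  set U : Set Γ := {g | ‖T g - 1‖ ≤ ε} with hU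
  set K := Subgroup.closure U with hK
  have hfin : Finite (Γ ⧸ K) := by
    have : ProperSpace A := FiniteDimensional.proper ℝ A
    obtain ⟨t, -, htfin, ht⟩ := Metric.finite_approx_of_totallyBounded
      (isCompact_closedBall (0 : A) 1).totallyBounded (ε / 2) (by positivity)
    have hcov : ∀ g, ∃ y : t, dist (T g) y < ε / 2 := by
      intro g
      have := ht (show T g ∈ Metric.closedBall (0 : A) 1 by simpa using hT g)
      simpa using this
    choose c hc using hcov
    have : Finite t := htfin
    refine Finite.of_injective (fun q : Γ ⧸ K => c q.out) fun q r hqr => ?_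
    rw [← q.out_eq', ← r.out_eq', QuotientGroup.eq]
    refine Subgroup.subset_closure ?_
    have h1 : T (q.out⁻¹ * r.out) - 1 = T q.out⁻¹ * (T r.out - T q.out) := by
      rw [mul_sub, ← map_mul, ← map_mul, inv_mul_cancel, map_one]
    rw [hU, Set.mem_ofPred_eq, h1]
    have h2 := (norm_mul_le (T q.out⁻¹) (T r.out - T q.out)).trans
      (mul_le_mul_of_nonneg_right (hT _) (norm_nonneg _))
    have h3 := hc q.out
    have h4 := hc r.out
    rw [← show c q.out = c r.out from hqr] at h4
    have h5 := dist_triangle_right (T r.out) (T q.out) (c q.out)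
    rw [← dist_eq_norm] at h2
    linarith
  have hKfi : K.FiniteIndex := Subgroup.finiteIndex_of_finite_quotient
  have hKfg : K.FG := (Group.fg_iff_subgroup_fg K).1 inferInstance
  obtain ⟨F, hFU, hF⟩ := exists_finset_closure_eq hKfg
  have hcomm := commute_of_small hG hT hinj (F := F) fun s hs => hFU hs
  refine ⟨K, hKfi, ?_⟩
  rw [hK, ← hF]
  intro x hx y hy
  exact Subgroup.closure_induction₂ (p := fun x y _ _ => Commute x y)
    (fun x y hx hy => hcomm x hx y hy) (fun x _ => Commute.one_left x)
    (fun x _ => Commute.one_right x) (fun x y z _ _ _ h1 h2 => h1.mul_left h2)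
    (fun x y z _ _ _ h1 h2 => h1.mul_right h2) (fun x y _ _ h => h.inv_left)
    (fun x y _ _ h => h.inv_right) hx hy

lemma exists_surjective_int_of_infinite_comm (A : Type*) [CommGroup A] [Group.FG A] [Infinite A] :
    ∃ φ : A →* Multiplicative ℤ, Function.Surjective φ := by
  obtain ⟨n, ι, _, p, hp, e, ⟨f⟩⟩ :=
    AddCommGroup.equiv_free_prod_directSum_zmod (Additive A)
  rcases n.eq_zero_or_pos with rfl | hn
  · exfalso
    have : ∀ i, NeZero (p i ^ e i) := fun i => ⟨pow_ne_zero _ (hp i).ne_zero⟩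
    have : Finite (DirectSum ι fun i => ZMod (p i ^ e i)) :=
      Finite.of_equiv _ (DirectSum.addEquivProd fun i => ZMod (p i ^ e i)).symm.toEquiv
    have : Finite (Additive A) := Finite.of_equiv _ f.symm.toEquiv
    exact not_finite (Additive A)
  · let ψ : Additive A →+ ℤ :=
      ((Finsupp.applyAddHom (⟨0, hn⟩ : Fin n)).comp (AddMonoidHom.fst _ _)).comp f.toAddMonoidHom
    refine ⟨AddMonoidHom.toMultiplicativeRight ψ, fun z => ?_⟩
    obtain ⟨x, hx⟩ := f.surjective (Finsupp.single ⟨0, hn⟩ z.toAdd, 0)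
    exact ⟨x.toMul, by
      apply Multiplicative.toAdd.injective
      simpa [ψ] using congrArg (fun y => y.1 (⟨0, hn⟩ : Fin n)) hx⟩

lemma exists_surjective_int {G A : Type*} [Group G] [Group.FG G] [CommGroup A] (f : G →* A)
    (hf : (Set.range f).Infinite) : ∃ φ : G →* Multiplicative ℤ, Function.Surjective φ := by
  have : Infinite f.range := hf.to_subtype
  obtain ⟨φ, hφ⟩ := exists_surjective_int_of_infinite_comm f.range
  exact ⟨φ.comp f.rangeRestrict, hφ.comp f.rangeRestrict_surjective⟩

/-- An infinite finitely generated group of polynomial growth has a nonzero finite-dimensional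
harmonic cocycle. -/
theorem exists_finiteDimensional_harmonic_cocycle {G : Type u} [Group G] [Infinite G] {S : Finset G}
    (h1 : (1 : G) ∈ S) (hinv : ∀ s ∈ S, s⁻¹ ∈ S)
    (hgen : Subgroup.closure (S : Set G) = ⊤) {C d : ℕ} (hC : ∀ n, #(S ^ n) ≤ C * (n + 1) ^ d) :
    ∃ (W : Type u) (_ : NormedAddCommGroup W) (_ : InnerProductSpace ℝ W)
      (_ : FiniteDimensional ℝ W) (π : G →* (W ≃ₗᵢ[ℝ] W)) (b : G → W),
      (∀ g h, b (g * h) = b g + π g (b h)) ∧ ∑ s ∈ S, b s = 0 ∧ ∃ s ∈ S, b s ≠ 0 := by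
  obtain ⟨H, _, _, _, π, b, hb, hharm, hne⟩ := exists_harmonic_cocycle h1 hinv hgen hC
  obtain ⟨W, hWfin, hW, g₀, w₀, hw₀, hg₀⟩ :=
    exists_finiteDimensional_invariant hb ⟨1, h1⟩ hinv hgen hC hharm hne
  let ρ : G →* (W ≃ₗᵢ[ℝ] W) :=
    { toFun := fun g =>
        { toLinearEquiv := LinearEquiv.ofLinearMap
            ((π g).toLinearEquiv.toLinearMap.restrict (hW g))
            ((π g⁻¹).toLinearEquiv.toLinearMap.restrict (hW g⁻¹))
            (by ext x; simp) (by ext x; simp)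
          norm_map' := fun x => (π g).norm_map x }
      map_one' := by ext x; simp
      map_mul' := fun g h => by ext x; simp }
  have hρ : ∀ g (w : W), ((ρ g w : W) : H) = π g w := fun g w => rfl
  let P := W.orthogonalProjectionOnto
  have hP : ∀ (x : H) (w : W), inner ℝ (P x) w = inner ℝ x (w : H) := fun x w => by
    simp [P]
  have hPπ : ∀ g x, P (π g x) = ρ g (P x) := by
    intro g x
    refine ext_inner_right ℝ fun w => ?_
    rw [hP, inner_apply_left_eq, inner_apply_left_eq, hP, hρ]
  have hbP : ∀ g h, P (b (g * h)) = P (b g) + ρ g (P (b h)) := fun g h => by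
    rw [hb, map_add, hPπ]
  refine ⟨W, inferInstance, inferInstance, hWfin, ρ, fun g => P (b g), hbP, ?_, ?_⟩
  · rw [← map_sum, hharm, map_zero]
  · by_contra! hcon
    have hall : ∀ g, P (b g) = 0 := by
      intro g
      have hg : g ∈ Subgroup.closure (S : Set G) := hgen ▸ Subgroup.mem_top g
      induction hg using Subgroup.closure_induction with
      | mem x hx => exact hcon x hx
      | one => rw [cocycle_one hb, map_zero]
      | mul x y _ _ hx hy => rw [hbP, hx, hy, map_zero, add_zero]
      | inv x _ hx => rw [cocycle_inv hb, map_neg, hPπ, hx, map_zero, neg_zero]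
    apply hg₀
    have := hP (b g₀) ⟨w₀, hw₀⟩
    rw [hall, inner_zero_left] at this
    exact this.symm

/-- An infinite finitely generated group of polynomial growth virtually surjects onto `ℤ`. -/
theorem exists_finiteIndex_surjective_int {G : Type u} [Group G] [Infinite G] [Group.FG G] {d : ℕ}
    (hG : PolyGrowth d G) :
    ∃ K : Subgroup G, K.FiniteIndex ∧ ∃ φ : K →* Multiplicative ℤ, Function.Surjective φ := by
  obtain ⟨S₀, hS₀⟩ := (Group.FG.out : (⊤ : Subgroup G).FG)
  set S : Finset G := insert 1 (S₀ ∪ S₀⁻¹) with hS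
  have h1 : (1 : G) ∈ S := mem_insert_self _ _
  have hinv : ∀ s ∈ S, s⁻¹ ∈ S := by
    intro s hs
    simp only [hS, mem_insert, mem_union, Finset.mem_inv', inv_eq_one, inv_inv] at hs ⊢
    tauto
  have hgen : Subgroup.closure (S : Set G) = ⊤ := by
    rw [eq_top_iff, ← hS₀]
    exact Subgroup.closure_mono fun s hs => by simp [hS, mem_coe.1 hs]
  obtain ⟨C, hC⟩ := hG S
  obtain ⟨W, _, _, _, ρ, b, hb, hharm, hne⟩ :=
    exists_finiteDimensional_harmonic_cocycle h1 hinv hgen hC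
  let T : ρ.range →* (W →L[ℝ] W) :=
    { toFun := fun g => (g : W ≃ₗᵢ[ℝ] W).toContinuousLinearEquiv.toContinuousLinearMap
      map_one' := rfl
      map_mul' := fun _ _ => rfl }
  have hT : ∀ g, ‖T g‖ ≤ 1 := fun g =>
    ContinuousLinearMap.opNorm_le_bound _ zero_le_one fun x => by
      rw [one_mul]; exact ((g : W ≃ₗᵢ[ℝ] W).norm_map x).le
  have hTinj : Function.Injective T := by
    intro g h hgh
    ext x
    exact DFunLike.congr_fun hgh x
  obtain ⟨K, hKfi, hK⟩ := exists_finiteIndex_commutative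
    (hG.of_surjective ρ.rangeRestrict ρ.rangeRestrict_surjective) hT hTinj
  by_cases hKinf : Infinite K
  · let _ : CommGroup K := { (inferInstance : Group K) with
      mul_comm := fun x y => Subtype.ext (hK x x.2 y y.2) }
    have hfi : (K.comap ρ.rangeRestrict).FiniteIndex := ⟨by
      rw [Subgroup.index_comap_of_surjective K ρ.rangeRestrict_surjective]
      exact hKfi.index_ne_zero⟩
    refine ⟨K.comap ρ.rangeRestrict, hfi, ?_⟩
    refine exists_surjective_int (ρ.rangeRestrict.subgroupComap K) ?_
    rw [(ρ.rangeRestrict.subgroupComap_surjective_of_surjective K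
      ρ.rangeRestrict_surjective).range_eq]
    exact Set.infinite_univ
  · have hKfin : Finite K := not_infinite_iff_finite.1 hKinf
    have hΓ : Finite ρ.range := by
      have := Subgroup.finite_quotient_of_finiteIndex (H := K)
      exact Finite.of_equiv _ (Subgroup.groupEquivQuotientProdSubgroup (s := K)).symm
    have hker : ρ.ker.FiniteIndex := Subgroup.finiteIndex_ker ρ
    refine ⟨ρ.ker, hker, ?_⟩
    let f : ρ.ker →* Multiplicative W :=
      { toFun := fun g => Multiplicative.ofAdd (b g)
        map_one' := by simp [cocycle_one hb]
        map_mul' := fun g h => by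
          have : ρ g = 1 := g.2
          simp [hb, this] }
    refine exists_surjective_int f fun hfin => ?_
    obtain ⟨B, hB⟩ := (hfin.image fun w => ‖Multiplicative.toAdd w‖).bddAbove
    have hB' : ∀ g ∈ ρ.ker, ‖b g‖ ≤ B := fun g hg => hB ⟨f ⟨g, hg⟩, ⟨_, rfl⟩, rfl⟩
    obtain ⟨D, hD⟩ := (Set.finite_range fun q : G ⧸ ρ.ker => ‖b q.out‖).bddAbove
    have hbd : ∀ g, ‖b g‖ ≤ D + B := by
      intro g
      set q : G := (QuotientGroup.mk g : G ⧸ ρ.ker).out with hq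
      have hmem : q⁻¹ * g ∈ ρ.ker := QuotientGroup.eq.1 (QuotientGroup.out_eq' _)
      have : b g = b q + ρ q (b (q⁻¹ * g)) := by rw [← hb, mul_inv_cancel_left]
      rw [this]
      refine (norm_add_le _ _).trans (add_le_add (hD ⟨_, rfl⟩) ?_)
      rw [LinearIsometryEquiv.norm_map]
      exact hB' _ hmem
    obtain ⟨s, hs, hbs⟩ := hne
    have hc : 0 < (∑ s ∈ S, ‖b s‖ ^ 2) / #S := by
      have : (0 : ℝ) < #S := by exact_mod_cast card_pos.2 ⟨1, h1⟩
      refine div_pos (lt_of_lt_of_le (pow_pos (norm_pos_iff.2 hbs) 2) ?_) this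
      exact single_le_sum (f := fun s => ‖b s‖ ^ 2) (fun _ _ => by positivity) hs
    obtain ⟨n, hn⟩ := exists_nat_gt ((D + B) ^ 2 / ((∑ s ∈ S, ‖b s‖ ^ 2) / #S))
    rw [div_lt_iff₀ hc, ← walkMean_norm_sq hb ⟨1, h1⟩ hharm n] at hn
    have := walkMean_mono (S := S) n (F := fun g => ‖b g‖ ^ 2) (F' := fun _ => (D + B) ^ 2)
      fun g => pow_le_pow_left₀ (norm_nonneg _) (hbd g) 2
    rw [walkMean_const ⟨1, h1⟩] at this
    linarith

end Virtual

section KernelOfIntegerQuotient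

open scoped Classical Pointwise
open Finset

variable {G : Type*} [Group G] {d : ℕ}

lemma exists_polynomial_lt_two_pow (C d : ℕ) : ∃ n : ℕ, C * (n + 1) ^ d < 2 ^ n := by
  have h := tendsto_pow_const_div_const_pow_of_one_lt d (r := (2 : ℝ)) (by norm_num)
  have h' := (Filter.tendsto_add_atTop_iff_nat 1).2 h
  obtain ⟨n, hn⟩ := (h'.eventually_lt_const
    (show (0 : ℝ) < 1 / (2 * (C + 1)) by positivity)).exists
  refine ⟨n, ?_⟩
  rw [div_lt_div_iff₀ (by positivity) (by positivity), pow_succ (2 : ℝ) n] at hn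
  have hpos : (0 : ℝ) ≤ ((n + 1 : ℕ) : ℝ) ^ d := by positivity
  have : (C : ℝ) * ((n + 1 : ℕ) : ℝ) ^ d < 2 ^ n := by nlinarith
  exact_mod_cast this

/-- The conjugates of `e` by the nonnegative powers of `t` generate the same subgroup as
finitely many of them. -/
lemma PolyGrowth.exists_conj_pow_mem_closure (h : PolyGrowth d G) (t e : G) :
    ∃ m : ℕ, ∀ i : ℕ, t ^ i * e * (t ^ i)⁻¹ ∈
      Subgroup.closure ((fun j : ℕ => t ^ j * e * (t ^ j)⁻¹) '' Set.Iio m) := by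
  set x : ℕ → G := fun j => t ^ j * e * (t ^ j)⁻¹ with hx
  set L : ℕ → Subgroup G := fun m => Subgroup.closure (x '' Set.Iio m) with hL
  have hLmono : Monotone L := fun a b hab =>
    Subgroup.closure_mono (Set.image_mono (Set.Iio_subset_Iio hab))
  have hconj : ∀ j, t * x j * t⁻¹ = x (j + 1) := fun j => by
    simp only [hx, pow_succ', mul_inv_rev]; group
  have hxL : ∀ {j m}, j < m → x j ∈ L m := fun {j m} hjm =>
    Subgroup.subset_closure ⟨j, hjm, rfl⟩
  by_cases hm : ∃ m, x m ∈ L m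
  · obtain ⟨m, hm⟩ := hm
    have hstable : L m ≤ (L m).comap (MulAut.conj t).toMonoidHom := by
      rw [hL, Subgroup.closure_le]
      rintro _ ⟨j, hj, rfl⟩
      have : (MulAut.conj t) (x j) ∈ L m := by
        rw [MulAut.conj_apply, hconj]
        rcases Nat.lt_or_ge (j + 1) m with h1 | h1
        · exact hxL h1
        · have : j + 1 = m := le_antisymm hj h1
          rwa [this]
      exact this
    refine ⟨m, fun i => ?_⟩
    change x i ∈ L m
    rcases Nat.lt_or_ge i m with h1 | h1
    · exact hxL h1
    · induction i, h1 using Nat.le_induction with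
      | base => exact hm
      | succ j _ ih =>
        rw [← hconj]
        exact hstable ih
  · exfalso
    push Not at hm
    set S : Finset G := {t, e * t} with hS
    have hmem : ∀ n, ∀ p ∈ S ^ n, p * (t ^ n)⁻¹ ∈ L n := by
      intro n
      induction n with
      | zero => simp
      | succ n ih =>
        intro p hp
        rw [pow_succ, mem_mul] at hp
        obtain ⟨q, hq, s, hs, rfl⟩ := hp
        have hq' := hLmono n.le_succ (ih q hq)
        simp only [hS, mem_insert, mem_singleton] at hs
        rcases hs with rfl | rfl
        · convert hq' using 1
          rw [pow_succ, mul_inv_rev]; group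
        · convert mul_mem hq' (hxL n.lt_succ_self) using 1
          simp only [hx, pow_succ, mul_inv_rev]; group
    have hcard : ∀ n, 2 ^ n ≤ #(S ^ n) := by
      intro n
      induction n with
      | zero => simp
      | succ n ih =>
        have hsub : (S ^ n).image (· * t) ∪ (S ^ n).image (· * (e * t)) ⊆ S ^ (n + 1) := by
          rw [pow_succ]
          apply union_subset
          · rintro _ hp
            obtain ⟨q, hq, rfl⟩ := mem_image.1 hp
            exact mul_mem_mul hq (by simp [hS])
          · rintro _ hp
            obtain ⟨q, hq, rfl⟩ := mem_image.1 hp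
            exact mul_mem_mul hq (by simp [hS])
        have hdisj : Disjoint ((S ^ n).image (· * t)) ((S ^ n).image (· * (e * t))) := by
          rw [disjoint_left]
          intro y hy hy'
          obtain ⟨p, hp, rfl⟩ := mem_image.1 hy
          obtain ⟨q, hq, hqp⟩ := mem_image.1 hy'
          have hpe : p = q * e := by
            simpa [← mul_assoc] using hqp.symm
          apply hm n
          convert mul_mem (inv_mem (hmem n q hq)) (hmem n p hp) using 1
          simp only [hx, hpe]; group
        calc 2 ^ (n + 1) = 2 ^ n + 2 ^ n := by ring
          _ ≤ #(S ^ n) + #(S ^ n) := add_le_add ih ih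
          _ = #((S ^ n).image (· * t) ∪ (S ^ n).image (· * (e * t))) := by
            rw [card_union_of_disjoint hdisj, card_image_of_injective _ (mul_left_injective _),
              card_image_of_injective _ (mul_left_injective _)]
          _ ≤ _ := card_le_card hsub
    obtain ⟨C, hC⟩ := h S
    obtain ⟨n, hn⟩ := exists_polynomial_lt_two_pow C d
    exact absurd ((hcard n).trans (hC n)) (not_le.2 hn)

/-- The kernel of a homomorphism from a finitely generated group of polynomial growth onto `ℤ`
is finitely generated. -/
lemma PolyGrowth.ker_fg [Group.FG G] (h : PolyGrowth d G) (φ : G →* Multiplicative ℤ)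
    (hφ : Function.Surjective φ) : φ.ker.FG := by
  obtain ⟨t, ht⟩ := hφ (Multiplicative.ofAdd 1)
  obtain ⟨S, hS⟩ := (Group.fg_def (G := G)).1 inferInstance
  set r : G → G := fun g => g * (t ^ (φ g).toAdd)⁻¹ with hr
  have hφt : ∀ i : ℤ, φ (t ^ i) = Multiplicative.ofAdd i := fun i => by
    rw [map_zpow, ht, ← ofAdd_zsmul, smul_eq_mul, mul_one]
  have hrker : ∀ g, r g ∈ φ.ker := fun g => by
    rw [MonoidHom.mem_ker, hr, map_mul, map_inv, hφt, ofAdd_toAdd, mul_inv_cancel]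
  choose m hm using fun g : G => h.exists_conj_pow_mem_closure t (r g)
  choose m' hm' using fun g : G => h.exists_conj_pow_mem_closure t⁻¹ (r g)
  set F : Finset G := S.biUnion fun s =>
    (range (m s)).image (fun j : ℕ => t ^ j * r s * (t ^ j)⁻¹) ∪
    (range (m' s)).image (fun j : ℕ => t⁻¹ ^ j * r s * (t⁻¹ ^ j)⁻¹) with hF
  set L := Subgroup.closure (F : Set G) with hLdef
  have hconj : ∀ s ∈ S, ∀ i : ℤ, t ^ i * r s * (t ^ i)⁻¹ ∈ L := by
    intro s hs i
    obtain ⟨n, rfl | rfl⟩ := i.eq_nat_or_neg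
    · rw [zpow_natCast]
      refine Subgroup.closure_mono ?_ (hm s n)
      rintro _ ⟨j, hj, rfl⟩
      simp only [hF, coe_biUnion, Set.mem_iUnion, mem_coe, mem_union, mem_image, mem_range]
      exact ⟨s, hs, Or.inl ⟨j, hj, rfl⟩⟩
    · rw [zpow_neg, zpow_natCast, ← inv_pow]
      refine Subgroup.closure_mono ?_ (hm' s n)
      rintro _ ⟨j, hj, rfl⟩
      simp only [hF, coe_biUnion, Set.mem_iUnion, mem_coe, mem_union, mem_image, mem_range]
      exact ⟨s, hs, Or.inr ⟨j, hj, rfl⟩⟩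
  set T : Set G := {x | ∃ s ∈ S, ∃ i : ℤ, x = t ^ i * r s * (t ^ i)⁻¹} with hT
  have hTL : Subgroup.closure T = L := by
    apply le_antisymm
    · rw [Subgroup.closure_le]
      rintro _ ⟨s, hs, i, rfl⟩
      exact hconj s hs i
    · apply Subgroup.closure_mono
      intro x hx
      simp only [hF, coe_biUnion, Set.mem_iUnion, mem_coe, mem_union, mem_image, mem_range] at hx
      obtain ⟨s, hs, ⟨j, -, rfl⟩ | ⟨j, -, rfl⟩⟩ := hx
      · exact ⟨s, hs, j, by simp⟩
      · exact ⟨s, hs, -j, by simp⟩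
  have hnorm : ∀ i : ℤ, ∀ x ∈ L, t ^ i * x * (t ^ i)⁻¹ ∈ L := by
    intro i
    change L ≤ L.comap (MulAut.conj (t ^ i)).toMonoidHom
    rw [← hTL, Subgroup.closure_le]
    rintro _ ⟨s, hs, j, rfl⟩
    refine Subgroup.subset_closure ⟨s, hs, i + j, ?_⟩
    change t ^ i * _ * (t ^ i)⁻¹ = _
    rw [zpow_add]; group
  have hmain : ∀ g : G, r g ∈ L := by
    intro g
    have hg : g ∈ Subgroup.closure (S : Set G) := hS ▸ Subgroup.mem_top g
    induction hg using Subgroup.closure_induction with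
    | mem s hs => simpa using hconj s hs 0
    | one => simp [hr]
    | mul x y _ _ hx hy =>
      have := mul_mem hx (hnorm (φ x).toAdd _ hy)
      convert this using 1
      simp only [hr, map_mul, toAdd_mul, zpow_add]; group
    | inv x _ hx =>
      have := hnorm (-(φ x).toAdd) _ (inv_mem hx)
      convert this using 1
      simp only [hr, map_inv, toAdd_inv]; group
  refine ⟨F, le_antisymm ?_ ?_⟩
  · change L ≤ _
    rw [← hTL, Subgroup.closure_le]
    rintro _ ⟨s, hs, i, rfl⟩
    exact φ.normal_ker.conj_mem _ (hrker s) _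
  · intro g hg
    have := hmain g
    rw [MonoidHom.mem_ker] at hg
    simpa [hr, hg] using this

/-- Passing to the kernel of a homomorphism onto `ℤ` lowers the growth degree. -/
lemma PolyGrowth.ker (h : PolyGrowth (d + 1) G) (φ : G →* Multiplicative ℤ)
    (hφ : Function.Surjective φ) : PolyGrowth d φ.ker := by
  obtain ⟨t, ht⟩ := hφ (Multiplicative.ofAdd 1)
  intro S
  set S' : Finset G := S.image φ.ker.subtype ∪ {1, t} with hS'
  obtain ⟨C, hC⟩ := h S'
  refine ⟨C * 2 ^ (d + 1), fun n => ?_⟩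
  have hpow : S' ^ n * S' ^ n = S' ^ (2 * n) := by rw [← pow_add, two_mul]
  have h1 : (1 : G) ∈ S' := by simp [hS']
  have hinj : Set.InjOn (fun p : φ.ker × ℕ => (p.1 : G) * t ^ p.2)
      (((S ^ n) ×ˢ range (n + 1) : Finset (φ.ker × ℕ)) : Set (φ.ker × ℕ)) := by
    rintro ⟨x, i⟩ - ⟨y, j⟩ - hxy
    simp only at hxy
    have hφxy := congrArg φ hxy
    rw [map_mul, map_mul, φ.mem_ker.1 x.2, φ.mem_ker.1 y.2, one_mul, one_mul, map_pow, map_pow,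
      ht, ← ofAdd_nsmul, ← ofAdd_nsmul] at hφxy
    have hij : i = j := by simpa using hφxy
    subst hij
    rw [mul_left_inj] at hxy
    exact Prod.ext (Subtype.ext hxy) rfl
  have hle : #(S ^ n) * (n + 1) ≤ #(S' ^ (2 * n)) := by
    rw [← card_range (n + 1), ← card_product, ← card_image_of_injOn hinj]
    apply card_le_card
    intro g hg
    obtain ⟨⟨x, i⟩, hxi, rfl⟩ := mem_image.1 hg
    rw [mem_product, mem_range] at hxi
    rw [← hpow]
    apply mul_mem_mul
    · have hx : (x : G) ∈ (S ^ n).image φ.ker.subtype := mem_image_of_mem _ hxi.1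
      rw [image_pow] at hx
      exact pow_subset_pow_left subset_union_left hx
    · exact pow_subset_pow_right h1 (Nat.lt_succ_iff.1 hxi.2)
        (pow_mem_pow (by simp [hS']))
  have hfin : #(S ^ n) * (n + 1) ≤ (C * 2 ^ (d + 1) * (n + 1) ^ d) * (n + 1) := by
    refine hle.trans ((hC _).trans ?_)
    calc C * (2 * n + 1) ^ (d + 1) ≤ C * (2 * (n + 1)) ^ (d + 1) := by gcongr; omega
      _ = _ := by rw [mul_pow]; ring
  convert Nat.le_of_mul_le_mul_right hfin n.succ_pos <;> rfl

lemma PolyGrowth.finite_of_zero [Group.FG G] (h : PolyGrowth 0 G) : Finite G := by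
  by_contra hinf
  rw [not_finite_iff_infinite] at hinf
  obtain ⟨S, hS⟩ := (Group.fg_def (G := G)).1 inferInstance
  obtain ⟨C, hC⟩ := h (insert 1 S)
  have hcl : Subgroup.closure ((insert 1 S : Finset G) : Set G) = ⊤ := by
    rw [eq_top_iff, ← hS]
    exact Subgroup.closure_mono (by simp)
  have := Finset.add_one_le_card_pow (X := insert 1 S) (by simp)
    (by rw [hcl]; exact Set.infinite_univ) C
  have h2 := hC C
  simp only [pow_zero, mul_one] at h2
  omega

end KernelOfIntegerQuotient

section VirtuallyCyclic

universe u

/-- `G` contains two commuting elements generating a free abelian subgroup of rank two. -/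
def HasFreePair (G : Type*) [Group G] : Prop :=
  ∃ a b : G, Commute a b ∧ ∀ i j : ℤ, a ^ i * b ^ j = 1 → i = 0 ∧ j = 0

lemma HasFreePair.of_injective {K G : Type*} [Group K] [Group G] (h : HasFreePair K)
    (f : K →* G) (hf : Function.Injective f) : HasFreePair G := by
  obtain ⟨a, b, hab, hfree⟩ := h
  refine ⟨f a, f b, hab.map f, fun i j hij => hfree i j (hf ?_)⟩
  rw [map_mul, map_zpow, map_zpow, hij, map_one]

lemma HasFreePair.exists_subgroup {G : Type*} [Group G] (h : HasFreePair G) :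
    ∃ H : Subgroup G, Nonempty (H ≃* Multiplicative (ℤ × ℤ)) := by
  obtain ⟨a, b, hab, hfree⟩ := h
  let f : Multiplicative (ℤ × ℤ) →* G :=
    { toFun := fun p => a ^ p.toAdd.1 * b ^ p.toAdd.2
      map_one' := by simp
      map_mul' := fun p q => by
        simp only [toAdd_mul, Prod.fst_add, Prod.snd_add, zpow_add]
        have := (hab.zpow_zpow q.toAdd.1 p.toAdd.2).eq
        simp only [mul_assoc]
        rw [← mul_assoc (b ^ p.toAdd.2), ← this, mul_assoc] }
  have hf : Function.Injective f := by
    rw [injective_iff_map_eq_one]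
    intro p hp
    obtain ⟨h1, h2⟩ := hfree _ _ hp
    exact Multiplicative.toAdd.injective (Prod.ext h1 h2)
  exact ⟨f.range, ⟨(MonoidHom.ofInjective hf).symm⟩⟩

lemma index_zpowers_zpow {K : Type*} [Group K] {c : K} (hc : ¬ IsOfFinOrder c) (m : ℤ) :
    (Subgroup.zpowers (c ^ m)).index = m.natAbs * (Subgroup.zpowers c).index := by
  have hinj : Function.Injective (zpowersHom K c) := by
    intro x y hxy
    exact Multiplicative.toAdd.injective (injective_zpow_iff_not_isOfFinOrder.2 hc hxy)
  have hmap : Subgroup.zpowers (c ^ m) =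
      (AddSubgroup.toSubgroup (AddSubgroup.zmultiples m)).map (zpowersHom K c) := by
    ext x
    simp only [Subgroup.mem_zpowers_iff, Subgroup.mem_map]
    constructor
    · rintro ⟨k, rfl⟩
      refine ⟨Multiplicative.ofAdd (k * m), ⟨k, by simp [mul_comm]⟩, ?_⟩
      rw [zpowersHom_apply, toAdd_ofAdd, mul_comm, zpow_mul]
    · rintro ⟨_, ⟨k, rfl⟩, rfl⟩
      refine ⟨k, ?_⟩
      rw [← zpow_mul, mul_comm]
      rfl
  have hrange : (zpowersHom K c).range = Subgroup.zpowers c := by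
    ext x
    simp only [Subgroup.mem_zpowers_iff, MonoidHom.mem_range]
    rfl
  rw [hmap, Subgroup.index_map_of_injective _ hinj, hrange, AddSubgroup.index_toSubgroup,
    Int.index_zmultiples]

/-- An automorphism of a virtually infinite cyclic group has square fixing a nontrivial power
of the cyclic generator. -/
lemma exists_pow_fixed {K : Type*} [Group K] {c : K} (hc : ¬ IsOfFinOrder c)
    (hind : (Subgroup.zpowers c).index ≠ 0) (α : K ≃* K) :
    ∃ a : ℕ, 0 < a ∧ α (α (c ^ a)) = c ^ a := by
  obtain ⟨a, ha, -, hmem⟩ := Subgroup.exists_pow_mem_of_index_ne_zero hind (α c)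
  obtain ⟨b, hb⟩ := hmem
  simp only at hb
  have hαc : ¬ IsOfFinOrder (α c) := by
    rwa [show α c = (α : K →* K) c from rfl, Function.Injective.isOfFinOrder_iff α.injective]
  have h1 : (Subgroup.zpowers (α c)).index = (Subgroup.zpowers c).index := by
    rw [← Subgroup.index_map_equiv (Subgroup.zpowers c) α, MonoidHom.map_zpowers]
    rfl
  have h2 := index_zpowers_zpow hαc a
  rw [zpow_natCast, ← hb, index_zpowers_zpow hc, h1, Int.natAbs_natCast] at h2
  have hba : b.natAbs = a := Nat.eq_of_mul_eq_mul_right (Nat.pos_of_ne_zero hind) h2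
  refine ⟨a, ha, ?_⟩
  rw [map_pow, ← hb, map_zpow]
  rcases Int.natAbs_eq b with h | h <;> rw [hba] at h <;> subst h
  · rw [zpow_natCast, ← hb, zpow_natCast]
  · rw [zpow_neg, zpow_natCast, ← hb, zpow_neg, zpow_natCast, inv_inv]

lemma finiteIndex_zpowers_of_finite_ker {G : Type*} [Group G] (φ : G →* Multiplicative ℤ)
    [Finite φ.ker] {t : G} (ht : φ t = Multiplicative.ofAdd 1) :
    (Subgroup.zpowers t).FiniteIndex := by
  have : Finite (G ⧸ Subgroup.zpowers t) := by
    refine Finite.of_surjective (fun x : φ.ker => ((x : G) : G ⧸ Subgroup.zpowers t)) ?_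
    intro q
    obtain ⟨g, rfl⟩ := QuotientGroup.mk_surjective q
    refine ⟨⟨g * (t ^ (φ g).toAdd)⁻¹, ?_⟩, ?_⟩
    · rw [MonoidHom.mem_ker, map_mul, map_inv, map_zpow, ht, ← ofAdd_zsmul, smul_eq_mul, mul_one,
        ofAdd_toAdd, mul_inv_cancel]
    · rw [QuotientGroup.eq]
      exact ⟨(φ g).toAdd, by simp⟩
  exact Subgroup.finiteIndex_of_finite_quotient

/-- A finitely generated group of polynomial growth is virtually cyclic or contains `ℤ²`. -/
theorem PolyGrowth.virtually_cyclic_or_hasFreePair (d : ℕ) {G : Type u} [Group G] [Group.FG G]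
    (hG : PolyGrowth d G) :
    (∃ c : G, (Subgroup.zpowers c).FiniteIndex) ∨ HasFreePair G := by
  induction d generalizing G with
  | zero =>
    have := hG.finite_of_zero
    exact Or.inl ⟨1, inferInstance⟩
  | succ d ih =>
    rcases finite_or_infinite G with hfin | hinf
    · exact Or.inl ⟨1, inferInstance⟩
    obtain ⟨H, hH, φ, hφ⟩ := exists_finiteIndex_surjective_int hG
    have hHg : PolyGrowth (d + 1) H := hG.subgroup H
    obtain ⟨t, ht⟩ := hφ (Multiplicative.ofAdd 1)
    have hfg : Group.FG φ.ker := (Group.fg_iff_subgroup_fg _).2 (hHg.ker_fg φ hφ)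
    rcases ih (hHg.ker φ hφ) with ⟨c, hc⟩ | hfree
    · by_cases hcfin : IsOfFinOrder c
      · have hK : Finite φ.ker := by
          rw [(Subgroup.zpowers c).finite_iff_finite_and_finiteIndex]
          exact ⟨finite_zpowers.2 hcfin, hc⟩
        have := finiteIndex_zpowers_of_finite_ker φ ht
        refine Or.inl ⟨(t : G), ⟨?_⟩⟩
        have hmap := Subgroup.index_map_subtype (Subgroup.zpowers t)
        rw [MonoidHom.map_zpowers] at hmap
        change (Subgroup.zpowers (H.subtype t)).index ≠ 0
        rw [hmap]
        exact mul_ne_zero this.index_ne_zero hH.index_ne_zero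
      · right
        obtain ⟨a, ha, hfix⟩ := exists_pow_fixed hcfin hc.index_ne_zero (MulAut.conjNormal t)
        refine HasFreePair.of_injective ?_ H.subtype H.subtype_injective
        refine ⟨((c ^ a : φ.ker) : H), t ^ 2, ?_, fun i j hij => ?_⟩
        · have h1 := congrArg (Subtype.val) hfix
          rw [MulAut.conjNormal_apply, MulAut.conjNormal_apply] at h1
          have h2 : t ^ 2 * ((c ^ a : φ.ker) : H) * (t ^ 2)⁻¹ = (c ^ a : φ.ker) := by
            refine Eq.trans ?_ h1
            simp only [sq, mul_assoc, mul_inv_rev]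
          exact (mul_inv_eq_iff_eq_mul.1 h2).symm
        · have h1 := congrArg φ hij
          have hcker : φ ((c ^ a : φ.ker) : H) = 1 := (c ^ a : φ.ker).2
          rw [map_one, map_mul, map_zpow, map_zpow, map_pow, ht, hcker, one_zpow, one_mul] at h1
          have hj : j = 0 := by
            rw [← ofAdd_nsmul, ← ofAdd_zsmul, ofAdd_eq_one] at h1
            simpa using h1
          subst hj
          rw [zpow_zero, mul_one] at hij
          have h2 : c ^ ((a : ℤ) * i) = 1 := by
            apply Subtype.ext
            rw [zpow_mul, zpow_natCast]
            exact_mod_cast hij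
          have h3 : (a : ℤ) * i = 0 := by
            apply injective_zpow_iff_not_isOfFinOrder.2 hcfin
            simpa using h2
          exact ⟨(mul_eq_zero.1 h3).resolve_left (by exact_mod_cast ha.ne'), rfl⟩
    · exact Or.inr ((hfree.of_injective _ φ.ker.subtype_injective).of_injective _
        H.subtype_injective)

end VirtuallyCyclic

section LinearGrowth

open scoped Classical Pointwise
open Finset

variable {G : Type*} [Group G]

lemma polyGrowth_one_of_finiteIndex_zpowers {c : G} (hc : (Subgroup.zpowers c).FiniteIndex) :
    PolyGrowth 1 G := by
  have : Fintype (G ⧸ Subgroup.zpowers c) := Subgroup.fintypeQuotientOfFiniteIndex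
  set r : G ⧸ Subgroup.zpowers c → G := fun q => (Quotient.out q)⁻¹ with hr
  have hdecomp : ∀ g : G, ∃ (k : ℤ) (q : G ⧸ Subgroup.zpowers c), g = c ^ k * r q := by
    intro g
    obtain ⟨h, hh⟩ := QuotientGroup.mk_out_eq_mul (Subgroup.zpowers c) g⁻¹
    obtain ⟨k, hk⟩ := h.2
    refine ⟨k, (g⁻¹ : G), ?_⟩
    simp only at hk
    rw [hr]
    simp only [hh, hk]
    group
  choose κ ρ hκρ using hdecomp
  intro S
  set M : ℕ := ∑ q, ∑ s ∈ S, (κ (r q * s)).natAbs with hM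
  set N : ℕ := (κ 1).natAbs with hN
  have hMle : ∀ q, ∀ s ∈ S, (κ (r q * s)).natAbs ≤ M := by
    intro q s hs
    calc (κ (r q * s)).natAbs ≤ ∑ s ∈ S, (κ (r q * s)).natAbs :=
          single_le_sum (f := fun s => (κ (r q * s)).natAbs) (fun _ _ => Nat.zero_le _) hs
      _ ≤ M := single_le_sum (f := fun q => ∑ s ∈ S, (κ (r q * s)).natAbs)
          (fun _ _ => Nat.zero_le _) (mem_univ q)
  have hpow : ∀ n : ℕ, ∀ p ∈ S ^ n, ∃ (k : ℤ) (q : G ⧸ Subgroup.zpowers c),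
      k.natAbs ≤ N + M * n ∧ p = c ^ k * r q := by
    intro n
    induction n with
    | zero =>
      intro p hp
      rw [pow_zero, mem_one] at hp
      subst hp
      exact ⟨κ 1, ρ 1, by simp [hN], hκρ 1⟩
    | succ n ih =>
      intro p hp
      rw [pow_succ, mem_mul] at hp
      obtain ⟨p, hp, s, hs, rfl⟩ := hp
      obtain ⟨k, q, hk, rfl⟩ := ih p hp
      refine ⟨k + κ (r q * s), ρ (r q * s), ?_, ?_⟩
      · have := hMle q s hs
        have := Int.natAbs_add_le k (κ (r q * s))
        rw [mul_add]
        omega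
      · rw [zpow_add, mul_assoc, mul_assoc, ← hκρ]
  refine ⟨(2 * N + 2 * M + 1) * Fintype.card (G ⧸ Subgroup.zpowers c), fun n => ?_⟩
  have hsub : S ^ n ⊆ ((Icc (-((N + M * n : ℕ) : ℤ)) ((N + M * n : ℕ) : ℤ)) ×ˢ univ).image
      (fun x : ℤ × (G ⧸ Subgroup.zpowers c) => c ^ x.1 * r x.2) := by
    intro p hp
    obtain ⟨k, q, hk, rfl⟩ := hpow n p hp
    refine mem_image.2 ⟨(k, q), ?_, rfl⟩
    simp only [mem_product, mem_Icc, mem_univ, and_true]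
    omega
  calc #(S ^ n) ≤ (2 * (N + M * n) + 1) * Fintype.card (G ⧸ Subgroup.zpowers c) := by
        refine (card_le_card hsub).trans (card_image_le.trans ?_)
        rw [card_product, Int.card_Icc, card_univ]
        gcongr
        omega
    _ ≤ ((2 * N + 2 * M + 1) * (n + 1)) * Fintype.card (G ⧸ Subgroup.zpowers c) := by
        gcongr
        nlinarith
    _ = _ := by ring

lemma PolyGrowth.card_image_pow_le {d : ℕ} {K : Type*} [Group K] (h : PolyGrowth d K)
    (f : K →* G) (T : Finset K) : ∃ C : ℕ, ∀ n : ℕ, #(T.image f ^ n) ≤ C * (n + 1) ^ d := by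
  obtain ⟨C, hC⟩ := h T
  refine ⟨C, fun n => ?_⟩
  rw [← image_pow]
  exact card_image_le.trans (hC n)

lemma PolyGrowth.one_of_not_hasFreePair {d : ℕ} (hG : PolyGrowth d G) (hfree : ¬ HasFreePair G) :
    PolyGrowth 1 G := by
  intro S
  set K := Subgroup.closure (S : Set G) with hK
  have : Group.FG K := (Group.fg_iff_subgroup_fg _).2 ⟨S, rfl⟩
  have hone : PolyGrowth 1 K := by
    rcases (hG.subgroup K).virtually_cyclic_or_hasFreePair d with ⟨c, hc⟩ | h
    · exact polyGrowth_one_of_finiteIndex_zpowers hc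
    · exact absurd (h.of_injective _ K.subtype_injective) hfree
  set T : Finset K := S.attach.image
    (fun s => (⟨s.1, Subgroup.subset_closure s.2⟩ : K)) with hT
  have hTS : T.image K.subtype = S := by
    ext x
    simp only [hT, mem_image, mem_attach, true_and]
    constructor
    · rintro ⟨_, ⟨s, rfl⟩, rfl⟩
      exact s.2
    · exact fun hx => ⟨_, ⟨⟨x, hx⟩, rfl⟩, rfl⟩
  exact hTS ▸ hone.card_image_pow_le K.subtype T

end LinearGrowth

section GelfandKirillov

open scoped Classical Pointwise
open Finset Filter

variable {k : Type*} [Field k] {G : Type*} [Group G]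

lemma span_of_image_pow (S : Finset G) (n : ℕ) :
    Submodule.span k (MonoidAlgebra.of k G '' (S : Set G)) ^ n =
      Submodule.span k (MonoidAlgebra.of k G '' ((S ^ n : Finset G) : Set G)) := by
  rw [Submodule.span_pow, coe_pow, Set.image_pow]

lemma finrank_span_of_image (T : Finset G) :
    Module.finrank k (Submodule.span k (MonoidAlgebra.of k G '' (T : Set G))) = #T := by
  have hli : LinearIndependent k (fun t : T => MonoidAlgebra.of k G t) := by
    have := (MonoidAlgebra.basis G k).linearIndependent.comp (Subtype.val : T → G)
      Subtype.val_injective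
    convert this using 1
    ext1 t
    simp
  have := finrank_span_eq_card hli
  rw [Fintype.card_coe] at this
  rw [← this, Set.image_eq_range]
  rfl

lemma exists_finset_le_span (V : Submodule k (MonoidAlgebra k G)) [FiniteDimensional k V] :
    ∃ S : Finset G, V ≤ Submodule.span k (MonoidAlgebra.of k G '' (S : Set G)) := by
  obtain ⟨B, hB⟩ := (Module.Finite.iff_fg.1 ‹_› : V.FG)
  refine ⟨B.biUnion fun b => b.coeff.support, ?_⟩
  rw [← hB, Submodule.span_le]
  intro b hb
  refine Submodule.span_mono (Set.image_mono ?_) (MonoidAlgebra.mem_span_support_coeff b)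
  exact_mod_cast subset_biUnion_of_mem (fun b => b.coeff.support) hb

lemma exists_polyGrowth_of_gkDim_lt_top (h : gkDim k (MonoidAlgebra k G) < ⊤) :
    ∃ d : ℕ, PolyGrowth d G := by
  obtain ⟨d, hd⟩ := ENNReal.exists_nat_gt h.ne
  refine ⟨d, fun S => ?_⟩
  have hfd : FiniteDimensional k (Submodule.span k (MonoidAlgebra.of k G '' (S : Set G))) :=
    FiniteDimensional.span_of_finite k (S.finite_toSet.image _)
  have hlim := lt_of_le_of_lt (le_iSup (fun V : {V : Submodule k (MonoidAlgebra k G) //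
    FiniteDimensional k V} => limsup (fun n : ℕ => ENNReal.ofReal
      (Real.logb n (Module.finrank k ((V : Submodule k (MonoidAlgebra k G)) ^ n :
        Submodule k (MonoidAlgebra k G))))) atTop) ⟨_, hfd⟩) hd
  have hev := eventually_lt_of_limsup_lt hlim
  obtain ⟨N, hN⟩ := eventually_atTop.1 hev
  refine ⟨1 + ∑ n ∈ range (N + 2), #(S ^ n), fun n => ?_⟩
  rcases lt_or_ge n (N + 2) with hn | hn
  · calc #(S ^ n) ≤ ∑ n ∈ range (N + 2), #(S ^ n) :=
          single_le_sum (f := fun n => #(S ^ n)) (fun _ _ => Nat.zero_le _) (mem_range.2 hn)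
      _ ≤ (1 + ∑ n ∈ range (N + 2), #(S ^ n)) * 1 := by omega
      _ ≤ _ := by gcongr; exact Nat.one_le_pow _ _ n.succ_pos
  · have hlog : ENNReal.ofReal (Real.logb n #(S ^ n)) < d := by
      rw [← finrank_span_of_image (k := k), ← span_of_image_pow]
      exact hN n (by omega)
    have hn1 : (1 : ℝ) < n := by exact_mod_cast (by omega : 1 < n)
    have hle : #(S ^ n) ≤ n ^ d := by
      rcases Nat.eq_zero_or_pos #(S ^ n) with h0 | hpos
      · omega
      · rw [← ENNReal.ofReal_natCast d, ENNReal.ofReal_lt_ofReal_iff_of_nonneg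
          (Real.logb_nonneg hn1 (by exact_mod_cast hpos)),
          Real.logb_lt_iff_lt_rpow hn1 (by exact_mod_cast hpos), Real.rpow_natCast] at hlog
        exact_mod_cast hlog.le
    calc #(S ^ n) ≤ 1 * (n + 1) ^ d := by
          rw [one_mul]
          exact hle.trans (Nat.pow_le_pow_left n.le_succ d)
      _ ≤ _ := by gcongr; omega

lemma gkDim_le_one_of_polyGrowth_one (h : PolyGrowth 1 G) : gkDim k (MonoidAlgebra k G) ≤ 1 := by
  refine iSup_le ?_
  rintro ⟨V, hV⟩
  obtain ⟨S, hS⟩ := exists_finset_le_span V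
  obtain ⟨C, hC⟩ := h S
  have hbound : ∀ n : ℕ, Module.finrank k (V ^ n : Submodule k (MonoidAlgebra k G)) ≤
      C * (n + 1) := by
    intro n
    have hle : V ^ n ≤ Submodule.span k (MonoidAlgebra.of k G '' ((S ^ n : Finset G) : Set G)) := by
      rw [← span_of_image_pow]
      exact pow_le_pow_left' hS n
    have hfd : FiniteDimensional k
        (Submodule.span k (MonoidAlgebra.of k G '' ((S ^ n : Finset G) : Set G))) :=
      FiniteDimensional.span_of_finite k ((S ^ n).finite_toSet.image _)
    calc _ ≤ _ := Submodule.finrank_mono hle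
      _ = #(S ^ n) := finrank_span_of_image _
      _ ≤ C * (n + 1) := by simpa using hC n
  have hev : ∀ᶠ n : ℕ in atTop, ENNReal.ofReal (Real.logb n
      (Module.finrank k (V ^ n : Submodule k (MonoidAlgebra k G)))) ≤
      ENNReal.ofReal (1 + Real.log (2 * C + 1) / Real.log n) := by
    filter_upwards [eventually_ge_atTop 2] with n hn
    have hn1 : (1 : ℝ) < n := by exact_mod_cast (by omega : 1 < n)
    have hlog : 0 < Real.log n := Real.log_pos hn1
    apply ENNReal.ofReal_le_ofReal
    rcases Nat.eq_zero_or_pos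
      (Module.finrank k (V ^ n : Submodule k (MonoidAlgebra k G))) with h0 | hpos
    · rw [h0, Nat.cast_zero, Real.logb_zero]
      have : 0 ≤ Real.log (2 * C + 1) := Real.log_nonneg (by
        have : (0 : ℝ) ≤ C := by positivity
        linarith)
      positivity
    · have hle : ((Module.finrank k (V ^ n : Submodule k (MonoidAlgebra k G)) : ℕ) : ℝ) ≤
          n * (2 * C + 1) := by
        have := hbound n
        have h' : Module.finrank k (V ^ n : Submodule k (MonoidAlgebra k G)) ≤
          n * (2 * C + 1) := by nlinarith
        exact_mod_cast h'
      rw [Real.logb, div_le_iff₀ hlog, add_mul, one_mul, div_mul_cancel₀ _ hlog.ne',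
        ← Real.log_mul (by positivity) (by positivity)]
      exact Real.log_le_log (by exact_mod_cast hpos) hle
  have htend : Tendsto (fun n : ℕ => ENNReal.ofReal (1 + Real.log (2 * C + 1) / Real.log n)) atTop
      (nhds 1) := by
    have h1 : Tendsto (fun n : ℕ => 1 + Real.log (2 * C + 1) / Real.log n) atTop
        (nhds (1 + 0)) :=
      tendsto_const_nhds.add (Tendsto.const_div_atTop
        (Real.tendsto_log_atTop.comp tendsto_natCast_atTop_atTop) _)
    simpa using ENNReal.tendsto_ofReal h1
  exact (limsup_le_limsup hev).trans htend.limsup_eq.le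

end GelfandKirillov

end PolynomialGrowth

/-- **Statement 16**: a group `G` with `2 ≤ GKdim k[G] < ∞` has a subgroup isomorphic to `ℤ²`. -/
theorem subgroup_isomorphic_to_Z2_of_gkDim_ge_two
    (k : Type*) [Field k] [IsAlgClosed k] [CharZero k]
    (G : Type*) [Group G]
    (h2 : 2 ≤ gkDim k (MonoidAlgebra k G)) (hfin : gkDim k (MonoidAlgebra k G) < ⊤) :
    ∃ H : Subgroup G, Nonempty (H ≃* Multiplicative (ℤ × ℤ)) := by
  by_contra hno
  obtain ⟨d, hd⟩ := PolynomialGrowth.exists_polyGrowth_of_gkDim_lt_top hfin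
  have hone := hd.one_of_not_hasFreePair fun hfree => hno hfree.exists_subgroup
  have hle := h2.trans (PolynomialGrowth.gkDim_le_one_of_polyGrowth_one (k := k) hone)
  norm_num at hle
end
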